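/- In the DaC model on the triangular lattice, for every p < 2 sin(π/18), limsup_{n→∞} ℙ_{p,1/2}(V^b_{n,3n}) > 0. -/

import Mathlib

/-!
Common definitions for the Divide-and-Colour (DaC) model of
Bálint, Camia and Meester, "Sharp phase transition and critical
behaviour in 2D divide and colour models".

The model is built concretely: a single uniform random variable on `(0,1]`
is decomposed into countably many i.i.d. uniform random variables (via its
binary digits); one family of uniforms drives the Bernoulli(p) bond
percolation (the edge configuration), and an independent family of uniforms
attaches an independent Bernoulli(r) colour to each bond cluster (the colour
of a cluster is determined by the uniform label of its canonical
representative, the vertex of minimal encoding).  The DaC measure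
`ℙ_{p,r}` is the pushforward of Lebesgue measure on `(0,1]` under the map
producing the pair (edge configuration, colour configuration).
-/

open MeasureTheory ENNReal

namespace DaC

/-- Vertices of the lattice. -/
abbrev V : Type := ℤ × ℤ

/-- Square lattice adjacency: Euclidean distance `1`. -/
def SqAdj (u v : V) : Prop := (u.1 - v.1) ^ 2 + (u.2 - v.2) ^ 2 = 1

/-- `*`-adjacency (matching graph of the square lattice):
Euclidean distance `1` or `√2`. -/
def StarAdj (u v : V) : Prop :=
  (u.1 - v.1) ^ 2 + (u.2 - v.2) ^ 2 = 1 ∨ (u.1 - v.1) ^ 2 + (u.2 - v.2) ^ 2 = 2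

/-- Triangular lattice adjacency. -/
def TriAdj (u v : V) : Prop :=
  (u.1 - v.1, u.2 - v.2) ∈
    ({(1, 0), (-1, 0), (0, 1), (0, -1), (1, 1), (-1, -1)} : Set (ℤ × ℤ))

/-- Classical indicator of a proposition, as a boolean. -/
noncomputable def boolOf (P : Prop) : Bool := @decide P (Classical.propDecidable P)

/-- The `n`-th binary digit of a real number `x ∈ (0,1]`. -/
noncomputable def bit (n : ℕ) (x : ℝ) : Bool := boolOf (⌊x * 2 ^ (n + 1)⌋ % 2 = 1)

/-- A countable family of i.i.d. uniform random variables on `[0,1]`, extracted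
from a single uniform sample `x` by splitting its binary digits. -/
noncomputable def unif (i : ℕ) (x : ℝ) : ℝ :=
  ∑' k : ℕ, if bit (Nat.pair i k) x then ((2 : ℝ)⁻¹) ^ (k + 1) else 0

/-- A symmetric encoding of (unordered) pairs of vertices. -/
noncomputable def eIdx (u v : V) : ℕ :=
  min (Encodable.encode (u, v)) (Encodable.encode (v, u))

/-- The uniform label attached to the edge `{u,v}`. -/
noncomputable def edgeU (u v : V) (x : ℝ) : ℝ := unif (2 * eIdx u v) x

/-- The uniform label attached to the vertex `v` (independent of the edge labels). -/
noncomputable def vtxU (v : V) (x : ℝ) : ℝ := unif (2 * Encodable.encode v + 1) x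

/-- Edge configurations: a boolean (open/closed) for each (ordered) pair of
vertices; configurations arising from the model are symmetric and are
supported on pairs of adjacent vertices. -/
abbrev EdgeCfg : Type := V → V → Bool

/-- Colour configurations: a colour (black = `true`, white = `false`) for each vertex. -/
abbrev ColourCfg : Type := V → Bool

/-- Full configurations of the DaC model: an edge configuration together with
a colour configuration. -/
abbrev Config : Type := EdgeCfg × ColourCfg

/-- The Bernoulli(p) edge configuration determined by the uniform sample `x`,
on the lattice with adjacency `adj`: an edge `{u,v}` of the lattice is open
iff its uniform label is `< p`. -/
noncomputable def edgeCfg (adj : V → V → Prop) (p : ℝ) (x : ℝ) : EdgeCfg :=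
  fun u v => boolOf (adj u v) && boolOf (edgeU u v x < p)

/-- Connectivity through open edges of the edge configuration `η`. -/
def Conn (η : EdgeCfg) (u v : V) : Prop :=
  Relation.ReflTransGen (fun a b => η a b = true) u v

/-- The `p`-cluster of the vertex `v`: its connected component in the graph
retaining only open edges. -/
def pCluster (η : EdgeCfg) (v : V) : Set V := {w | Conn η v w}

/-- Canonical representative of the `p`-cluster of `v`: the vertex of the
cluster with minimal encoding. -/
noncomputable def clusterRep (η : EdgeCfg) (v : V) : V :=
  (Encodable.decode (α := V) (sInf (Encodable.encode '' pCluster η v))).getD v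

/-- The colour configuration with parameters `p, r` determined by the uniform
sample `x`: every `p`-cluster is coloured black (with probability `r`)
or white, independently of all other `p`-clusters, according to the uniform
label of its canonical representative. -/
noncomputable def colourCfg (adj : V → V → Prop) (p r : ℝ) (x : ℝ) : ColourCfg :=
  fun v => boolOf (vtxU (clusterRep (edgeCfg adj p x) v) x < r)

/-- The uniform sample: Lebesgue measure on `(0,1]`. -/
noncomputable def base : Measure ℝ := volume.restrict (Set.Ioc 0 1)

/-- `ν_p`: the product Bernoulli(p) measure on edge configurations of the
lattice with adjacency `adj`. -/
noncomputable def edgeMeasure (adj : V → V → Prop) (p : ℝ) : Measure EdgeCfg :=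
  base.map (edgeCfg adj p)

/-- `ℙ_{p,r}`: the DaC measure on pairs (edge configuration, colour
configuration) for the lattice with adjacency `adj`. -/
noncomputable def DaCMeasure (adj : V → V → Prop) (p r : ℝ) : Measure Config :=
  base.map (fun x => (edgeCfg adj p x, colourCfg adj p r x))

/-- Monochromatic connectivity: `u` and `v` are joined by a path (for the
adjacency `adj`) all of whose vertices have colour `c`. -/
def MonoConn (adj : V → V → Prop) (ξ : ColourCfg) (c : Bool) (u v : V) : Prop :=
  Relation.ReflTransGen (fun a b => adj a b ∧ ξ a = c ∧ ξ b = c) u v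

/-- The colour-`c` cluster of `v` (for the adjacency `adj`): empty if `v` does
not have colour `c`, and otherwise the maximal `adj`-connected set of
`c`-coloured vertices containing `v`. -/
def monoCluster (adj : V → V → Prop) (ξ : ColourCfg) (c : Bool) (v : V) : Set V :=
  {w | ξ v = c ∧ MonoConn adj ξ c v w}

/-- The origin. -/
def origin : V := (0, 0)

/-- The size (cardinality) of a set of vertices, with values in `ℝ≥0∞`. -/
noncomputable def sizeE (S : Set V) : ℝ≥0∞ := S.encard

/-- The probability, under the DaC measure with edge adjacency `eadj` and
parameters `p, r`, that the origin lies in an infinite colour-`c` cluster for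
the adjacency `cadj`. -/
noncomputable def percProb (eadj cadj : V → V → Prop) (c : Bool) (p r : ℝ) : ℝ≥0∞ :=
  DaCMeasure eadj p r {ω | (monoCluster cadj ω.2 c origin).Infinite}

/-- `Θ(p,r)` for the square lattice: probability that the origin lies in an
infinite black `r`-cluster. -/
noncomputable def thetaSq (p r : ℝ) : ℝ≥0∞ := percProb SqAdj SqAdj true p r

/-- `Θ*(p,s)` for the square lattice: the `ℙ_{p,1-s}`-probability that the
origin lies in an infinite white `*`-cluster. -/
noncomputable def thetaStarSq (p s : ℝ) : ℝ≥0∞ := percProb SqAdj StarAdj false p (1 - s)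

/-- `Θ(p,r)` for the triangular lattice. -/
noncomputable def thetaTri (p r : ℝ) : ℝ≥0∞ := percProb TriAdj TriAdj true p r

/-- The critical colouring density `r_c(p)` of the square lattice DaC model. -/
noncomputable def rcSq (p : ℝ) : ℝ :=
  sSup {r : ℝ | r ∈ Set.Icc (0 : ℝ) 1 ∧ thetaSq p r = 0}

/-- The critical colouring density `r_c*(p)` for white `*`-percolation. -/
noncomputable def rcStarSq (p : ℝ) : ℝ :=
  sSup {s : ℝ | s ∈ Set.Icc (0 : ℝ) 1 ∧ thetaStarSq p s = 0}

/-- The critical colouring density `r_c(p)` of the triangular lattice DaC model. -/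
noncomputable def rcTri (p : ℝ) : ℝ :=
  sSup {r : ℝ | r ∈ Set.Icc (0 : ℝ) 1 ∧ thetaTri p r = 0}

/-! ### Rectangles and crossings -/

/-- The rectangle `S_{n,m} = ([0,n] × [0,m]) ∩ ℤ²`. -/
def Rect (n m : ℕ) : Set V :=
  {v | 0 ≤ v.1 ∧ v.1 ≤ (n : ℤ) ∧ 0 ≤ v.2 ∧ v.2 ≤ (m : ℤ)}

/-- The top side of `S_{n,m}`. -/
def TopSide (n m : ℕ) : Set V := {v | v ∈ Rect n m ∧ v.2 = (m : ℤ)}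

/-- The bottom side of `S_{n,m}`. -/
def BotSide (n m : ℕ) : Set V := {v | v ∈ Rect n m ∧ v.2 = 0}

/-- The left side of `S_{n,m}`. -/
def LeftSide (n m : ℕ) : Set V := {v | v ∈ Rect n m ∧ v.1 = 0}

/-- The right side of `S_{n,m}`. -/
def RightSide (n m : ℕ) : Set V := {v | v ∈ Rect n m ∧ v.1 = (n : ℤ)}

/-- There is a path (for the adjacency `adj`), all of whose vertices lie in the
region `R` and satisfy the predicate `good`, from the set `A` to the set `B`. -/
def HasCrossing (adj : V → V → Prop) (good : V → Prop) (R A B : Set V) : Prop :=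
  ∃ (k : ℕ) (f : Fin (k + 1) → V),
    (∀ i, f i ∈ R ∧ good (f i)) ∧
    (∀ i : Fin k, adj (f i.castSucc) (f i.succ)) ∧
    f 0 ∈ A ∧ f (Fin.last k) ∈ B

/-- `V^b_{n,m}` as a set of colour configurations: there is a black vertical
crossing of `S_{n,m}` (for the adjacency `adj`). -/
def VertBC (adj : V → V → Prop) (n m : ℕ) : Set ColourCfg :=
  {ξ | HasCrossing adj (fun v => ξ v = true) (Rect n m) (TopSide n m) (BotSide n m)}

/-- `V^{w*}_{n,m}` as a set of colour configurations: there is a white vertical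
`*`-crossing of `S_{n,m}`. -/
def VertWStarC (n m : ℕ) : Set ColourCfg :=
  {ξ | HasCrossing StarAdj (fun v => ξ v = false) (Rect n m) (TopSide n m) (BotSide n m)}

/-- `H^{w*}_{n,m}` as a set of colour configurations: there is a white
horizontal `*`-crossing of `S_{n,m}`. -/
def HorizWStarC (n m : ℕ) : Set ColourCfg :=
  {ξ | HasCrossing StarAdj (fun v => ξ v = false) (Rect n m) (LeftSide n m) (RightSide n m)}

/-- The event (set of full configurations) determined by a set of colour
configurations. -/
def colourEvent (C : Set ColourCfg) : Set Config := {ω | ω.2 ∈ C}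

/-! ### Events depending on colours, increasing events, pivotal clusters -/

/-- The event `A` is defined in terms of the colours of the vertices in `W`. -/
def DependsOnColoursIn (A : Set Config) (W : Set V) : Prop :=
  ∀ ω ω' : Config, (∀ v ∈ W, ω.2 v = ω'.2 v) → (ω ∈ A ↔ ω' ∈ A)

/-- The event `A` is increasing (for the partial order comparing colour
configurations pointwise, black = `true` above white = `false`). -/
def IncreasingColourEvent (A : Set Config) : Prop :=
  ∀ ω ω' : Config, (∀ v : V, ω.2 v = true → ω'.2 v = true) → ω ∈ A → ω' ∈ A

/-- Flip the colours of the vertices of `C`. -/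
noncomputable def flipOn (C : Set V) (ξ : ColourCfg) : ColourCfg :=
  fun v => @ite _ (v ∈ C) (Classical.propDecidable _) (!ξ v) (ξ v)

/-- The set `C` is a pivotal `p`-cluster for the event `A` in the
configuration `ω`: `C` is a `p`-cluster of the edge configuration of `ω`, and
flipping the colour of (all the vertices of) `C` changes whether the
configuration belongs to `A`. -/
def IsPivotal (A : Set Config) (ω : Config) (C : Set V) : Prop :=
  (∃ v : V, C = pCluster ω.1 v) ∧ ¬ (ω ∈ A ↔ (ω.1, flipOn C ω.2) ∈ A)

/-- `n(A)`: the number of pivotal `p`-clusters for the event `A`, with values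
in `ℝ≥0∞`. -/
noncomputable def numPivotal (A : Set Config) (ω : Config) : ℝ≥0∞ :=
  {C : Set V | IsPivotal A ω C}.encard

/-! ### Barriers -/

/-- Connectivity in the square lattice avoiding the edges of `E`. -/
def AvoidConn (E : Set (V × V)) (u v : V) : Prop :=
  Relation.ReflTransGen (fun a b => SqAdj a b ∧ (a, b) ∉ E ∧ (b, a) ∉ E) u v

/-- `E` is a barrier: a set of edges of the square lattice whose removal
(keeping the end-vertices) separates `ℤ²` into two or more connected
components, exactly one of which is infinite. -/
def IsBarrier (E : Set (V × V)) : Prop :=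
  (∀ e ∈ E, SqAdj e.1 e.2) ∧
  (∃ v, {w | AvoidConn E v w}.Infinite) ∧
  (∀ v w, {x | AvoidConn E v x}.Infinite → {x | AvoidConn E w x}.Infinite → AvoidConn E v w) ∧
  (∃ v, {w | AvoidConn E v w}.Finite)

/-- The exterior of a barrier: its unique infinite complementary component. -/
def barrierExt (E : Set (V × V)) : Set V := {v | {w | AvoidConn E v w}.Infinite}

/-- The interior of a barrier: the union of the finite complementary components. -/
def barrierInt (E : Set (V × V)) : Set V := {v | {w | AvoidConn E v w}.Finite}

/-- The event `A ⊆ EdgeCfg` is increasing (opening edges preserves it). -/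
def IncreasingEdgeEvent (A : Set EdgeCfg) : Prop :=
  ∀ η η' : EdgeCfg, (∀ a b : V, η a b = true → η' a b = true) → η ∈ A → η' ∈ A

/-- The event `A ⊆ EdgeCfg` depends only on the states of the edges both of
whose endpoints lie in `W`. -/
def DependsOnEdgesIn (A : Set EdgeCfg) (W : Set V) : Prop :=
  ∀ η η' : EdgeCfg, (∀ a b : V, a ∈ W → b ∈ W → η a b = η' a b) → (η ∈ A ↔ η' ∈ A)

/-! ### Translations -/

/-- Translation of configurations by the vector `u`. -/
def shift (u : V) (ω : Config) : Config :=
  (fun a b => ω.1 (a + u) (b + u), fun a => ω.2 (a + u))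

end DaC

/-!
For `r = 1/2` the law of the colours is invariant under the automorphisms of `𝕋` and under the
exchange of black and white. It is also positively associated: on a finite graph the clusters can be
explored edge by edge, and every step of the exploration mixes two positively associated laws one of
which dominates the other; the general case follows by exhausting the edges. The crossing estimate
rests on these three properties.

Since a parallelogram has either a black left-right crossing or a white top-bottom one, black
crossings of rhombi have probability at least `1/2`. To obtain long crossings, consider a box
of height `2h` at the width where its left-right crossings cease to have probability `1/2`, together
with a median `α ≤ h` of the distance from the middle row at which these crossings end.
* If `α` is comparable to `h`, the vertical crossings of the box and of an upward translate are
  linked by horizontal crossings, one ending high in the box and the other low in the translate.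
  Hence boxes can be stacked to a tall vertical crossing.
* If `α` is small compared with `h` but at most comparable to the median `α'` of the scale `h / 64`,
  then a crossing of the large box and its mirror image are both caught by a vertical crossing of a
  small box, and together they form a longer left-right crossing.
* Otherwise `α` would grow by a factor of more than `64` from each scale `64 ^ k` to the next, which
  contradicts `α ≤ h`.
-/

namespace DaC

section PathIn

variable {α : Type*} {r : α → α → Prop} {S T R : Set α} {a b c : α}

/-- `PathIn r T a b`: the points `a` and `b` are joined by an `r`-path all of whose vertices
(endpoints included) lie in `T`. -/
def PathIn (r : α → α → Prop) (T : Set α) (a b : α) : Prop :=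
  a ∈ T ∧ Relation.ReflTransGen (fun u v => r u v ∧ v ∈ T) a b

namespace PathIn

theorem refl (ha : a ∈ T) : PathIn r T a a := ⟨ha, .refl⟩

theorem left_mem (h : PathIn r T a b) : a ∈ T := h.1

theorem tail (h : PathIn r T a b) (hbc : r b c) (hc : c ∈ T) : PathIn r T a c :=
  ⟨h.1, h.2.tail ⟨hbc, hc⟩⟩

theorem single (ha : a ∈ T) (hb : b ∈ T) (hab : r a b) : PathIn r T a b := (refl ha).tail hab hb

theorem induction {motive : α → Prop} (h : PathIn r T a b) (start : motive a)
    (step : ∀ u v, PathIn r T a u → motive u → r u v → v ∈ T → motive v) : motive b := by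
  obtain ⟨ha, hab⟩ := h
  induction hab with
  | refl => exact start
  | tail hau huv ih => exact step _ _ ⟨ha, hau⟩ ih huv.1 huv.2

theorem right_mem (h : PathIn r T a b) : b ∈ T := h.induction h.1 fun _ _ _ _ _ hv => hv

theorem trans (h : PathIn r T a b) (h' : PathIn r T b c) : PathIn r T a c :=
  h'.induction (motive := PathIn r T a) h fun _ _ _ hu huv hv => hu.tail huv hv

theorem symm (hr : ∀ u v, r u v → r v u) (h : PathIn r T a b) : PathIn r T b a :=
  h.induction (motive := fun v => PathIn r T v a) (refl h.1) fun _ _ hau hu huv hv =>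
    (single hv hau.right_mem (hr _ _ huv)).trans hu

theorem map {β : Type*} {s : β → β → Prop} {T : Set β} (g : α → β)
    (hg : ∀ u v, r u v → s (g u) (g v)) (hST : Set.MapsTo g S T) (h : PathIn r S a b) :
    PathIn s T (g a) (g b) :=
  h.induction (motive := fun v => PathIn s T (g a) (g v)) (refl (hST h.1)) fun _ _ _ hu huv hv =>
    hu.tail (hg _ _ huv) (hST hv)

theorem mono (hST : S ⊆ T) (h : PathIn r S a b) : PathIn r T a b := h.map id (fun _ _ => id) hST

theorem in_component (h : PathIn r T a b) : PathIn r {v | PathIn r T a v} a b :=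
  h.induction (motive := PathIn r {v | PathIn r T a v} a) (refl (refl h.1))
    fun _ _ hau hu huv hv => hu.tail huv (hau.tail huv hv)

theorem exists_finite (h : PathIn r T a b) : ∃ S ⊆ T, S.Finite ∧ PathIn r S a b :=
  h.induction (motive := fun v => ∃ S ⊆ T, S.Finite ∧ PathIn r S a v)
    ⟨{a}, by simpa using h.1, Set.finite_singleton a, refl rfl⟩
    fun _ v _ ⟨S, hS, hfin, hu⟩ huv hv => ⟨insert v S, Set.insert_subset hv hS, hfin.insert v,
      (hu.mono (Set.subset_insert v S)).tail huv (Set.mem_insert v S)⟩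

theorem stays_or_exits (h : PathIn r T a b) (ha : a ∈ R) :
    PathIn r (T ∩ R) a b ∨ ∃ c d, PathIn r (T ∩ R) a c ∧ r c d ∧ d ∈ T \ R := by
  refine h.induction (motive := fun v => PathIn r (T ∩ R) a v ∨
    ∃ c d, PathIn r (T ∩ R) a c ∧ r c d ∧ d ∈ T \ R) (Or.inl (refl ⟨h.1, ha⟩)) ?_
  rintro u v - (hu | hu) huv hv
  · by_cases hvR : v ∈ R
    · exact Or.inl (hu.tail huv ⟨hv, hvR⟩)
    · exact Or.inr ⟨u, v, hu, huv, hv, hvR⟩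
  · exact Or.inr hu

theorem exists_first_entry (h : PathIn r T a b) (hb : b ∈ R) :
    ∃ d ∈ T ∩ R, PathIn r (insert d (T \ R)) a d := by
  by_cases ha : a ∈ R
  · exact ⟨a, ⟨h.left_mem, ha⟩, refl (Set.mem_insert a _)⟩
  obtain h | ⟨c, d, hac, hcd, hd, hdR⟩ := h.stays_or_exits (R := Rᶜ) ha
  · exact absurd hb h.right_mem.2
  · exact ⟨d, ⟨hd, not_not.1 hdR⟩,
      (hac.mono (Set.subset_insert d _)).tail hcd (Set.mem_insert d _)⟩

theorem exists_fin_path (h : PathIn r T a b) : ∃ (k : ℕ) (f : Fin (k + 1) → α), (∀ i, f i ∈ T) ∧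
    (∀ i : Fin k, r (f i.castSucc) (f i.succ)) ∧ f 0 = a ∧ f (Fin.last k) = b := by
  refine h.induction (motive := fun v => ∃ (k : ℕ) (f : Fin (k + 1) → α), (∀ i, f i ∈ T) ∧
    (∀ i : Fin k, r (f i.castSucc) (f i.succ)) ∧ f 0 = a ∧ f (Fin.last k) = v) ?_ ?_
  · exact ⟨0, fun _ => a, fun _ => h.left_mem, fun i => i.elim0, rfl, rfl⟩
  · rintro u v - ⟨k, f, hT, hr, h₀, rfl⟩ huv hv
    refine ⟨k + 1, Fin.snoc f v, Fin.lastCases (by simpa using hv) (by simpa using hT),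
      Fin.lastCases (by simpa using huv) fun i => ?_, ?_, by simp⟩
    · rw [← Fin.castSucc_zero, Fin.snoc_castSucc, h₀]
    · rw [Fin.succ_castSucc, Fin.snoc_castSucc, Fin.snoc_castSucc]
      exact hr i

theorem add_nsmul [AddMonoid α] (d : α) (hd : ∀ u, r u (u + d)) (n : ℕ)
    (hT : ∀ i ≤ n, a + i • d ∈ T) : PathIn r T a (a + n • d) := by
  induction n with
  | zero => simpa using refl (by simpa using hT 0 le_rfl)
  | succ n ih =>
    refine (ih fun i hi => hT i (by omega)).tail ?_ (hT _ le_rfl)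
    simpa only [add_assoc, ← succ_nsmul] using hd (a + n • d)

section Height

variable {f : α → ℤ} {k lo hi : ℤ}

theorem exists_first_passage (hf : ∀ u v, r u v → f v ≤ f u + k) (hk : 0 < k)
    (h : PathIn r T a b) (ha : f a ≤ hi) (hb : hi ≤ f b) :
    ∃ c, PathIn r (T ∩ {v | f v ≤ hi}) a c ∧ hi - k < f c := by
  obtain h | ⟨c, d, hac, hcd, hd⟩ := h.stays_or_exits (R := {v | f v ≤ hi}) ha
  · exact ⟨b, h, by omega⟩
  · have := hf c d hcd
    have := hd.2
    simp only [Set.mem_ofPred_eq] at this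
    exact ⟨c, hac, by omega⟩

theorem exists_crossing_subpath (hr : ∀ u v, r u v → r v u) (hf : ∀ u v, r u v → f v ≤ f u + k)
    (hk : 0 < k) (hw : lo + k ≤ hi + 1) (h : PathIn r T a b) (ha : f a ≤ lo) (hb : hi ≤ f b) :
    ∃ a' b', PathIn r (T ∩ {v | lo ≤ f v ∧ f v ≤ hi}) a' b' ∧ f a' < lo + k ∧ hi - k < f b' := by
  obtain ⟨c, hac, hc⟩ := exists_first_passage hf hk h (by omega) hb
  obtain ⟨d, hcd, hd⟩ := exists_first_passage (f := fun v => -f v) (hi := -lo)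
    (fun u v huv => by have := hf v u (hr u v huv); omega) hk (hac.symm hr) (by omega) (by omega)
  refine ⟨d, c, (hcd.symm hr).mono ?_, by omega, hc⟩
  rintro v ⟨⟨hvT, hv⟩, hv'⟩
  exact ⟨hvT, by simpa using hv', hv⟩

end Height

end PathIn

end PathIn

/-! ### Planar topology of the triangular lattice -/

section Planar

variable {F G : Set V} {a b c d u v : V}

theorem triAdj_iff : TriAdj u v ↔
    (u.1 - v.1 = 1 ∧ u.2 - v.2 = 0) ∨ (u.1 - v.1 = -1 ∧ u.2 - v.2 = 0) ∨
    (u.1 - v.1 = 0 ∧ u.2 - v.2 = 1) ∨ (u.1 - v.1 = 0 ∧ u.2 - v.2 = -1) ∨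
    (u.1 - v.1 = 1 ∧ u.2 - v.2 = 1) ∨ (u.1 - v.1 = -1 ∧ u.2 - v.2 = -1) := by
  simp only [TriAdj, Set.mem_insert_iff, Set.mem_singleton_iff, Prod.mk.injEq]

theorem triAdj_symm (u v : V) (h : TriAdj u v) : TriAdj v u := by
  rw [triAdj_iff] at *
  omega

/-- Signed crossing of the step `b → c` with the vertical half-line going up from `v` and
displaced by `1/2` to the right. -/
def stepCrossing (b c v : V) : ℤ :=
  if b.1 = v.1 ∧ c.1 = v.1 + 1 ∧ v.2 < b.2 then 1
  else if c.1 = v.1 ∧ b.1 = v.1 + 1 ∧ v.2 < c.2 then -1 else 0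

/-- Indicator of `b` lying straight above `v`. -/
def aboveInd (b v : V) : ℤ := if b.1 = v.1 ∧ v.2 < b.2 then 1 else 0

/-- Indicator of `b` lying in the column of `v` or to its left. -/
def leftInd (b v : V) : ℤ := if b.1 ≤ v.1 then 1 else 0

theorem stepCrossing_eq_of_vertical (h : TriAdj b c) (hub : u ≠ b) (huc : u ≠ c) (hvb : v ≠ b)
    (hvc : v ≠ c) (huv : TriAdj u v) (hcol : u.1 = v.1) :
    stepCrossing b c u = stepCrossing b c v := by
  obtain ⟨b₁, b₂⟩ := b
  obtain ⟨c₁, c₂⟩ := c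
  obtain ⟨u₁, u₂⟩ := u
  obtain ⟨v₁, v₂⟩ := v
  rw [triAdj_iff] at h huv
  simp only [stepCrossing, ne_eq, Prod.mk.injEq] at *
  split_ifs <;> omega

theorem stepCrossing_sub_of_right (h : TriAdj b c) (hub : u ≠ b) (huc : u ≠ c) (hvb : v ≠ b)
    (hvc : v ≠ c) (huv : TriAdj u v) (hcol : v.1 = u.1 + 1) :
    stepCrossing b c v - stepCrossing b c u = aboveInd b v - aboveInd c v := by
  obtain ⟨b₁, b₂⟩ := b
  obtain ⟨c₁, c₂⟩ := c
  obtain ⟨u₁, u₂⟩ := u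
  obtain ⟨v₁, v₂⟩ := v
  rw [triAdj_iff] at h huv
  simp only [stepCrossing, aboveInd, ne_eq, Prod.mk.injEq] at *
  have huv' : v₁ = u₁ + 1 ∧ (v₂ = u₂ ∨ v₂ = u₂ + 1) := by omega
  clear huv hcol
  obtain ⟨rfl, huv'⟩ := huv'
  have hbc : b₁ = c₁ + 1 ∨ c₁ = b₁ + 1 ∨ b₁ = c₁ := by omega
  rcases hbc with rfl | rfl | rfl <;> rcases huv' with rfl | rfl <;> split_ifs <;> omega

theorem stepCrossing_eq_zero (hb : b.1 = v.1 → b.2 < v.2) (hc : c.1 = v.1 → c.2 < v.2) :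
    stepCrossing b c v = 0 := by
  simp only [stepCrossing]
  split_ifs <;> omega

theorem stepCrossing_eq_leftInd_sub (h : TriAdj b c) (hb : b.1 = v.1 → v.2 < b.2)
    (hc : c.1 = v.1 → v.2 < c.2) : stepCrossing b c v = leftInd b v - leftInd c v := by
  rw [triAdj_iff] at h
  simp only [stepCrossing, leftInd]
  split_ifs <;> omega

/-- `N v` counts, with signs, the crossings of a path in `F` from `a` to `b` with the vertical
half-line going up from `v` and displaced by `1/2` to the right. Off `F` it is locally constant,
except that it jumps across the columns above and below the endpoints of the path. -/
structure IsCrossingNumber (F : Set V) (a b : V) (N : V → ℤ) : Prop where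
  eq_of_vertical : ∀ u ∉ F, ∀ v ∉ F, TriAdj u v → u.1 = v.1 → N u = N v
  sub_of_right : ∀ u ∉ F, ∀ v ∉ F, TriAdj u v → v.1 = u.1 + 1 →
    N v - N u = aboveInd a v - aboveInd b v
  eq_zero_of_above : ∀ v, (∀ u ∈ F, u.1 = v.1 → u.2 < v.2) → N v = 0
  eq_leftInd_of_below : ∀ v, (∀ u ∈ F, u.1 = v.1 → v.2 < u.2) → N v = leftInd a v - leftInd b v

theorem isCrossingNumber_zero : IsCrossingNumber F a a fun _ => 0 := by
  constructor <;> simp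

theorem IsCrossingNumber.add_step {N : V → ℤ} (h : IsCrossingNumber F a b N) (hb : b ∈ F)
    (hbc : TriAdj b c) (hc : c ∈ F) :
    IsCrossingNumber F a c fun v => N v + stepCrossing b c v where
  eq_of_vertical u hu v hv huv hcol := by
    rw [h.eq_of_vertical u hu v hv huv hcol, stepCrossing_eq_of_vertical hbc
      (ne_of_mem_of_not_mem hb hu).symm (ne_of_mem_of_not_mem hc hu).symm
      (ne_of_mem_of_not_mem hb hv).symm (ne_of_mem_of_not_mem hc hv).symm huv hcol]
  sub_of_right u hu v hv huv hcol := by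
    have hN := h.sub_of_right u hu v hv huv hcol
    have hstep := stepCrossing_sub_of_right hbc
      (ne_of_mem_of_not_mem hb hu).symm (ne_of_mem_of_not_mem hc hu).symm
      (ne_of_mem_of_not_mem hb hv).symm (ne_of_mem_of_not_mem hc hv).symm huv hcol
    linarith
  eq_zero_of_above v hv := by
    rw [h.eq_zero_of_above v hv, stepCrossing_eq_zero (hv b hb) (hv c hc), add_zero]
  eq_leftInd_of_below v hv := by
    rw [h.eq_leftInd_of_below v hv, stepCrossing_eq_leftInd_sub hbc (hv b hb) (hv c hc)]
    ring

theorem PathIn.exists_isCrossingNumber (h : PathIn TriAdj F a b) :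
    ∃ N, IsCrossingNumber F a b N :=
  h.induction (motive := fun v => ∃ N, IsCrossingNumber F a v N) ⟨_, isCrossingNumber_zero⟩
    fun _ _ hau ⟨_, hN⟩ huv hv => ⟨_, hN.add_step hau.right_mem huv hv⟩

theorem IsCrossingNumber.eq_of_path {N : V → ℤ} (hN : IsCrossingNumber F a b N)
    (hG : PathIn TriAdj G c d) (hGF : Disjoint G F) (ha : ∀ u ∈ G, a.1 ≤ u.1)
    (hb : ∀ u ∈ G, u.1 < b.1) : N d = N c := by
  have hoff (v : V) (hv : v ∈ G) : v ∉ F := Set.disjoint_left.1 hGF hv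
  refine hG.induction (motive := fun v => N v = N c) rfl fun u v hcu hu huv hv => ?_
  have huG := hcu.right_mem
  have hau := ha u huG
  have hav := ha v hv
  have hbu := hb u huG
  have hbv := hb v hv
  have hcol : u.1 = v.1 ∨ v.1 = u.1 + 1 ∨ u.1 = v.1 + 1 := by
    have := triAdj_iff.1 huv
    omega
  rcases hcol with h | h | h
  · rw [← hN.eq_of_vertical u (hoff u huG) v (hoff v hv) huv h, hu]
  · have := hN.sub_of_right u (hoff u huG) v (hoff v hv) huv h
    simp only [aboveInd] at this
    split_ifs at this <;> omega
  · have := hN.sub_of_right v (hoff v hv) u (hoff u huG) (triAdj_symm u v huv) h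
    simp only [aboveInd] at this
    split_ifs at this <;> omega

theorem PathIn.not_disjoint (hF : PathIn TriAdj F a b) (hG : PathIn TriAdj G c d)
    (ha : ∀ u ∈ G, a.1 ≤ u.1) (hb : ∀ u ∈ G, u.1 < b.1)
    (hc : ∀ u ∈ F, u.1 = c.1 → u.2 ≤ c.2) (hd : ∀ u ∈ F, u.1 = d.1 → d.2 ≤ u.2) :
    ¬ Disjoint G F := by
  intro hdisj
  have hoff (v : V) (hv : v ∈ G) : v ∉ F := Set.disjoint_left.1 hdisj hv
  obtain ⟨N, hN⟩ := hF.exists_isCrossingNumber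
  have hNc : N c = 0 := hN.eq_zero_of_above c fun u hu hcol =>
    lt_of_le_of_ne (hc u hu hcol) fun h => hoff c hG.left_mem (Prod.ext hcol h ▸ hu)
  have hNd : N d = leftInd a d - leftInd b d := hN.eq_leftInd_of_below d fun u hu hcol =>
    lt_of_le_of_ne (hd u hu hcol) fun h => hoff d hG.right_mem (Prod.ext hcol h.symm ▸ hu)
  have had := ha d hG.right_mem
  have hbd := hb d hG.right_mem
  rw [hN.eq_of_path hG hdisj ha hb, hNc] at hNd
  simp only [leftInd] at hNd
  split_ifs at hNd <;> omega

/-- The horizontal half-line going left from `a`. -/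
def leftRay (a : V) : Set V := {v | v.2 = a.2 ∧ v.1 ≤ a.1}

/-- The horizontal half-line going right from `b`. -/
def rightRay (b : V) : Set V := {v | v.2 = b.2 ∧ b.1 ≤ v.1}

/-- The half-line going up from `c` in the lattice direction `(1, 1)`. -/
def upRay (c : V) : Set V := {v | c.2 ≤ v.2 ∧ v.1 - c.1 = v.2 - c.2}

/-- The half-line going down from `d` in the lattice direction `(0, -1)`. -/
def downRay (d : V) : Set V := {v | v.2 ≤ d.2 ∧ v.1 = d.1}

theorem exists_abs_le_of_finite {S : Set V} (hS : S.Finite) :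
    ∃ N : ℕ, ∀ v ∈ S, |v.1| ≤ N ∧ |v.2| ≤ N := by
  obtain ⟨N, hN⟩ := (hS.image fun v : V => max v.1.natAbs v.2.natAbs).bddAbove
  refine ⟨N, fun v hv => ?_⟩
  have := hN (Set.mem_image_of_mem _ hv)
  simp only [Int.abs_eq_natAbs]
  omega

theorem PathIn.extend_horizontal (h : PathIn TriAdj F a b) (n : ℕ) :
    PathIn TriAdj (F ∪ leftRay a ∪ rightRay b) (a + n • ((-1, 0) : V)) (b + n • ((1, 0) : V)) := by
  have hleft : PathIn TriAdj (F ∪ leftRay a ∪ rightRay b) a (a + n • ((-1, 0) : V)) :=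
    PathIn.add_nsmul _ (fun u => by rw [triAdj_iff]; simp) n
      fun i _ => Or.inl (Or.inr (by simp [leftRay]))
  have hright : PathIn TriAdj (F ∪ leftRay a ∪ rightRay b) b (b + n • ((1, 0) : V)) :=
    PathIn.add_nsmul _ (fun u => by rw [triAdj_iff]; simp) n
      fun i _ => Or.inr (by simp [rightRay])
  exact (hleft.symm triAdj_symm).trans
    ((h.mono (Set.subset_union_left.trans Set.subset_union_left)).trans hright)

theorem PathIn.extend_vertical (h : PathIn TriAdj G c d) (n : ℕ) :
    PathIn TriAdj (G ∪ (upRay c ∩ {v | v.1 ≤ c.1 + n}) ∪ downRay d)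
      (c + n • ((1, 1) : V)) (d + n • ((0, -1) : V)) := by
  set G' : Set V := G ∪ (upRay c ∩ {v | v.1 ≤ c.1 + n}) ∪ downRay d
  have hup : PathIn TriAdj G' c (c + n • ((1, 1) : V)) :=
    PathIn.add_nsmul _ (fun u => by rw [triAdj_iff]; simp) n
      fun i hi => Or.inl (Or.inr (by simp [upRay, hi]))
  have hdown : PathIn TriAdj G' d (d + n • ((0, -1) : V)) :=
    PathIn.add_nsmul _ (fun u => by rw [triAdj_iff]; simp) n
      fun i _ => Or.inr (by simp [downRay])
  exact (hup.symm triAdj_symm).trans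
    ((h.mono (Set.subset_union_left.trans Set.subset_union_left)).trans hdown)

theorem PathIn.exists_mem_extensions (hF : PathIn TriAdj F a b) (hG : PathIn TriAdj G c d) :
    ∃ v ∈ F ∪ leftRay a ∪ rightRay b, v ∈ G ∪ upRay c ∪ downRay d := by
  obtain ⟨F₀, hF₀F, hF₀fin, hF₀⟩ := hF.exists_finite
  obtain ⟨G₀, hG₀G, hG₀fin, hG₀⟩ := hG.exists_finite
  obtain ⟨N, hN⟩ := exists_abs_le_of_finite (hF₀fin.union hG₀fin)
  simp only [abs_le] at hN
  have ha := hN a (Or.inl hF₀.left_mem)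
  have hb := hN b (Or.inl hF₀.right_mem)
  have hc := hN c (Or.inr hG₀.left_mem)
  have hd := hN d (Or.inr hG₀.right_mem)
  have hheight : ∀ v ∈ F₀ ∪ leftRay a ∪ rightRay b, -N ≤ v.2 ∧ v.2 ≤ N := by
    rintro v ((hv | ⟨h, -⟩) | ⟨h, -⟩)
    · exact (hN v (Or.inl hv)).2
    · omega
    · omega
  have hwidth : ∀ v ∈ G₀ ∪ (upRay c ∩ {v | v.1 ≤ c.1 + (2 * N : ℕ)}) ∪ downRay d,
      -N ≤ v.1 ∧ v.1 ≤ 3 * N := by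
    rintro v ((hv | ⟨⟨h, h'⟩, h''⟩) | ⟨-, h⟩)
    · have := hN v (Or.inr hv)
      omega
    · simp only [Set.mem_ofPred_eq] at h''
      omega
    · omega
  have hmeet := (hF₀.extend_horizontal (4 * N + 1)).not_disjoint (hG₀.extend_vertical (2 * N))
    (fun u hu => by have := hwidth u hu; simp; omega)
    (fun u hu => by have := hwidth u hu; simp; omega)
    (fun u hu _ => by have := hheight u hu; simp; omega)
    (fun u hu _ => by have := hheight u hu; simp; omega)
  obtain ⟨v, hvG, hvF⟩ := Set.not_disjoint_iff.1 hmeet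
  refine ⟨v, Set.union_subset_union_left _ (Set.union_subset_union_left _ hF₀F) hvF, ?_⟩
  exact Set.union_subset_union_left _ (Set.union_subset_union hG₀G Set.inter_subset_left) hvG

theorem PathIn.of_eq_or_adj {T : Set V} (hu : u ∈ T) (hv : v ∈ T) (h : u = v ∨ TriAdj u v) :
    PathIn TriAdj T u v := by
  rcases h with rfl | h
  · exact PathIn.refl hu
  · exact PathIn.single hu hv h

/-- The rays avoid the other path and its rays, except that a horizontal ray may touch `G`: the
intersection of the extended paths then comes from a contact between `F` and `G` themselves. -/
theorem PathIn.exists_contact (hF : PathIn TriAdj F a b) (hG : PathIn TriAdj G c d)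
    (hleft : ∀ v ∈ G, v.2 = a.2 → a.1 - 1 ≤ v.1) (hright : ∀ v ∈ G, v.2 = b.2 → v.1 ≤ b.1 + 1)
    (hup : ∀ v ∈ F, c.2 < v.2 → v.1 - c.1 ≠ v.2 - c.2)
    (hup_a : c.2 < a.2 → a.1 < c.1 + (a.2 - c.2)) (hup_b : c.2 < b.2 → c.1 + (b.2 - c.2) < b.1)
    (hdown : ∀ v ∈ F, v.2 < d.2 → v.1 ≠ d.1)
    (hdown_a : a.2 < d.2 → a.1 < d.1) (hdown_b : b.2 < d.2 → d.1 < b.1) :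
    ∃ u ∈ F, ∃ v ∈ G, u = v ∨ TriAdj u v := by
  obtain ⟨v, hvF, hvG⟩ := hF.exists_mem_extensions hG
  have hvG : v ∈ G := by
    rcases hvG with (hv | ⟨hcv, hv⟩) | ⟨hvd, hv⟩
    · exact hv
    · rcases hcv.eq_or_lt with heq | hlt
      · have : v = c := Prod.ext (by omega) heq.symm
        exact this ▸ hG.left_mem
      · rcases hvF with (hvF | ⟨hv₂, hv₁⟩) | ⟨hv₂, hv₁⟩
        · exact absurd hv (hup v hvF hlt)
        · have := hup_a (by omega)
          omega
        · have := hup_b (by omega)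
          omega
    · rcases hvd.eq_or_lt with heq | hlt
      · have : v = d := Prod.ext hv heq
        exact this ▸ hG.right_mem
      · rcases hvF with (hvF | ⟨hv₂, hv₁⟩) | ⟨hv₂, hv₁⟩
        · exact absurd hv (hdown v hvF hlt)
        · have := hdown_a (by omega)
          omega
        · have := hdown_b (by omega)
          omega
  rcases hvF with (hvF | ⟨hv₂, hv₁⟩) | ⟨hv₂, hv₁⟩
  · exact ⟨v, hvF, v, hvG, Or.inl rfl⟩
  · have := hleft v hvG hv₂
    refine ⟨a, hF.left_mem, v, hvG, ?_⟩
    rw [triAdj_iff, Prod.ext_iff]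
    omega
  · have := hright v hvG hv₂
    refine ⟨b, hF.right_mem, v, hvG, ?_⟩
    rw [triAdj_iff, Prod.ext_iff]
    omega

theorem PathIn.joined_of_cross (hF : PathIn TriAdj F a b) (hG : PathIn TriAdj G c d)
    (hleft : ∀ v ∈ G, v.2 = a.2 → a.1 - 1 ≤ v.1) (hright : ∀ v ∈ G, v.2 = b.2 → v.1 ≤ b.1 + 1)
    (hup : ∀ v ∈ F, c.2 < v.2 → v.1 - c.1 ≠ v.2 - c.2)
    (hup_a : c.2 < a.2 → a.1 < c.1 + (a.2 - c.2)) (hup_b : c.2 < b.2 → c.1 + (b.2 - c.2) < b.1)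
    (hdown : ∀ v ∈ F, v.2 < d.2 → v.1 ≠ d.1)
    (hdown_a : a.2 < d.2 → a.1 < d.1) (hdown_b : b.2 < d.2 → d.1 < b.1) :
    PathIn TriAdj (F ∪ G) a c := by
  obtain ⟨u, hau, v, hcv, huv⟩ := hF.in_component.exists_contact hG.in_component
    (fun v hv => hleft v hv.right_mem) (fun v hv => hright v hv.right_mem)
    (fun v hv => hup v hv.right_mem) hup_a hup_b (fun v hv => hdown v hv.right_mem) hdown_a hdown_b
  have hau : PathIn TriAdj (F ∪ G) a u := PathIn.mono Set.subset_union_left hau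
  have hcv : PathIn TriAdj (F ∪ G) c v := PathIn.mono Set.subset_union_right hcv
  exact hau.trans ((PathIn.of_eq_or_adj hau.right_mem hcv.right_mem huv).trans
    (hcv.symm triAdj_symm))

end Planar

section Hex

/-- The parallelogram `[x₀, x₁] × [y₀, y₁]`. -/
def Para (x₀ x₁ y₀ y₁ : ℤ) : Set V := {v | x₀ ≤ v.1 ∧ v.1 ≤ x₁ ∧ y₀ ≤ v.2 ∧ v.2 ≤ y₁}

open Classical in
/-- Signed indicator that the edge `u v` separates a vertex of `A` from a vertex of `W`; its sum
along a path counts the passages from `A` to `W`. -/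
noncomputable def flux (A W : Set V) (u v : V) : ℤ :=
  (if u ∈ A ∧ v ∈ W then 1 else 0) - if u ∈ W ∧ v ∈ A then 1 else 0

variable {A W : Set V}

theorem flux_eq_zero_of_notMem_left {u v : V} (hu : u ∉ A) (hv : v ∉ A) : flux A W u v = 0 := by
  simp [flux, hu, hv]

theorem flux_eq_zero_of_notMem_right {u v : V} (hu : u ∉ W) (hv : v ∉ W) : flux A W u v = 0 := by
  simp [flux, hu, hv]

theorem flux_add_flux (hAW : Disjoint A W) {u v w : V}
    (hu : v ∈ A ∧ w ∈ W ∨ w ∈ A ∧ v ∈ W → u ∈ A ∪ W)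
    (hv : u ∈ A ∧ w ∈ W ∨ w ∈ A ∧ u ∈ W → v ∈ A ∪ W)
    (hw : u ∈ A ∧ v ∈ W ∨ v ∈ A ∧ u ∈ W → w ∈ A ∪ W) :
    flux A W u v + flux A W v w = flux A W u w := by
  have hAW (z : V) : ¬ (z ∈ A ∧ z ∈ W) := fun h => Set.disjoint_left.1 hAW h.1 h.2
  have h₁ := hAW u
  have h₂ := hAW v
  have h₃ := hAW w
  simp only [Set.mem_union] at hu hv hw
  unfold flux
  by_cases u ∈ A <;> by_cases u ∈ W <;> by_cases v ∈ A <;> by_cases v ∈ W <;>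
    by_cases w ∈ A <;> by_cases w ∈ W <;> simp_all

/-- In every lattice triangle inside `R` meeting both `A` and `W`, the third vertex lies in
`A` or `W`. -/
def FillsTriangles (A W R : Set V) : Prop :=
  ∀ u ∈ R, ∀ v ∈ R, ∀ w ∈ R, u ∈ A → v ∈ W → TriAdj u w → TriAdj v w → w ∈ A ∪ W

theorem FillsTriangles.flux_add_flux {R : Set V} (hfill : FillsTriangles A W R)
    (hAW : Disjoint A W) {u v w : V} (hu : u ∈ R) (hv : v ∈ R) (hw : w ∈ R) (huv : TriAdj u v)
    (hvw : TriAdj v w) (huw : TriAdj u w) : flux A W u v + flux A W v w = flux A W u w := by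
  have hvu := triAdj_symm u v huv
  have hwv := triAdj_symm v w hvw
  have hwu := triAdj_symm u w huw
  apply DaC.flux_add_flux hAW
  · rintro (⟨h, h'⟩ | ⟨h, h'⟩)
    exacts [hfill v hv w hw u hu h h' hvu hwu, hfill w hw v hv u hu h h' hwu hvu]
  · rintro (⟨h, h'⟩ | ⟨h, h'⟩)
    exacts [hfill u hu w hw v hv h h' huv hwv, hfill w hw u hu v hv h h' hwv huv]
  · rintro (⟨h, h'⟩ | ⟨h, h'⟩)
    exacts [hfill u hu v hv w hw h h' huw hvw, hfill v hv u hu w hw h h' hvw huw]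

theorem FillsTriangles.flux_square {R : Set V} {x y : ℤ} (hfill : FillsTriangles A W R)
    (hAW : Disjoint A W) (h₀₀ : (x, y) ∈ R) (h₁₀ : (x + 1, y) ∈ R) (h₀₁ : (x, y + 1) ∈ R)
    (h₁₁ : (x + 1, y + 1) ∈ R) :
    flux A W (x, y + 1) (x + 1, y + 1) - flux A W (x, y) (x + 1, y) =
      flux A W (x + 1, y) (x + 1, y + 1) - flux A W (x, y) (x, y + 1) := by
  have hlower := hfill.flux_add_flux hAW h₀₀ h₁₀ h₁₁ (by simp [triAdj_iff]) (by simp [triAdj_iff])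
    (by simp [triAdj_iff])
  have hupper := hfill.flux_add_flux hAW h₀₀ h₀₁ h₁₁ (by simp [triAdj_iff]) (by simp [triAdj_iff])
    (by simp [triAdj_iff])
  linarith

/-- The total flux along the horizontal segment of length `n` starting at `(x, y)`. -/
noncomputable def rowFlux (A W : Set V) (x : ℤ) (n : ℕ) (y : ℤ) : ℤ :=
  ∑ i ∈ Finset.range n, flux A W (x + i, y) (x + i + 1, y)

theorem rowFlux_eq_zero {x y : ℤ} {n : ℕ} (hW : ∀ i : ℕ, i ≤ n → (x + (i : ℤ), y) ∉ W) :
    rowFlux A W x n y = 0 := by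
  refine Finset.sum_eq_zero fun i hi => ?_
  have hi := Finset.mem_range.1 hi
  exact flux_eq_zero_of_notMem_right (hW i hi.le) (by simpa [add_assoc] using hW (i + 1) hi)

theorem rowFlux_succ_eq_one {x y : ℤ} {n : ℕ} (hAW : Disjoint A W) (hA : (x, y) ∈ A)
    (hW : ∀ i : ℕ, i ≤ n → (x + (i : ℤ) + 1, y) ∈ W) : rowFlux A W x (n + 1) y = 1 := by
  rw [rowFlux, Finset.sum_range_succ', Finset.sum_eq_zero, zero_add]
  · have hW₀ : (x + 1, y) ∈ W := by simpa using hW 0 (Nat.zero_le n)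
    simp [flux, hA, hW₀, Set.disjoint_left.1 hAW hA]
  · intro i hi
    have hi := Finset.mem_range.1 hi
    exact flux_eq_zero_of_notMem_left
      (Set.disjoint_right.1 hAW (by simpa [add_assoc] using hW i hi.le))
      (Set.disjoint_right.1 hAW (hW (i + 1) hi))

theorem FillsTriangles.rowFlux_add_one {R : Set V} {x y : ℤ} {n : ℕ} (hfill : FillsTriangles A W R)
    (hAW : Disjoint A W) (hR : ∀ i : ℕ, i ≤ n → (x + (i : ℤ), y) ∈ R ∧ (x + (i : ℤ), y + 1) ∈ R)
    (hleft : (x, y) ∉ W) (hleft' : (x, y + 1) ∉ W)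
    (hright : (x + (n : ℤ), y) ∉ A) (hright' : (x + (n : ℤ), y + 1) ∉ A) :
    rowFlux A W x n (y + 1) = rowFlux A W x n y := by
  have hsquare (i : ℕ) (hi : i ∈ Finset.range n) :
      flux A W (x + i, y + 1) (x + i + 1, y + 1) - flux A W (x + i, y) (x + i + 1, y) =
        flux A W (x + (i + 1 : ℕ), y) (x + (i + 1 : ℕ), y + 1) -
          flux A W (x + i, y) (x + i, y + 1) := by
    have hi := Finset.mem_range.1 hi
    have hnext := hR (i + 1) hi
    push_cast [← add_assoc] at hnext ⊢
    exact hfill.flux_square hAW (hR i hi.le).1 hnext.1 (hR i hi.le).2 hnext.2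
  rw [← sub_eq_zero, rowFlux, rowFlux, ← Finset.sum_sub_distrib, Finset.sum_congr rfl hsquare,
    Finset.sum_range_sub (fun i : ℕ => flux A W (x + i, y) (x + i, y + 1)),
    flux_eq_zero_of_notMem_left hright hright', Nat.cast_zero, add_zero,
    flux_eq_zero_of_notMem_right hleft hleft', sub_zero]

/-- The total flux along the bottom row vanishes and along the top row it is `1`, yet consecutive
rows have the same flux because the flux around every triangle is zero. -/
theorem FillsTriangles.false_of_boundary {x y : ℤ} {n m : ℕ}
    (hfill : FillsTriangles A W (Para x (x + (n + 1)) y (y + m))) (hAW : Disjoint A W)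
    (hleft : ∀ j : ℕ, j ≤ m → (x, y + (j : ℤ)) ∈ A)
    (hright : ∀ j : ℕ, j ≤ m → (x + (n + 1 : ℤ), y + (j : ℤ)) ∉ A)
    (hbot : ∀ i : ℕ, i ≤ n + 1 → (x + (i : ℤ), y) ∉ W)
    (htop : ∀ i : ℕ, i ≤ n → (x + (i : ℤ) + 1, y + (m : ℤ)) ∈ W) : False := by
  have hconst (j : ℕ) (hj : j ≤ m) : rowFlux A W x (n + 1) (y + j) = 0 := by
    induction j with
    | zero => simpa using rowFlux_eq_zero hbot
    | succ j ih =>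
      have hleft' := hleft (j + 1) hj
      have hright' := hright (j + 1) hj
      push_cast [← add_assoc] at hleft' hright' hright ⊢
      rw [hfill.rowFlux_add_one hAW _ (Set.disjoint_left.1 hAW (hleft j (by omega)))
        (Set.disjoint_left.1 hAW hleft') (by simpa [add_assoc] using hright j (by omega))
        (by simpa [add_assoc] using hright'), ih (by omega)]
      intro i hi
      simp only [Para, Set.mem_ofPred_eq]
      omega
  have htop_row := rowFlux_succ_eq_one hAW (hleft m le_rfl) htop
  rw [hconst m le_rfl] at htop_row
  omega

section Exploration

variable {B : Set V} {x₀ x₁ y₀ y₁ : ℤ}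

/-- Vertices explored from the column to the left of the parallelogram through vertices of `B`. -/
def leftExplored (B : Set V) (x₀ x₁ y₀ y₁ : ℤ) : Set V :=
  {v | v.1 = x₀ - 1 ∨ ∃ a, PathIn TriAdj (Para x₀ x₁ y₀ y₁ ∩ B) a v ∧ a.1 = x₀}

/-- Vertices explored from the row above the parallelogram through vertices outside `B`. -/
def topExplored (B : Set V) (x₀ x₁ y₀ y₁ : ℤ) : Set V :=
  {v | v.1 ≠ x₀ - 1 ∧
    (v.2 = y₁ + 1 ∨ ∃ c, PathIn TriAdj (Para x₀ x₁ y₀ y₁ ∩ Bᶜ) c v ∧ c.2 = y₁)}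

theorem mem_leftExplored_of_adj {u v : V} (hu : u ∈ leftExplored B x₀ x₁ y₀ y₁)
    (huv : TriAdj u v) (hv : v ∈ Para x₀ x₁ y₀ y₁ ∩ B) : v ∈ leftExplored B x₀ x₁ y₀ y₁ := by
  rcases hu with hu | ⟨a, hau, ha⟩
  · refine Or.inr ⟨v, PathIn.refl hv, ?_⟩
    have := hv.1.1
    rw [triAdj_iff] at huv
    omega
  · exact Or.inr ⟨a, hau.tail huv hv, ha⟩

theorem mem_topExplored_of_adj {u v : V} (hu : u ∈ topExplored B x₀ x₁ y₀ y₁)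
    (huv : TriAdj u v) (hv : v ∈ Para x₀ x₁ y₀ y₁ ∩ Bᶜ) : v ∈ topExplored B x₀ x₁ y₀ y₁ := by
  have hx := hv.1.1
  refine ⟨by omega, Or.inr ?_⟩
  rcases hu.2 with hu | ⟨c, hcu, hc⟩
  · refine ⟨v, PathIn.refl hv, ?_⟩
    have := hv.1.2.2.2
    rw [triAdj_iff] at huv
    omega
  · exact ⟨c, hcu.tail huv hv, hc⟩

theorem disjoint_leftExplored_topExplored :
    Disjoint (leftExplored B x₀ x₁ y₀ y₁) (topExplored B x₀ x₁ y₀ y₁) := by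
  refine Set.disjoint_left.2 ?_
  rintro v (hv | ⟨a, hav, -⟩) ⟨hx, hv'⟩
  · exact hx hv
  · rcases hv' with hv' | ⟨c, hcv, -⟩
    · have := hav.right_mem.1.2.2.2
      omega
    · exact hcv.right_mem.2 hav.right_mem.2

theorem fillsTriangles_explored : FillsTriangles (leftExplored B x₀ x₁ y₀ y₁)
    (topExplored B x₀ x₁ y₀ y₁) (Para (x₀ - 1) x₁ y₀ (y₁ + 1)) := by
  rintro u - v - w ⟨hw₁, hw₂, hw₃, hw₄⟩ hu hv huw hvw
  by_cases hleft : w.1 = x₀ - 1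
  · exact Or.inl (Or.inl hleft)
  by_cases htop : w.2 = y₁ + 1
  · exact Or.inr ⟨hleft, Or.inl htop⟩
  have hw : w ∈ Para x₀ x₁ y₀ y₁ := ⟨by omega, by omega, by omega, by omega⟩
  by_cases hB : w ∈ B
  · exact Or.inl (mem_leftExplored_of_adj hu huw ⟨hw, hB⟩)
  · exact Or.inr (mem_topExplored_of_adj hv hvw ⟨hw, hB⟩)

theorem exists_path_or_exists_path_compl (B : Set V) (hx : x₀ ≤ x₁) (hy : y₀ ≤ y₁) :
    (∃ a b, PathIn TriAdj (Para x₀ x₁ y₀ y₁ ∩ B) a b ∧ a.1 = x₀ ∧ b.1 = x₁) ∨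
    ∃ c d, PathIn TriAdj (Para x₀ x₁ y₀ y₁ ∩ Bᶜ) c d ∧ c.2 = y₁ ∧ d.2 = y₀ := by
  by_contra! hcon
  obtain ⟨hno_horiz, hno_vert⟩ := hcon
  have hfill := fillsTriangles_explored (B := B) (x₀ := x₀) (x₁ := x₁) (y₀ := y₀) (y₁ := y₁)
  obtain ⟨n, rfl⟩ : ∃ n : ℕ, x₁ = x₀ + n := ⟨(x₁ - x₀).toNat, by omega⟩
  obtain ⟨m, rfl⟩ : ∃ m : ℕ, y₁ = y₀ + m := ⟨(y₁ - y₀).toNat, by omega⟩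
  have hsize : Para (x₀ - 1) (x₀ + n) y₀ (y₀ + m + 1) =
      Para (x₀ - 1) (x₀ - 1 + (n + 1)) y₀ (y₀ + (m + 1 : ℕ)) := by
    congr 1 <;> push_cast <;> ring
  rw [hsize] at hfill
  refine hfill.false_of_boundary disjoint_leftExplored_topExplored
    (fun j _ => Or.inl rfl) ?_ ?_
    fun i _ => ⟨by simp only [ne_eq]; omega, Or.inl (by push_cast; ring)⟩
  · rintro j - (h | ⟨a, hab, ha⟩)
    · simp only at h
      omega
    · exact hno_horiz _ _ hab ha (by simp only; ring)
  · rintro i - ⟨-, h | ⟨c, hcd, hc⟩⟩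
    · simp only at h
      omega
    · exact hno_vert _ _ hcd hc rfl

end Exploration

end Hex

/-! ### Black crossings and their gluing -/

section Gluing

/-- Twice the Euclidean abscissa in the embedding of `𝕋` by equilateral triangles: the lines
`X = const` are orthogonal to the rows `y = const`, and `X` has the parity of `y`. -/
def X (v : V) : ℤ := 2 * v.1 - v.2

/-- The box with vertical sides `X = l`, `X = r` and horizontal sides `y = y₀`, `y = y₁`; it is a
Euclidean rectangle. -/
def Slab (l r y₀ y₁ : ℤ) : Set V := {v | l ≤ X v ∧ X v ≤ r ∧ y₀ ≤ v.2 ∧ v.2 ≤ y₁}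

/-- `a` and `b` are joined by a path of black vertices of `T`. -/
def BlackPath (ξ : ColourCfg) (T : Set V) (a b : V) : Prop :=
  PathIn TriAdj (T ∩ {v | ξ v = true}) a b

/-- The event that some black path in `T` joins `A` to `B`. -/
def joinEvent (T A B : Set V) : Set ColourCfg := {ξ | ∃ a ∈ A, ∃ b ∈ B, BlackPath ξ T a b}

/-- There is a black top to bottom crossing of `Slab l r y₀ y₁`. -/
def upDown (l r y₀ y₁ : ℤ) : Set ColourCfg :=
  joinEvent (Slab l r y₀ y₁) {v | v.2 = y₁} {v | v.2 = y₀}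

/-- There is a black left to right crossing of `Slab l r y₀ y₁`. The ends are only required to be
within `1` of the sides since, by parity, `X = l` and `X = r` meet every other row only. -/
def leftRight (l r y₀ y₁ : ℤ) : Set ColourCfg :=
  joinEvent (Slab l r y₀ y₁) {v | X v ≤ l + 1} {v | r - 1 ≤ X v}

/-- There is a black left to right crossing of `Slab l r y₀ y₁` which reaches the right side only
through the gate `y ∈ [lo, hi]`. -/
def gated (l r y₀ y₁ lo hi : ℤ) : Set ColourCfg :=
  joinEvent (Slab l r y₀ y₁ ∩ {v | r - 1 ≤ X v → lo ≤ v.2 ∧ v.2 ≤ hi})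
    {v | X v ≤ l + 1} {v | r - 1 ≤ X v}

/-- There is a black top to bottom crossing of `Para x₀ x₁ y₀ y₁`. -/
def paraUpDown (x₀ x₁ y₀ y₁ : ℤ) : Set ColourCfg :=
  joinEvent (Para x₀ x₁ y₀ y₁) {v | v.2 = y₁} {v | v.2 = y₀}

/-- There is a black left to right crossing of `Para x₀ x₁ y₀ y₁`. -/
def paraLeftRight (x₀ x₁ y₀ y₁ : ℤ) : Set ColourCfg :=
  joinEvent (Para x₀ x₁ y₀ y₁) {v | v.1 = x₀} {v | v.1 = x₁}

variable {ξ : ColourCfg} {S T : Set V} {a b c d : V} {l r y₀ y₁ l' r' y₀' y₁' : ℤ}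

theorem X_le_of_adj (u v : V) (h : TriAdj u v) : X v ≤ X u + 2 := by
  rw [triAdj_iff] at h
  simp only [X]
  omega

theorem snd_le_of_adj (u v : V) (h : TriAdj u v) : v.2 ≤ u.2 + 1 := by
  rw [triAdj_iff] at h
  omega

theorem fst_le_of_adj (u v : V) (h : TriAdj u v) : v.1 ≤ u.1 + 1 := by
  rw [triAdj_iff] at h
  omega

namespace BlackPath

theorem symm (h : BlackPath ξ T a b) : BlackPath ξ T b a := PathIn.symm triAdj_symm h

theorem trans (h : BlackPath ξ T a b) (h' : BlackPath ξ T b c) : BlackPath ξ T a c :=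
  PathIn.trans h h'

theorem mono (hST : S ⊆ T) (h : BlackPath ξ S a b) : BlackPath ξ T a b :=
  PathIn.mono (Set.inter_subset_inter_left _ hST) h

theorem comap {g : V → V} (hg : ∀ u v, TriAdj u v → TriAdj (g u) (g v)) (hST : Set.MapsTo g S T)
    (h : BlackPath (ξ ∘ g) S a b) : BlackPath ξ T (g a) (g b) :=
  PathIn.map g hg (fun _ hv => ⟨hST hv.1, hv.2⟩) h

theorem exists_crossing_subpath {f : V → ℤ} {k lo hi : ℤ}
    (hf : ∀ u v, TriAdj u v → f v ≤ f u + k) (hk : 0 < k) (hw : lo + k ≤ hi + 1)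
    (h : BlackPath ξ T a b) (ha : f a ≤ lo) (hb : hi ≤ f b) :
    ∃ a' b', BlackPath ξ (T ∩ {v | lo ≤ f v ∧ f v ≤ hi}) a' b' ∧
      f a' < lo + k ∧ hi - k < f b' := by
  obtain ⟨a', b', h', hab⟩ := PathIn.exists_crossing_subpath triAdj_symm hf hk hw h ha hb
  exact ⟨a', b', by rwa [BlackPath, Set.inter_right_comm], hab⟩

theorem joined_of_cross (hF : BlackPath ξ S a b) (hG : BlackPath ξ T c d)
    (hleft : ∀ v ∈ T, v.2 = a.2 → a.1 - 1 ≤ v.1) (hright : ∀ v ∈ T, v.2 = b.2 → v.1 ≤ b.1 + 1)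
    (hup : ∀ v ∈ S, c.2 < v.2 → v.1 - c.1 ≠ v.2 - c.2)
    (hup_a : c.2 < a.2 → a.1 < c.1 + (a.2 - c.2)) (hup_b : c.2 < b.2 → c.1 + (b.2 - c.2) < b.1)
    (hdown : ∀ v ∈ S, v.2 < d.2 → v.1 ≠ d.1)
    (hdown_a : a.2 < d.2 → a.1 < d.1) (hdown_b : b.2 < d.2 → d.1 < b.1) :
    BlackPath ξ (S ∪ T) a c := by
  rw [BlackPath, Set.union_inter_distrib_right]
  exact PathIn.joined_of_cross hF hG (fun v hv => hleft v hv.1) (fun v hv => hright v hv.1)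
    (fun v hv => hup v hv.1) hup_a hup_b (fun v hv => hdown v hv.1) hdown_a hdown_b

theorem joined_of_cross_para {x₀ x₁ : ℤ} (hF : BlackPath ξ S a b) (hG : BlackPath ξ T c d)
    (hS : ∀ v ∈ S, y₀ ≤ v.2 ∧ v.2 ≤ y₁) (hT : ∀ v ∈ T, x₀ ≤ v.1 ∧ v.1 ≤ x₁)
    (ha : a.1 ≤ x₀) (hb : x₁ ≤ b.1) (hc : y₁ ≤ c.2) (hd : d.2 ≤ y₀) :
    BlackPath ξ (S ∪ T) a c := by
  have haS := hS a hF.left_mem.1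
  have hbS := hS b hF.right_mem.1
  refine hF.joined_of_cross hG (fun v hv _ => ?_) (fun v hv _ => ?_) (fun v hv _ => ?_)
    (by omega) (by omega) (fun v hv _ => ?_) (by omega) (by omega)
  · have := hT v hv
    omega
  · have := hT v hv
    omega
  · have := hS v hv
    omega
  · have := hS v hv
    omega

theorem joined_of_cross_slab (hF : BlackPath ξ S a b) (hG : BlackPath ξ T c d)
    (hS : ∀ v ∈ S, y₀ ≤ v.2 ∧ v.2 ≤ y₁) (hT : ∀ v ∈ T, l ≤ X v ∧ X v ≤ r)
    (ha : X a ≤ l + 2) (hb : r - 2 ≤ X b) (hc : y₁ ≤ c.2) (hd : d.2 ≤ y₀) :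
    BlackPath ξ (S ∪ T) a c := by
  have haS := hS a hF.left_mem.1
  have hbS := hS b hF.right_mem.1
  simp only [X] at ha hb hT
  refine hF.joined_of_cross hG (fun v hv _ => ?_) (fun v hv _ => ?_) (fun v hv _ => ?_)
    (by omega) (by omega) (fun v hv _ => ?_) (by omega) (by omega)
  · have := hT v hv
    omega
  · have := hT v hv
    omega
  · have := hS v hv
    omega
  · have := hS v hv
    omega

end BlackPath

theorem joinEvent_mono {A A' B B' : Set V} (hST : S ⊆ T) (hA : A ⊆ A') (hB : B ⊆ B') :
    joinEvent S A B ⊆ joinEvent T A' B' :=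
  fun _ ⟨a, ha, b, hb, h⟩ => ⟨a, hA ha, b, hB hb, h.mono hST⟩

theorem leftRight_subset_gated : leftRight l r y₀ y₁ ⊆ gated l r y₀ y₁ y₀ y₁ :=
  joinEvent_mono (fun _ hv => ⟨hv, fun _ => hv.2.2⟩) subset_rfl subset_rfl

theorem gated_mono {lo hi lo' hi' : ℤ} (hlo : lo' ≤ lo) (hhi : hi ≤ hi') :
    gated l r y₀ y₁ lo hi ⊆ gated l r y₀ y₁ lo' hi' :=
  joinEvent_mono (Set.inter_subset_inter_right _ fun _ hv hr =>
    ⟨hlo.trans (hv hr).1, (hv hr).2.trans hhi⟩) subset_rfl subset_rfl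

theorem exists_gated_singleton {lo hi : ℤ} (h : ξ ∈ gated l r y₀ y₁ lo hi) :
    ∃ y, lo ≤ y ∧ y ≤ hi ∧ ξ ∈ gated l r y₀ y₁ y y := by
  obtain ⟨a, ha, b, hb, hab⟩ := h
  obtain ⟨d, ⟨⟨⟨hdT, hgate⟩, hdξ⟩, hd⟩, had⟩ := PathIn.exists_first_entry hab hb
  refine ⟨d.2, (hgate hd).1, (hgate hd).2, a, ha, d, hd, PathIn.mono ?_ had⟩
  rintro v (rfl | ⟨⟨⟨hvT, -⟩, hvξ⟩, hv⟩)
  · exact ⟨⟨hdT, fun _ => ⟨le_rfl, le_rfl⟩⟩, hdξ⟩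
  · exact ⟨⟨hvT, fun h => absurd h hv⟩, hvξ⟩

theorem paraUpDown_glue {x₀ x₁ z₀ z₁ : ℤ} (h₀ : ξ ∈ paraUpDown x₀ x₁ y₀ y₁)
    (hz : ξ ∈ paraLeftRight x₀ x₁ z₀ z₁) (h₁ : ξ ∈ paraUpDown x₀ x₁ y₀' y₁')
    (h01 : y₀ ≤ y₀') (hy : y₁ ≤ y₁') (hz₀ : y₀' ≤ z₀) (hz₁ : z₁ ≤ y₁) :
    ξ ∈ paraUpDown x₀ x₁ y₀ y₁' := by
  obtain ⟨c, rfl, d, rfl, hcd⟩ := h₀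
  obtain ⟨a, rfl, b, rfl, hab⟩ := hz
  obtain ⟨c', rfl, d', rfl, hcd'⟩ := h₁
  have hac := hab.joined_of_cross_para hcd (fun v hv => hv.2.2) (fun v hv => ⟨hv.1, hv.2.1⟩)
    le_rfl le_rfl hz₁ (h01.trans hz₀)
  have hac' := hab.joined_of_cross_para hcd' (fun v hv => hv.2.2) (fun v hv => ⟨hv.1, hv.2.1⟩)
    le_rfl le_rfl (hz₁.trans hy) hz₀
  have hsub {z z' : ℤ} (hz : d.2 ≤ z) (hz' : z' ≤ c'.2) :
      Para a.1 b.1 z z' ⊆ Para a.1 b.1 d.2 c'.2 :=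
    fun v hv => ⟨hv.1, hv.2.1, hz.trans hv.2.2.1, hv.2.2.2.trans hz'⟩
  have hsubz := hsub (h01.trans hz₀) (hz₁.trans hy)
  refine ⟨c', rfl, d, rfl, (hac'.mono (Set.union_subset hsubz (hsub h01 le_rfl))).symm.trans ?_⟩
  exact (hac.mono (Set.union_subset hsubz (hsub le_rfl hy))).trans (hcd.mono (hsub le_rfl hy))

theorem Slab_subset_Slab (hl : l' ≤ l) (hr : r ≤ r') (hy₀ : y₀' ≤ y₀) (hy₁ : y₁ ≤ y₁') :
    Slab l r y₀ y₁ ⊆ Slab l' r' y₀' y₁' :=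
  fun _ hv => ⟨hl.trans hv.1, hv.2.1.trans hr, hy₀.trans hv.2.2.1, hv.2.2.2.trans hy₁⟩

theorem BlackPath.joined_of_cross_top {y : ℤ} (hab : BlackPath ξ (Slab l r y y₁) a b)
    (hcd : BlackPath ξ (Slab l r y₀ y₁) c d) (ha : X a ≤ l + 2) (hb : r - 2 ≤ X b)
    (hc : c.2 = y₁) (hd : d.2 = y₀) (hy : y₀ ≤ y) (hyy : y ≤ y₁) :
    BlackPath ξ (Slab l r y₀ y₁) a c := by
  obtain ⟨d', c', hdc', hd', hc'⟩ := PathIn.exists_crossing_subpath (f := Prod.snd) (lo := y)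
    (hi := y₁) triAdj_symm snd_le_of_adj one_pos (by omega) hcd.symm.in_component (by omega) hc.ge
  have hsub : Slab l r y y₁ ⊆ Slab l r y₀ y₁ := Slab_subset_Slab le_rfl le_rfl hy le_rfl
  have hcd' : BlackPath ξ (Slab l r y y₁) c' d' := BlackPath.symm <| PathIn.mono
    (fun v hv => ⟨⟨hv.1.right_mem.1.1, hv.1.right_mem.1.2.1, hv.2⟩, hv.1.right_mem.2⟩) hdc'
  have hac' := hab.joined_of_cross_slab hcd' (fun v hv => hv.2.2) (fun v hv => ⟨hv.1, hv.2.1⟩)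
    ha hb (by omega) (by omega)
  have hdc' : BlackPath ξ (Slab l r y₀ y₁) d c' := hdc'.right_mem.1
  exact (hac'.mono (Set.union_subset hsub hsub)).trans (hdc'.symm.trans hcd.symm)

/-- The new crossing is linked to the old one by the path through its lower gate, which must cross
the part of the old component below the upper gate. -/
theorem upDown_stack {y m m' : ℤ} (hold : ξ ∈ upDown l r y₀ y₁)
    (hupper : ξ ∈ gated (l + 1) (r - 1) y y₁ m y₁) (hnew : ξ ∈ upDown l r y₀' y₁')
    (hlower : ξ ∈ gated (l + 1) (r - 1) y₀' y₁' y₀' m')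
    (hm : m' ≤ m) (hy : y₀ ≤ y) (hy' : y₀ ≤ y₀') (hy₁ : y₁ ≤ y₁') (hlr : l + 4 ≤ r) :
    ξ ∈ upDown l r y₀ y₁' := by
  obtain ⟨c, hc, d, hd, hcd⟩ := hold
  obtain ⟨a, ha, b, hb, hab⟩ := hupper
  obtain ⟨c', hc', d', hd', hcd'⟩ := hnew
  obtain ⟨a', ha', b', hb', hab'⟩ := hlower
  have hb₂ := hab.right_mem.1.2 hb
  have hb₂' := hab'.right_mem.1.2 hb'
  simp only [Set.mem_ofPred_eq] at ha ha' hb hb' hc hc' hd hd'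
  have hshrink {z z' : ℤ} : Slab (l + 1) (r - 1) z z' ⊆ Slab l r z z' :=
    Slab_subset_Slab (by omega) (by omega) le_rfl le_rfl
  have hab_slab : BlackPath ξ (Slab l r y y₁) a b := hab.mono (Set.inter_subset_left.trans hshrink)
  have hbd : BlackPath ξ (Slab l r y₀ y₁) b d :=
    (hab_slab.symm.mono (Slab_subset_Slab le_rfl le_rfl hy le_rfl)).trans
      ((hab_slab.joined_of_cross_top hcd (by omega) (by omega) hc hd hy
        (hab.left_mem.1.1.2.2.1.trans hab.left_mem.1.1.2.2.2)).trans hcd)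
  have ha'c' := (hab'.mono (Set.inter_subset_left.trans hshrink)).joined_of_cross_top hcd'
    (by omega) (by omega) hc' hd' le_rfl (hab'.left_mem.1.1.2.2.1.trans hab'.left_mem.1.1.2.2.2)
  have ha'b := hab'.joined_of_cross hbd
    (fun v hv _ => by have := hv.1; simp only [X] at *; omega)
    (fun v hv _ => by have := hv.2.1; simp only [X] at *; omega)
    (fun v hv _ _ => by have := hv.2; simp only [X, Set.mem_ofPred_eq] at *; omega)
    (fun _ => by simp only [X] at *; omega) (fun _ => by omega)
    (fun v hv _ _ => by have := hv.1.2.2.1; omega)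
    (fun _ => by have := hab'.left_mem.1.1.2.2.1; omega) (fun _ => by omega)
  have hnew_sub : Slab l r y₀' y₁' ⊆ Slab l r y₀ y₁' := Slab_subset_Slab le_rfl le_rfl hy' le_rfl
  have hold_sub : Slab l r y₀ y₁ ⊆ Slab l r y₀ y₁' := Slab_subset_Slab le_rfl le_rfl le_rfl hy₁
  refine ⟨c', hc', d, hd, (ha'c'.mono hnew_sub).symm.trans ((ha'b.mono ?_).trans
    (hbd.mono hold_sub))⟩
  exact Set.union_subset (Set.inter_subset_left.trans (hshrink.trans hnew_sub)) hold_sub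

/-- Both horizontal crossings meet the same vertical crossing. -/
theorem leftRight_append {l'' r'' : ℤ} (h₀ : ξ ∈ leftRight l r y₀ y₁)
    (hv : ξ ∈ upDown l' r' y₀ y₁) (h₁ : ξ ∈ leftRight l'' r'' y₀ y₁)
    (hl : l ≤ l') (hr : r' ≤ r + 1) (hl' : l'' ≤ l' + 1) (hr' : r' ≤ r'') (hll : l ≤ l'')
    (hrr : r ≤ r'') : ξ ∈ leftRight l r'' y₀ y₁ := by
  obtain ⟨a, ha, b, hb, hab⟩ := h₀
  obtain ⟨c, hc, d, hd, hcd⟩ := hv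
  obtain ⟨a', ha', b', hb', hab'⟩ := h₁
  simp only [Set.mem_ofPred_eq] at ha hb ha' hb' hc hd
  have hac := hab.joined_of_cross_slab hcd (fun v hv => hv.2.2) (fun v hv => ⟨hv.1, hv.2.1⟩)
    (by omega) (by omega) hc.ge hd.le
  have ha'c := hab'.joined_of_cross_slab hcd (fun v hv => hv.2.2) (fun v hv => ⟨hv.1, hv.2.1⟩)
    (by omega) (by omega) hc.ge hd.le
  have hsub : Slab l r y₀ y₁ ⊆ Slab l r'' y₀ y₁ := Slab_subset_Slab le_rfl hrr le_rfl le_rfl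
  have hsub' : Slab l' r' y₀ y₁ ⊆ Slab l r'' y₀ y₁ := Slab_subset_Slab hl hr' le_rfl le_rfl
  have hsub'' : Slab l'' r'' y₀ y₁ ⊆ Slab l r'' y₀ y₁ := Slab_subset_Slab hll le_rfl le_rfl le_rfl
  exact ⟨a, ha, b', hb', (hac.mono (Set.union_subset hsub hsub')).trans
    ((ha'c.mono (Set.union_subset hsub'' hsub')).symm.trans (hab'.mono hsub''))⟩

/-- The two gates of the small box force its vertical crossing to meet the big crossing, which ends
between them. -/
theorem exists_blackPath_of_gates {lo hi lo' hi' : ℤ} (hbig : ξ ∈ gated l r y₀ y₁ lo hi)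
    (hcd : BlackPath ξ (Slab (l' - 1) (r' + 1) y₀' y₁') c d) (hc : c.2 = y₁') (hd : d.2 = y₀')
    (hupper : ξ ∈ gated l' r' y₀' y₁' hi' y₁') (hlower : ξ ∈ gated l' r' y₀' y₁' y₀' lo')
    (hlo : lo' ≤ lo) (hhi : hi ≤ hi') (hrr' : r - 1 ≤ r') (hr'r : r' ≤ r) (hll : l ≤ l')
    (hlr : l + 2 ≤ r') :
    ∃ a, X a ≤ l + 1 ∧ BlackPath ξ (Slab l r y₀ y₁ ∪ Slab (l' - 1) (r' + 1) y₀' y₁') a c := by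
  obtain ⟨a, ha, b, hb, hab⟩ := hbig
  obtain ⟨au, hau, bu, hbu, hu⟩ := hupper
  obtain ⟨al, hal, bl, hbl, hl⟩ := hlower
  have hb₂ := hab.right_mem.1.2 hb
  have hbu₂ := hu.right_mem.1.2 hbu
  have hbl₂ := hl.right_mem.1.2 hbl
  simp only [Set.mem_ofPred_eq] at ha hb hau hbu hal hbl
  have hsub : Slab l' r' y₀' y₁' ⊆ Slab (l' - 1) (r' + 1) y₀' y₁' :=
    Slab_subset_Slab (by omega) (by omega) le_rfl le_rfl
  have hu := hu.mono (Set.inter_subset_left.trans hsub)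
  have hl := hl.mono (Set.inter_subset_left.trans hsub)
  have hyy := hcd.left_mem.1.2.2.1
  have hbuc := hu.symm.trans
    (hu.joined_of_cross_top hcd (by omega) (by omega) hc hd le_rfl (by omega))
  have hblc := hl.symm.trans
    (hl.joined_of_cross_top hcd (by omega) (by omega) hc hd le_rfl (by omega))
  have habu := hab.joined_of_cross (hbuc.trans hblc.symm)
    (fun v hv _ => by have := hv.1; simp only [X] at *; omega)
    (fun v hv _ => by have := hv.2.1; simp only [X] at *; omega)
    (fun v hv _ _ => by have := hv.2; simp only [X, Set.mem_ofPred_eq] at *; omega)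
    (fun _ => by simp only [X] at *; omega) (fun _ => by omega)
    (fun v hv _ _ => by have := hv.2; simp only [X, Set.mem_ofPred_eq] at *; omega)
    (fun _ => by simp only [X] at *; omega) (fun _ => by omega)
  exact ⟨a, ha, (habu.mono (Set.union_subset_union_left _ Set.inter_subset_left)).trans
    (hbuc.mono Set.subset_union_right)⟩

end Gluing

section Automorphisms

/-- Translation by `p`. -/
def translation (p : V) : TriAdj ≃r TriAdj where
  toEquiv := Equiv.addRight p
  map_rel_iff' := by
    intro u v
    simp [triAdj_iff]

/-- Reflection of the embedded lattice in the vertical line `X = c`. -/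
def mirror (c : ℤ) : TriAdj ≃r TriAdj where
  toFun v := (c - v.1 + v.2, v.2)
  invFun v := (c - v.1 + v.2, v.2)
  left_inv v := Prod.ext (by ring) rfl
  right_inv v := Prod.ext (by ring) rfl
  map_rel_iff' := by
    intro u v
    simp only [triAdj_iff, Equiv.coe_fn_mk]
    omega

/-- Reflection of the embedded lattice in the row `y = 0`. -/
def rowFlip : TriAdj ≃r TriAdj where
  toFun v := (v.1 - v.2, -v.2)
  invFun v := (v.1 - v.2, -v.2)
  left_inv v := Prod.ext (by ring) (neg_neg _)
  right_inv v := Prod.ext (by ring) (neg_neg _)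
  map_rel_iff' := by
    intro u v
    simp only [triAdj_iff, Equiv.coe_fn_mk]
    omega

/-- Exchange of the two coordinates. -/
def coordSwap : TriAdj ≃r TriAdj where
  toEquiv := Equiv.prodComm ℤ ℤ
  map_rel_iff' := by
    intro u v
    simp only [triAdj_iff, Equiv.prodComm_apply, Prod.fst_swap, Prod.snd_swap]
    omega

@[simp] theorem translation_apply (p v : V) : translation p v = v + p := rfl

@[simp] theorem mirror_apply (c : ℤ) (v : V) : mirror c v = (c - v.1 + v.2, v.2) := rfl

@[simp] theorem rowFlip_apply (v : V) : rowFlip v = (v.1 - v.2, -v.2) := rfl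

@[simp] theorem coordSwap_apply (v : V) : coordSwap v = (v.2, v.1) := rfl

theorem X_mirror (c : ℤ) (v : V) : X (mirror c v) = 2 * c - X v := by
  simp only [X, mirror_apply]
  ring

theorem mirror_mirror (c : ℤ) (v : V) : mirror c (mirror c v) = v :=
  (mirror c).left_inv v

variable {ξ : ColourCfg} {S T A A' B B' : Set V}

theorem joinEvent_symm : joinEvent T A B = joinEvent T B A :=
  Set.ext fun _ => ⟨fun ⟨a, ha, b, hb, h⟩ => ⟨b, hb, a, ha, h.symm⟩,
    fun ⟨a, ha, b, hb, h⟩ => ⟨b, hb, a, ha, h.symm⟩⟩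

theorem mem_joinEvent_of_comp_mem (g : TriAdj ≃r TriAdj) (hST : Set.MapsTo g S T)
    (hA : Set.MapsTo g A A') (hB : Set.MapsTo g B B') (h : ξ ∘ g ∈ joinEvent S A B) :
    ξ ∈ joinEvent T A' B' := by
  obtain ⟨a, ha, b, hb, hab⟩ := h
  exact ⟨g a, hA ha, g b, hB hb, hab.comap (fun _ _ => g.map_rel_iff.2) hST⟩

/-- There is a black crossing of the wide box ending between `lo` and `hi`, and black crossings of
the box of width `2 * w'` centred on `X = c` which end above `hi` and below `lo` respectively. -/
def archGates (w y₀ y₁ c w' y₀' y₁' lo hi : ℤ) : Set ColourCfg :=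
  gated (-w) w y₀ y₁ lo hi ∩
    (gated (c - w') (c + w') y₀' y₁' hi y₁' ∩ gated (c - w') (c + w') y₀' y₁' y₀' lo)

/-- The wide crossing and its mirror image in `X = c` both join the vertical crossing of the small
box. -/
theorem leftRight_of_archGates {w y₀ y₁ c w' y₀' y₁' lo hi : ℤ}
    (hv : ξ ∈ upDown (c - w' - 1) (c + w' + 1) y₀' y₁')
    (h : ξ ∈ archGates w y₀ y₁ c w' y₀' y₁' lo hi)
    (h' : ξ ∘ mirror c ∈ archGates w y₀ y₁ c w' y₀' y₁' lo hi)
    (hcw : w - 1 ≤ c + w') (hcw' : c + w' ≤ w) (hll : -w ≤ c - w') (hw : -w + 2 ≤ c + w')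
    (hww : 2 * w' + 5 ≤ 4 * w) (hy₀ : y₀ ≤ y₀') (hy₁ : y₁' ≤ y₁) :
    ξ ∈ leftRight (1 - w) (3 * w - 2 * w' - 3) y₀ y₁ := by
  obtain ⟨u, hu, d, hd, hud⟩ := hv
  have hpath {ζ : ColourCfg} {u d : V} (hu : u.2 = y₁') (hd : d.2 = y₀')
      (hud : BlackPath ζ (Slab (c - w' - 1) (c + w' + 1) y₀' y₁') u d)
      (hζ : ζ ∈ archGates w y₀ y₁ c w' y₀' y₁' lo hi) :
      ∃ a, X a ≤ -w + 1 ∧ BlackPath ζ {v | y₀ ≤ v.2 ∧ v.2 ≤ y₁} a u := by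
    obtain ⟨a, ha, hau⟩ := exists_blackPath_of_gates hζ.1 hud hu hd hζ.2.1 hζ.2.2 le_rfl le_rfl
      hcw hcw' hll hw
    exact ⟨a, ha, hau.mono (Set.union_subset (fun v hv => hv.2.2)
      fun v hv => ⟨hy₀.trans hv.2.2.1, hv.2.2.2.trans hy₁⟩)⟩
  obtain ⟨a, ha, hau⟩ := hpath hu hd hud h
  have hud' : BlackPath (ξ ∘ mirror c) (Slab (c - w' - 1) (c + w' + 1) y₀' y₁')
      (mirror c u) (mirror c d) := by
    refine BlackPath.comap (fun _ _ => (mirror c).map_rel_iff.2) (fun v hv => ?_)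
      (S := Slab (c - w' - 1) (c + w' + 1) y₀' y₁') ?_
    · have := X_mirror c v
      simp only [Slab, Set.mem_ofPred_eq, mirror_apply] at hv this ⊢
      omega
    · have : (ξ ∘ mirror c) ∘ mirror c = ξ := funext fun v => congrArg ξ (mirror_mirror c v)
      rwa [this]
  obtain ⟨e, he, heu⟩ := hpath (by simpa using hu) (by simpa using hd) hud' h'
  have heu' : BlackPath ξ {v | y₀ ≤ v.2 ∧ v.2 ≤ y₁} (mirror c e) u := by
    have := heu.comap (fun _ _ => (mirror c).map_rel_iff.2) (T := {v | y₀ ≤ v.2 ∧ v.2 ≤ y₁})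
      fun v hv => by simpa using hv
    rwa [mirror_mirror] at this
  have := X_mirror c e
  obtain ⟨a', e', hae, ha', he'⟩ := (hau.trans heu'.symm).exists_crossing_subpath (k := 2)
    X_le_of_adj two_pos (lo := 1 - w) (hi := 3 * w - 2 * w' - 3) (by omega) (by omega) (by omega)
  exact ⟨a', by simp only [Set.mem_ofPred_eq]; omega, e', by simp only [Set.mem_ofPred_eq]; omega,
    hae.mono fun v hv => ⟨hv.2.1, hv.2.2, hv.1⟩⟩

end Automorphisms

/-! ### Symmetric positively associated colourings -/

section Law

variable {T A B A' B' : Set V} {C D : Set ColourCfg}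

/-- Events which are increasing and determined by the colours of finitely many vertices. -/
structure IsLocalIncreasing {W : Type*} (C : Set (W → Bool)) : Prop where
  isUpperSet : IsUpperSet C
  exists_dependsOn : ∃ Λ : Finset W, DependsOn (· ∈ C) (Λ : Set W)

theorem IsLocalIncreasing.inter {W : Type*} {C D : Set (W → Bool)} (hC : IsLocalIncreasing C)
    (hD : IsLocalIncreasing D) : IsLocalIncreasing (C ∩ D) := by
  classical
  obtain ⟨Λ, hΛ⟩ := hC.exists_dependsOn
  obtain ⟨Λ', hΛ'⟩ := hD.exists_dependsOn
  refine ⟨hC.isUpperSet.inter hD.isUpperSet, Λ ∪ Λ', fun ξ ζ h => ?_⟩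
  exact congrArg₂ And (hΛ fun v hv => h v (by simp_all)) (hΛ' fun v hv => h v (by simp_all))

theorem IsLocalIncreasing.preimage_comp (hC : IsLocalIncreasing C) (g : V → V) :
    IsLocalIncreasing ((· ∘ g) ⁻¹' C) := by
  classical
  obtain ⟨Λ, hΛ⟩ := hC.exists_dependsOn
  refine ⟨fun ξ ζ h hξ => hC.isUpperSet (fun v => h (g v)) hξ, Λ.image g, fun ξ ζ h => ?_⟩
  exact hΛ fun v hv => h (g v) (Finset.mem_image_of_mem g hv)

theorem isLocalIncreasing_joinEvent (hT : T.Finite) (A B : Set V) :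
    IsLocalIncreasing (joinEvent T A B) := by
  refine ⟨fun ξ ζ h ⟨a, ha, b, hb, hab⟩ => ⟨a, ha, b, hb, PathIn.mono ?_ hab⟩, hT.toFinset, ?_⟩
  · exact Set.inter_subset_inter_right _ fun v hv => le_antisymm le_top (hv.symm.le.trans (h v))
  · intro ξ ζ h
    have : T ∩ {v | ξ v = true} = T ∩ {v | ζ v = true} := by
      ext v
      refine and_congr_right fun hv => ?_
      simp [h v (by simpa using hv)]
    simp only [joinEvent, BlackPath, Set.mem_ofPred_eq, this]

theorem finite_Para (x₀ x₁ y₀ y₁ : ℤ) : (Para x₀ x₁ y₀ y₁).Finite :=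
  (Set.finite_Icc ((x₀, y₀) : ℤ × ℤ) (x₁, y₁)).subset
    fun _ hv => ⟨⟨hv.1, hv.2.2.1⟩, hv.2.1, hv.2.2.2⟩

theorem finite_Slab (l r y₀ y₁ : ℤ) : (Slab l r y₀ y₁).Finite := by
  refine (finite_Para ((l + y₀) / 2) ((r + y₁) / 2) y₀ y₁).subset fun v hv => ?_
  simp only [Slab, X, Set.mem_ofPred_eq] at hv
  exact ⟨by omega, by omega, hv.2.2⟩

theorem isLocalIncreasing_upDown (l r y₀ y₁ : ℤ) : IsLocalIncreasing (upDown l r y₀ y₁) :=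
  isLocalIncreasing_joinEvent (finite_Slab _ _ _ _) _ _

theorem isLocalIncreasing_leftRight (l r y₀ y₁ : ℤ) : IsLocalIncreasing (leftRight l r y₀ y₁) :=
  isLocalIncreasing_joinEvent (finite_Slab _ _ _ _) _ _

theorem isLocalIncreasing_gated (l r y₀ y₁ lo hi : ℤ) :
    IsLocalIncreasing (gated l r y₀ y₁ lo hi) :=
  isLocalIncreasing_joinEvent ((finite_Slab _ _ _ _).inter_of_left _) _ _

theorem isLocalIncreasing_paraUpDown (x₀ x₁ y₀ y₁ : ℤ) :
    IsLocalIncreasing (paraUpDown x₀ x₁ y₀ y₁) :=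
  isLocalIncreasing_joinEvent (finite_Para _ _ _ _) _ _

theorem isLocalIncreasing_paraLeftRight (x₀ x₁ y₀ y₁ : ℤ) :
    IsLocalIncreasing (paraLeftRight x₀ x₁ y₀ y₁) :=
  isLocalIncreasing_joinEvent (finite_Para _ _ _ _) _ _

/-- Laws of random colourings which are positively associated, invariant under the automorphisms of
`𝕋`, and invariant under the exchange of the two colours. -/
class IsSymmetricAssociated (μ : Measure ColourCfg) : Prop extends IsProbabilityMeasure μ where
  mul_le_real_inter : ∀ C D, IsLocalIncreasing C → IsLocalIncreasing D →
    μ.real C * μ.real D ≤ μ.real (C ∩ D)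
  real_preimage_comp : ∀ (g : TriAdj ≃r TriAdj) C, IsLocalIncreasing C →
    μ.real ((· ∘ g) ⁻¹' C) = μ.real C
  real_preimage_not : ∀ C, IsLocalIncreasing C → μ.real ((fun ξ v => !ξ v) ⁻¹' C) = μ.real C

variable {μ : Measure ColourCfg} [IsSymmetricAssociated μ] {l r y₀ y₁ l' r' y₀' y₁' : ℤ}

open IsSymmetricAssociated

theorem IsLocalIncreasing.mul_le_real_inter {x y : ℝ} (hC : IsLocalIncreasing C)
    (hD : IsLocalIncreasing D) (hx : x ≤ μ.real C) (hy : y ≤ μ.real D) (hy₀ : 0 ≤ y) :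
    x * y ≤ μ.real (C ∩ D) :=
  (mul_le_mul hx hy hy₀ measureReal_nonneg).trans
    (IsSymmetricAssociated.mul_le_real_inter C D hC hD)

variable (μ) in
theorem real_joinEvent_le (g : TriAdj ≃r TriAdj) {S : Set V} (hS : S.Finite)
    (hST : Set.MapsTo g S T) (hA : Set.MapsTo g A A') (hB : Set.MapsTo g B B') :
    μ.real (joinEvent S A B) ≤ μ.real (joinEvent T A' B') :=
  (real_preimage_comp g _ (isLocalIncreasing_joinEvent hS A B)).symm.le.trans
    (measureReal_mono fun _ => mem_joinEvent_of_comp_mem g hST hA hB)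

variable (μ) in
theorem real_upDown_le_of_translation (p : V) (hl : l' = l + X p) (hr : r' = r + X p)
    (h₀ : y₀' = y₀ + p.2) (h₁ : y₁' = y₁ + p.2) :
    μ.real (upDown l r y₀ y₁) ≤ μ.real (upDown l' r' y₀' y₁') := by
  refine real_joinEvent_le μ (translation p) (finite_Slab _ _ _ _) ?_ ?_ ?_ <;> intro v hv <;>
    simp only [Slab, X, Set.mem_ofPred_eq, translation_apply, Prod.fst_add, Prod.snd_add] at * <;>
    omega

variable (μ) in
theorem real_leftRight_le_of_translation (p : V) (hl : l' = l + X p) (hr : r' = r + X p)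
    (h₀ : y₀' = y₀ + p.2) (h₁ : y₁' = y₁ + p.2) :
    μ.real (leftRight l r y₀ y₁) ≤ μ.real (leftRight l' r' y₀' y₁') := by
  refine real_joinEvent_le μ (translation p) (finite_Slab _ _ _ _) ?_ ?_ ?_ <;> intro v hv <;>
    simp only [Slab, X, Set.mem_ofPred_eq, translation_apply, Prod.fst_add, Prod.snd_add] at * <;>
    omega

variable (μ) in
theorem real_gated_le_of_translation {lo hi lo' hi' : ℤ} (p : V) (hl : l' = l + X p)
    (hr : r' = r + X p) (h₀ : y₀' = y₀ + p.2) (h₁ : y₁' = y₁ + p.2) (hlo : lo' = lo + p.2)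
    (hhi : hi' = hi + p.2) :
    μ.real (gated l r y₀ y₁ lo hi) ≤ μ.real (gated l' r' y₀' y₁' lo' hi') := by
  refine real_joinEvent_le μ (translation p) ((finite_Slab _ _ _ _).inter_of_left _) ?_ ?_ ?_ <;>
    intro v hv <;> simp only [Slab, X, Set.mem_inter_iff, Set.mem_ofPred_eq, translation_apply,
      Prod.fst_add, Prod.snd_add] at * <;> omega

variable (μ) in
theorem real_gated_le_of_rowFlip (lo hi : ℤ) :
    μ.real (gated l r y₀ y₁ lo hi) ≤ μ.real (gated l r (-y₁) (-y₀) (-hi) (-lo)) := by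
  refine real_joinEvent_le μ rowFlip ((finite_Slab _ _ _ _).inter_of_left _) ?_ ?_ ?_ <;>
    intro v hv <;> simp only [Slab, X, Set.mem_inter_iff, Set.mem_ofPred_eq, rowFlip_apply] at * <;>
    omega

end Law

section Duality

open IsSymmetricAssociated

variable {μ : Measure ColourCfg} [IsSymmetricAssociated μ] {C D : Set ColourCfg}
  {x₀ x₁ y₀ y₁ : ℤ}

variable (μ) in
theorem one_le_real_add_of_duality (hD : IsLocalIncreasing D)
    (h : ∀ ξ : ColourCfg, ξ ∈ C ∨ (fun v => !ξ v) ∈ D) : 1 ≤ μ.real C + μ.real D := by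
  rw [← real_preimage_not D hD]
  calc (1 : ℝ) = μ.real Set.univ := probReal_univ.symm
    _ ≤ μ.real (C ∪ (fun ξ v => !ξ v) ⁻¹' D) := measureReal_mono fun ξ _ => h ξ
    _ ≤ _ := measureReal_union_le _ _

theorem paraLeftRight_or_not_paraUpDown (hx : x₀ ≤ x₁) (hy : y₀ ≤ y₁) (ξ : ColourCfg) :
    ξ ∈ paraLeftRight x₀ x₁ y₀ y₁ ∨ (fun v => !ξ v) ∈ paraUpDown x₀ x₁ y₀ y₁ := by
  refine (exists_path_or_exists_path_compl {v | ξ v = true} hx hy).imp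
    (fun ⟨a, b, hab, ha, hb⟩ => ⟨a, ha, b, hb, hab⟩) fun ⟨c, d, hcd, hc, hd⟩ =>
    ⟨c, hc, d, hd, hcd.mono fun v hv => ⟨hv.1, by simpa using hv.2⟩⟩

theorem leftRight_or_not_upDown {w h : ℤ} (hw : 1 ≤ w) (hh : 0 ≤ h) (ξ : ColourCfg) :
    ξ ∈ leftRight (-w) w (-h) h ∨ (fun v => !ξ v) ∈ upDown (-w) w (-h) h := by
  rcases exists_path_or_exists_path_compl (x₀ := -(w + h)) (x₁ := w + h) (y₀ := -h) (y₁ := h)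
    ({v | ξ v = true} ∪ {v | X v < -w ∨ w < X v}) (by omega) (by omega) with
    ⟨a, b, hab, ha, hb⟩ | ⟨c, d, hcd, hc, hd⟩
  · have haP := hab.left_mem.1
    have hbP := hab.right_mem.1
    obtain ⟨a', b', hab', ha', hb'⟩ := hab.exists_crossing_subpath (k := 2) (lo := -w) (hi := w)
      triAdj_symm X_le_of_adj two_pos (by omega)
      (by simp only [X, Para, Set.mem_ofPred_eq] at *; omega)
      (by simp only [X, Para, Set.mem_ofPred_eq] at *; omega)
    refine .inl ⟨a', Int.le_of_lt_add_one (by omega), b', Int.le_of_lt_add_one (by omega),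
      PathIn.mono ?_ hab'⟩
    exact fun v ⟨⟨hP, hB⟩, hX⟩ => ⟨⟨hX.1, hX.2, hP.2.2⟩, hB.resolve_right fun hX' =>
      hX'.elim hX.1.not_gt hX.2.not_gt⟩
  · refine .inr ⟨c, hc, d, hd, PathIn.mono ?_ hcd⟩
    rintro v ⟨hP, hB⟩
    simp only [Set.mem_compl_iff, Set.mem_union, Set.mem_ofPred_eq, not_or, not_lt] at hB
    exact ⟨⟨hB.2.1, hB.2.2, hP.2.2⟩, by simpa using hB.1⟩

variable (μ) in
theorem real_paraUpDown_le_of_translation {x₀' x₁' y₀' y₁' : ℤ} (p : V) (hx₀ : x₀' = x₀ + p.1)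
    (hx₁ : x₁' = x₁ + p.1) (hy₀ : y₀' = y₀ + p.2) (hy₁ : y₁' = y₁ + p.2) :
    μ.real (paraUpDown x₀ x₁ y₀ y₁) ≤ μ.real (paraUpDown x₀' x₁' y₀' y₁') := by
  refine real_joinEvent_le μ (translation p) (finite_Para _ _ _ _) ?_ ?_ ?_ <;> intro v hv <;>
    simp only [Para, Set.mem_ofPred_eq, translation_apply, Prod.fst_add, Prod.snd_add] at * <;>
    omega

variable (μ) in
theorem real_paraLeftRight_le_of_coordSwap :
    μ.real (paraLeftRight x₀ x₁ y₀ y₁) ≤ μ.real (paraUpDown y₀ y₁ x₀ x₁) := by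
  rw [paraUpDown, joinEvent_symm]
  refine real_joinEvent_le μ coordSwap (finite_Para _ _ _ _) ?_ ?_ ?_ <;> intro v hv <;>
    simp only [Para, Set.mem_ofPred_eq, coordSwap_apply] at * <;> omega

variable (μ) in
theorem real_paraUpDown_le_of_coordSwap :
    μ.real (paraUpDown x₀ x₁ y₀ y₁) ≤ μ.real (paraLeftRight y₀ y₁ x₀ x₁) := by
  rw [paraUpDown, joinEvent_symm]
  refine real_joinEvent_le μ coordSwap (finite_Para _ _ _ _) ?_ ?_ ?_ <;> intro v hv <;>
    simp only [Para, Set.mem_ofPred_eq, coordSwap_apply] at * <;> omega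

variable (μ) in
theorem half_le_real_paraLeftRight (hx : x₀ ≤ x₁) (h : x₁ - x₀ = y₁ - y₀) :
    1 / 2 ≤ μ.real (paraLeftRight x₀ x₁ y₀ y₁) := by
  have hdual := one_le_real_add_of_duality μ (isLocalIncreasing_paraUpDown x₀ x₁ y₀ y₁)
    (paraLeftRight_or_not_paraUpDown hx (by omega))
  have hswap := (real_paraUpDown_le_of_translation μ (x₀ := x₀) (x₁ := x₁) (y₀ := y₀) (y₁ := y₁)
    (y₀ - x₀, x₀ - y₀) (x₀' := y₀) (x₁' := y₁) (y₀' := x₀) (y₁' := x₁) (by simp)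
    (by simp; omega) (by simp) (by simp; omega)).trans
    (real_paraUpDown_le_of_coordSwap μ)
  linarith

variable (μ) in
theorem one_le_real_leftRight_add_upDown {w h : ℤ} (hw : 1 ≤ w) (hh : 0 ≤ h) :
    1 ≤ μ.real (leftRight (-w) w (-h) h) + μ.real (upDown (-w) w (-h) h) :=
  one_le_real_add_of_duality μ (isLocalIncreasing_upDown _ _ _ _) (leftRight_or_not_upDown hw hh)

end Duality

/-! ### Box crossings at comparable scales -/

section Gates

variable {μ : Measure ColourCfg} [IsFiniteMeasure μ] {l r y₀ y₁ : ℤ}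

theorem exists_last {p : ℤ → Prop} {a b : ℤ} (hab : a ≤ b) (ha : p a) (hb : ¬ p b) :
    ∃ w, a ≤ w ∧ w < b ∧ p w ∧ ¬ p (w + 1) := by
  by_contra! hstep
  suffices ∀ m, a ≤ m → m ≤ b → p m from hb (this b hab le_rfl)
  intro m ham
  induction m, ham using Int.leInduction with
  | base => exact fun _ => ha
  | succ m ham ih => exact fun hm => hstep m ham (by omega) (ih (by omega))

theorem real_gated_le_add (lo m hi : ℤ) :
    μ.real (gated l r y₀ y₁ lo hi) ≤
      μ.real (gated l r y₀ y₁ lo m) + μ.real (gated l r y₀ y₁ (m + 1) hi) := by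
  refine (measureReal_mono fun ξ hξ => ?_).trans (measureReal_union_le _ _)
  obtain ⟨y, hlo, hhi, hy⟩ := exists_gated_singleton hξ
  rcases lt_or_ge m y with hm | hm
  · exact .inr (gated_mono (by omega) hhi hy)
  · exact .inl (gated_mono hlo hm hy)

theorem gated_eq_empty {lo hi : ℤ} (h : hi < lo) : gated l r y₀ y₁ lo hi = ∅ :=
  Set.eq_empty_of_forall_notMem fun _ hξ => by
    obtain ⟨y, hlo, hhi, -⟩ := exists_gated_singleton hξ
    omega

theorem gated_subset_biUnion {α s : ℤ} {K : ℕ} (hs : 0 ≤ s) (hK : α < K * (s + 1)) :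
    gated l r y₀ y₁ 0 α ⊆ ⋃ i ∈ Finset.range K,
      gated l r y₀ y₁ (min (i * (s + 1)) α) (min (i * (s + 1)) α + s) := by
  intro ξ hξ
  obtain ⟨y, hy₀, hyα, hy⟩ := exists_gated_singleton hξ
  have hle := Int.ediv_mul_le y (b := s + 1) (by omega)
  have hlt := Int.lt_ediv_add_one_mul_self y (b := s + 1) (by omega)
  have hq : 0 ≤ y / (s + 1) := Int.ediv_nonneg hy₀ (by omega)
  lift y / (s + 1) to ℕ using hq with q
  have hqK : q < K := by
    exact_mod_cast lt_of_mul_lt_mul_right ((hle.trans hyα).trans_lt hK) (by omega)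
  refine Set.mem_biUnion (Finset.mem_range.2 hqK) ?_
  rw [min_eq_left (hle.trans hyα)]
  exact gated_mono hle (by linarith) hy

theorem exists_real_gated_le_mul {α s : ℤ} {K : ℕ} (hα : 0 ≤ α) (hs : 0 ≤ s)
    (hK : α < K * (s + 1)) : ∃ j, 0 ≤ j ∧ j ≤ α ∧
      μ.real (gated l r y₀ y₁ 0 α) ≤ K * μ.real (gated l r y₀ y₁ j (j + s)) := by
  have hK₀ : 0 < K := Nat.pos_of_ne_zero (by rintro rfl; omega)
  let j : ℕ → ℤ := fun i => min (i * (s + 1)) α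
  obtain ⟨i, -, hi⟩ := Finset.exists_le_of_sum_le (s := Finset.range K)
    (f := fun _ => μ.real (gated l r y₀ y₁ 0 α) / K)
    (g := fun i => μ.real (gated l r y₀ y₁ (j i) (j i + s))) ⟨0, Finset.mem_range.2 hK₀⟩ (by
      rw [Finset.sum_const, Finset.card_range, nsmul_eq_mul, mul_div_cancel₀ _ (by positivity)]
      exact (measureReal_mono (gated_subset_biUnion hs hK) (measure_ne_top _ _)).trans
        (measureReal_biUnion_finset_le _ _))
  refine ⟨j i, le_min (by positivity) hα, min_le_right _ _, ?_⟩
  rwa [div_le_iff₀' (by positivity)] at hi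

end Gates

section CriticalScale

variable {μ : Measure ColourCfg} [IsSymmetricAssociated μ] {l r : ℤ}

/-- At height `2 * h`, the half-width at which left-right crossings cease to have probability `1/2`
lies between `w` and `w + 1`, and `α` is a median of the height at which crossings of half-width `w`
end, up to constants. -/
structure CriticalScale (μ : Measure ColourCfg) (h w α : ℤ) : Prop where
  le_width : h ≤ w + 1
  width_lt : w < 8 * h
  gate_nonneg : 0 ≤ α
  gate_le : α ≤ h
  half_le_upDown : 1 / 2 ≤ μ.real (upDown (-w - 1) (w + 1) (-h) h)
  upper_gate : 1 / 8 ≤ μ.real (gated (-w) w (-h) h α h)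
  middle_gate : 1 / 8 ≤ μ.real (gated (-w) w (-h) h 0 α)

theorem CriticalScale.lower_gate {h w α : ℤ} (hs : CriticalScale μ h w α) :
    1 / 8 ≤ μ.real (gated (-w) w (-h) h (-h) (-α)) := by
  simpa using hs.upper_gate.trans (real_gated_le_of_rowFlip μ α h)

variable (μ) in
theorem half_le_real_leftRight {h : ℤ} (hh : 2 ≤ h) :
    1 / 2 ≤ μ.real (leftRight (-(h - 1)) (h - 1) (-h) h) := by
  refine (half_le_real_paraLeftRight μ (x₀ := -h) (x₁ := h) (y₀ := -h) (y₁ := h) (by omega)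
    rfl).trans (measureReal_mono ?_)
  rintro ξ ⟨a, ha, b, hb, hab⟩
  have haT := hab.left_mem.1
  have hbT := hab.right_mem.1
  simp only [Para, Set.mem_ofPred_eq] at ha hb haT hbT
  obtain ⟨a', b', hab', ha', hb'⟩ := hab.exists_crossing_subpath (lo := -(h - 1)) (hi := h - 1)
    X_le_of_adj two_pos (by omega) (by simp only [X]; omega) (by simp only [X]; omega)
  exact ⟨a', Int.le_of_lt_add_one (by omega), b', by simp only [Set.mem_ofPred_eq]; omega,
    hab'.mono fun v hv => ⟨hv.2.1, hv.2.2, hv.1.2.2⟩⟩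

theorem leftRight_subset_paraLeftRight {h x₀ x₁ : ℤ} (hx : x₀ ≤ x₁) (hl : l + h ≤ 2 * x₀)
    (hr : 2 * x₁ + h ≤ r) : leftRight l r (-h) h ⊆ paraLeftRight x₀ x₁ (-h) h := by
  rintro ξ ⟨a, ha, b, hb, hab⟩
  have haT := hab.left_mem.1
  have hbT := hab.right_mem.1
  simp only [Slab, X, Set.mem_ofPred_eq] at ha hb haT hbT
  obtain ⟨a', b', hab', ha', hb'⟩ := hab.exists_crossing_subpath (lo := x₀) (hi := x₁)
    fst_le_of_adj one_pos (by omega) (by omega) (by omega)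
  have ha'T := hab'.left_mem.1.2
  have hb'T := hab'.right_mem.1.2
  simp only [Set.mem_ofPred_eq] at ha'T hb'T
  exact ⟨a', by simp only [Set.mem_ofPred_eq]; omega, b', by simp only [Set.mem_ofPred_eq]; omega,
    hab'.mono fun v hv => ⟨hv.2.1, hv.2.2, hv.1.2.2⟩⟩

variable (μ) in
theorem real_leftRight_le_real_paraUpDown {h x : ℤ} (hh : 0 ≤ h) (hl : l + h ≤ 2 * x)
    (hr : 2 * x + 13 * h ≤ r) :
    μ.real (leftRight l r (-h) h) ≤ μ.real (paraUpDown 0 (2 * h) 0 (3 * (2 * h))) :=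
  calc μ.real (leftRight l r (-h) h)
    _ ≤ μ.real (paraLeftRight x (x + 6 * h) (-h) h) :=
      measureReal_mono (leftRight_subset_paraLeftRight (by omega) hl (by omega))
    _ ≤ μ.real (paraUpDown (-h) h x (x + 6 * h)) := real_paraLeftRight_le_of_coordSwap μ
    _ ≤ _ := real_paraUpDown_le_of_translation μ (h, -x) (by simp) (by simp; ring) (by simp)
      (by simp; ring)

variable (μ) in
theorem exists_criticalScale {h : ℤ} (hh : 2 ≤ h) :
    1 / 2 ≤ μ.real (paraUpDown 0 (2 * h) 0 (3 * (2 * h))) ∨ ∃ w α, CriticalScale μ h w α := by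
  by_cases hwide : 1 / 2 ≤ μ.real (leftRight (-(8 * h)) (8 * h) (-h) h)
  · exact .inl (hwide.trans (real_leftRight_le_real_paraUpDown μ (x := -(3 * h)) (by omega)
      (by omega) (by omega)))
  obtain ⟨w, hw, hw', hleft, hnot⟩ := exists_last
    (p := fun w => 1 / 2 ≤ μ.real (leftRight (-w) w (-h) h)) (by omega)
    (half_le_real_leftRight μ hh) hwide
  have hup : 1 / 2 ≤ μ.real (upDown (-w - 1) (w + 1) (-h) h) := by
    have := one_le_real_leftRight_add_upDown μ (w := w + 1) (h := h) (by omega) (by omega)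
    rw [← neg_add']
    linarith
  have hgate : 1 / 4 ≤ μ.real (gated (-w) w (-h) h 0 h) := by
    have hall := measureReal_mono (μ := μ)
      (leftRight_subset_gated (l := -w) (r := w) (y₀ := -h) (y₁ := h))
    have hsplit := real_gated_le_add (μ := μ) (l := -w) (r := w) (y₀ := -h) (y₁ := h) (-h) 0 h
    have hflip := real_gated_le_of_rowFlip μ (l := -w) (r := w) (y₀ := -h) (y₁ := h) (-h) 0
    have hmono : μ.real (gated (-w) w (-h) h 1 h) ≤ μ.real (gated (-w) w (-h) h 0 h) :=
      measureReal_mono (gated_mono zero_le_one le_rfl)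
    simp only [neg_neg, neg_zero, zero_add] at hsplit hflip
    linarith
  obtain ⟨α, hα, hα', hupper, hmiddle⟩ := exists_last
    (p := fun α => 1 / 8 ≤ μ.real (gated (-w) w (-h) h α h)) (a := 0) (b := h + 1) (by omega)
    (by linarith) (by rw [gated_eq_empty (by omega)]; norm_num)
  have hsplit := real_gated_le_add (μ := μ) (l := -w) (r := w) (y₀ := -h) (y₁ := h) 0 α h
  exact .inr ⟨w, α, by omega, hw', hα, by omega, hup, hupper, by linarith⟩

end CriticalScale

section RussoSeymourWelsh

variable {μ : Measure ColourCfg} [IsSymmetricAssociated μ] {x₀ y₀ y₁ l r : ℤ} {δ : ℝ}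

theorem mul_pow_le_real_paraUpDown {k : ℤ} (hk : 0 ≤ k) (hδ : 0 ≤ δ)
    (h : δ ≤ μ.real (paraUpDown x₀ (x₀ + 2 * k) y₀ (y₀ + 3 * k))) (m : ℕ) :
    δ * (1 / 2 * δ) ^ m ≤ μ.real (paraUpDown x₀ (x₀ + 2 * k) y₀ (y₀ + (m + 3) * k)) := by
  induction m with
  | zero => simpa using h
  | succ m ih =>
    have hhor : 1 / 2 ≤ μ.real
        (paraLeftRight x₀ (x₀ + 2 * k) (y₀ + (m + 1) * k) (y₀ + (m + 3) * k)) :=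
      half_le_real_paraLeftRight μ (by omega) (by ring)
    have hver : δ ≤ μ.real
        (paraUpDown x₀ (x₀ + 2 * k) (y₀ + (m + 1) * k) (y₀ + (m + 4) * k)) :=
      h.trans (real_paraUpDown_le_of_translation μ (0, (m + 1) * k) (by simp) (by simp)
        rfl (by simp; ring))
    have hlocal := isLocalIncreasing_paraUpDown x₀ (x₀ + 2 * k) (y₀ + (m + 1) * k)
      (y₀ + (m + 4) * k)
    have hrest := (isLocalIncreasing_paraLeftRight _ _ _ _).mul_le_real_inter hlocal hhor hver hδ
    have hinter := (isLocalIncreasing_paraUpDown _ _ _ _).mul_le_real_inter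
      ((isLocalIncreasing_paraLeftRight _ _ _ _).inter hlocal) ih hrest (by positivity)
    rw [pow_succ, ← mul_assoc]
    refine hinter.trans (measureReal_mono fun ξ ⟨h₀, hz, h₁⟩ => ?_)
    have hmk : 0 ≤ m * k := by positivity
    have := paraUpDown_glue h₀ hz h₁ (by linarith) (by linarith) le_rfl le_rfl
    push_cast
    convert this using 1
    ring_nf

theorem CriticalScale.mul_pow_le_real_upDown {h w α d : ℤ} (hs : CriticalScale μ h w α)
    (hw : 1 ≤ w) (hd : 0 ≤ d) (hdα : d ≤ α) (K : ℕ) :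
    1 / 2 * (1 / 8 * (1 / 2 * (1 / 8))) ^ K ≤
      μ.real (upDown (-w - 1) (w + 1) (-h) (h + K * (2 * d))) := by
  induction K with
  | zero => simpa using hs.half_le_upDown
  | succ K ih =>
    have hupper : 1 / 8 ≤ μ.real (gated (-w - 1 + 1) (w + 1 - 1) (-h + K * (2 * d))
        (h + K * (2 * d)) (α + K * (2 * d)) (h + K * (2 * d))) :=
      hs.upper_gate.trans (real_gated_le_of_translation μ (K * d, K * (2 * d)) (by simp [X]; ring)
        (by simp [X]; ring) rfl rfl rfl rfl)
    have hnew : 1 / 2 ≤ μ.real (upDown (-w - 1) (w + 1) (-h + (K + 1 : ℕ) * (2 * d))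
        (h + (K + 1 : ℕ) * (2 * d))) :=
      hs.half_le_upDown.trans (real_upDown_le_of_translation μ
        ((K + 1 : ℕ) * d, (K + 1 : ℕ) * (2 * d)) (by simp [X]; ring) (by simp [X]; ring) rfl rfl)
    have hlower : 1 / 8 ≤ μ.real (gated (-w - 1 + 1) (w + 1 - 1) (-h + (K + 1 : ℕ) * (2 * d))
        (h + (K + 1 : ℕ) * (2 * d)) (-h + (K + 1 : ℕ) * (2 * d)) (-α + (K + 1 : ℕ) * (2 * d))) :=
      hs.lower_gate.trans (real_gated_le_of_translation μ ((K + 1 : ℕ) * d, (K + 1 : ℕ) * (2 * d))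
        (by simp [X]; ring) (by simp [X]; ring) rfl rfl rfl rfl)
    have hlocal {l r y₀ y₁ lo hi : ℤ} := isLocalIncreasing_gated l r y₀ y₁ lo hi
    have hlocal' {l r y₀ y₁ : ℤ} := isLocalIncreasing_upDown l r y₀ y₁
    rw [pow_succ, ← mul_assoc]
    refine (hlocal'.mul_le_real_inter (hlocal.inter (hlocal'.inter hlocal)) ih
      (hlocal.mul_le_real_inter (hlocal'.inter hlocal) hupper
        (hlocal'.mul_le_real_inter hlocal hnew hlower (by norm_num)) (by norm_num))
      (by norm_num)).trans (measureReal_mono ?_)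
    rintro ξ ⟨hold, hup, hne, hlow⟩
    have hKd : 0 ≤ K * d := by positivity
    push_cast at *
    exact upDown_stack hold hup hne hlow (by linarith) (by linarith) (by linarith) (by linarith)
      (by omega)

theorem CriticalScale.le_real_paraUpDown_of_le_gate {g w α : ℤ} (hg : 1 ≤ g)
    (hs : CriticalScale μ (4 * g) w α) (hα : g ≤ α) :
    1 / 2 * (1 / 8 * (1 / 2 * (1 / 8))) ^ 92 * (1 / 2 *
        (1 / 2 * (1 / 8 * (1 / 2 * (1 / 8))) ^ 92)) ^ 3 ≤
      μ.real (paraUpDown 0 (128 * g) 0 (3 * (128 * g))) := by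
  have := hs.width_lt
  have := hs.le_width
  have htall : 1 / 2 * (1 / 8 * (1 / 2 * (1 / 8))) ^ 92 ≤ μ.real
      (paraUpDown (-18 * g) (-18 * g + 2 * (64 * g)) (-4 * g) (-4 * g + 3 * (64 * g))) := by
    refine (hs.mul_pow_le_real_upDown (by omega) (by omega) hα 92).trans
      (measureReal_mono (joinEvent_mono ?_ ?_ ?_)) <;> intro v hv <;>
      simp only [Slab, X, Para, Set.mem_ofPred_eq] at * <;> push_cast at * <;> omega
  refine (mul_pow_le_real_paraUpDown (by omega) (by positivity) htall 3).trans
    (real_paraUpDown_le_of_translation μ (18 * g, 4 * g) ?_ ?_ ?_ ?_) <;> push_cast <;> ring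

theorem CriticalScale.le_real_archGates {h w h' w' α' j : ℤ} (p : V)
    (hs' : CriticalScale μ h' w' α')
    (hj : 1 / 1024 ≤ μ.real (gated (-w) w (-h) h j (j + α'))) (hp : p.2 = j) :
    1 / 1024 * (1 / 8 * (1 / 8)) ≤
      μ.real (archGates w (-h) h (X p) w' (-h' + j) (h' + j) (-α' + j) (α' + j)) := by
  subst hp
  have hα' := hs'.gate_nonneg
  refine (isLocalIncreasing_gated _ _ _ _ _ _).mul_le_real_inter
    ((isLocalIncreasing_gated _ _ _ _ _ _).inter (isLocalIncreasing_gated _ _ _ _ _ _))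
    (hj.trans (measureReal_mono (gated_mono (by omega) (by omega))))
    ((isLocalIncreasing_gated _ _ _ _ _ _).mul_le_real_inter (isLocalIncreasing_gated _ _ _ _ _ _)
      ?_ ?_ (by norm_num)) (by norm_num)
  · exact hs'.upper_gate.trans
      (real_gated_le_of_translation μ p (by ring) (by ring) rfl rfl rfl rfl)
  · exact hs'.lower_gate.trans
      (real_gated_le_of_translation μ p (by ring) (by ring) rfl rfl rfl rfl)

theorem CriticalScale.le_real_leftRight {h w α w' α' : ℤ} (hs : CriticalScale μ (64 * h) w α)
    (hs' : CriticalScale μ h w' α') (hh : 1 ≤ h) (hα : α < 16 * h) (hαα : α < 128 * (α' + 1)) :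
    1 / 2 * (1 / 1024 * (1 / 8 * (1 / 8))) ^ 2 ≤
      μ.real (leftRight (1 - w) (3 * w - 2 * w' - 3) (-(64 * h)) (64 * h)) := by
  have := hs.le_width
  have := hs'.width_lt
  have := hs'.le_width
  obtain ⟨j, hj₀, hjα, hj⟩ := exists_real_gated_le_mul (μ := μ) (K := 128) (l := -w) (r := w)
    (y₀ := -(64 * h)) (y₁ := 64 * h) hs.gate_nonneg hs'.gate_nonneg (by exact_mod_cast hαα)
  replace hj : 1 / 1024 ≤ μ.real (gated (-w) w (-(64 * h)) (64 * h) j (j + α')) := by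
    have := hs.middle_gate
    push_cast at hj
    linarith
  obtain ⟨p, hpj, hpw, hpw'⟩ : ∃ p : V, p.2 = j ∧ w - w' - 1 ≤ X p ∧ X p ≤ w - w' :=
    ⟨((w - w' + j) / 2, j), rfl, by simp only [X]; omega, by simp only [X]; omega⟩
  have hgates := hs'.le_real_archGates p hj hpj
  have hlocal : IsLocalIncreasing
      (archGates w (-(64 * h)) (64 * h) (X p) w' (-h + j) (h + j) (-α' + j) (α' + j)) :=
    (isLocalIncreasing_gated _ _ _ _ _ _).inter
      ((isLocalIncreasing_gated _ _ _ _ _ _).inter (isLocalIncreasing_gated _ _ _ _ _ _))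
  have hgates' := hgates.trans
    (IsSymmetricAssociated.real_preimage_comp (μ := μ) (mirror (X p)) _ hlocal).ge
  have hvert : 1 / 2 ≤ μ.real (upDown (X p - w' - 1) (X p + w' + 1) (-h + j) (h + j)) :=
    hs'.half_le_upDown.trans (real_upDown_le_of_translation μ p (by ring) (by ring)
      (by rw [hpj]) (by rw [hpj]))
  rw [sq]
  refine ((isLocalIncreasing_upDown _ _ _ _).mul_le_real_inter
    (hlocal.inter (hlocal.preimage_comp _)) hvert
    (hlocal.mul_le_real_inter (hlocal.preimage_comp _) hgates hgates' (by norm_num))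
    (by norm_num)).trans (measureReal_mono ?_)
  rintro ξ ⟨hv, hg, hg'⟩
  exact leftRight_of_archGates hv hg hg' (by omega) (by omega) (by omega) (by omega) (by omega)
    (by omega) (by omega)

theorem mul_pow_le_real_leftRight {g w : ℤ} (hg : 1 ≤ g) (hδ : 0 ≤ δ)
    (hlong : δ ≤ μ.real (leftRight l r (-(2 * g)) (2 * g)))
    (hv : 1 / 2 ≤ μ.real (upDown (-w - 1) (w + 1) (-(2 * g)) (2 * g))) (hl : l ≤ 1 - w)
    (hr : 2 * g + w + 2 ≤ r) (K : ℕ) :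
    δ * (1 / 2 * δ) ^ K ≤ μ.real (leftRight l (r + K * (2 * g)) (-(2 * g)) (2 * g)) := by
  induction K with
  | zero => simpa using hlong
  | succ K ih =>
    set t : ℤ := (K + 1 : ℕ) * (2 * g) with ht
    have hup : 1 / 2 ≤ μ.real (upDown (-w - 1 + (t + 2)) (w + 1 + (t + 2)) (-(2 * g)) (2 * g)) :=
      hv.trans (real_upDown_le_of_translation μ ((K + 1 : ℕ) * g + 1, 0) (by simp [X, ht]; ring)
        (by simp [X, ht]; ring) (by simp) (by simp))
    have hnext : δ ≤ μ.real (leftRight (l + t) (r + t) (-(2 * g)) (2 * g)) :=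
      hlong.trans (real_leftRight_le_of_translation μ ((K + 1 : ℕ) * g, 0) (by simp [X, ht]; ring)
        (by simp [X, ht]; ring) (by simp) (by simp))
    have hlocal {l r y₀ y₁ : ℤ} := isLocalIncreasing_leftRight l r y₀ y₁
    have hlocal' {l r y₀ y₁ : ℤ} := isLocalIncreasing_upDown l r y₀ y₁
    rw [pow_succ, ← mul_assoc]
    refine (hlocal.mul_le_real_inter (hlocal'.inter hlocal) ih
      (hlocal'.mul_le_real_inter hlocal hup hnext hδ) (by positivity)).trans
      (measureReal_mono ?_)
    rintro ξ ⟨hE, hU, hN⟩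
    have htK : t = K * (2 * g) + 2 * g := by
      rw [ht]
      push_cast
      ring
    have hK : 0 ≤ K * (2 * g) := by positivity
    exact leftRight_append hE hU hN (by omega) (by omega) (by omega) (by omega) (by omega)
      (by omega)

theorem CriticalScale.le_real_paraUpDown_of_gate_lt {h w α w' α' : ℤ}
    (hs : CriticalScale μ (64 * h) w α) (hs' : CriticalScale μ h w' α') (hh : 1 ≤ h)
    (hα : α < 16 * h) (hαα : α < 128 * (α' + 1)) :
    1 / 2 * (1 / 1024 * (1 / 8 * (1 / 8))) ^ 2 *
        (1 / 2 * (1 / 2 * (1 / 1024 * (1 / 8 * (1 / 8))) ^ 2)) ^ 11 ≤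
      μ.real (paraUpDown 0 (128 * h) 0 (3 * (128 * h))) := by
  have hlong := hs.le_real_leftRight hs' hh hα hαα
  have hup := hs.half_le_upDown
  have := hs.le_width
  have := hs'.width_lt
  rw [show 64 * h = 2 * (32 * h) by ring] at hlong hup
  rw [show 128 * h = 2 * (2 * (32 * h)) by ring]
  exact (mul_pow_le_real_leftRight (by omega) (by positivity) hlong hup le_rfl (by omega) 11).trans
    (real_leftRight_le_real_paraUpDown μ (x := 1) (by omega) (by omega) (by push_cast; omega))

theorem not_forall_le_mul_pow_of_mul_lt {a : ℕ → ℤ} {C : ℕ} (ha : 0 ≤ a 0)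
    (hgrow : ∀ k, 128 * a k < a (k + 1)) : ¬ ∀ k, a k ≤ C * 64 ^ k := by
  intro hle
  have hpow (k : ℕ) : 128 ^ k ≤ a (k + 1) := by
    induction k with
    | zero => linarith [hgrow 0]
    | succ k ih => linarith [hgrow (k + 1), pow_succ (128 : ℤ) k]
  have h := (hpow (64 * C)).trans (hle (64 * C + 1))
  have hlt : ((64 * C : ℕ) : ℤ) < 2 ^ (64 * C) := by exact_mod_cast Nat.lt_two_pow_self
  rw [show (128 : ℤ) = 2 * 64 by norm_num, mul_pow, pow_succ, mul_left_comm, mul_comm] at h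
  push_cast at hlt
  have h64 : (0 : ℤ) < 64 ^ (64 * C) := by positivity
  nlinarith

variable (μ) in
theorem exists_forall_exists_le_real_paraUpDown :
    ∃ c > 0, ∀ N : ℤ, ∃ n ≥ N, c ≤ μ.real (paraUpDown 0 n 0 (3 * n)) := by
  obtain ⟨c, hc, hc₁, hc₂, hc₃⟩ : ∃ c : ℝ, 0 < c ∧ c ≤ 1 / 2 ∧
      c ≤ 1 / 2 * (1 / 8 * (1 / 2 * (1 / 8))) ^ 92 * (1 / 2 *
        (1 / 2 * (1 / 8 * (1 / 2 * (1 / 8))) ^ 92)) ^ 3 ∧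
      c ≤ 1 / 2 * (1 / 1024 * (1 / 8 * (1 / 8))) ^ 2 *
        (1 / 2 * (1 / 2 * (1 / 1024 * (1 / 8 * (1 / 8))) ^ 2)) ^ 11 :=
    ⟨min (1 / 2) (min _ _), by positivity, min_le_left _ _,
      (min_le_right _ _).trans (min_le_left _ _), (min_le_right _ _).trans (min_le_right _ _)⟩
  refine ⟨c, hc, ?_⟩
  by_contra! hcon
  obtain ⟨N, hN⟩ := hcon
  obtain ⟨k₀, hk₀⟩ := pow_unbounded_of_one_lt (max N 4) (by norm_num : (1 : ℤ) < 64)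
  have hscale (k : ℕ) : max N 4 ≤ 64 ^ (k₀ + k) :=
    hk₀.le.trans (pow_le_pow_right₀ (by norm_num) (Nat.le_add_right _ _))
  have hcrit (k : ℕ) : ∃ w α, CriticalScale μ (64 ^ (k₀ + k)) w α := by
    have := hscale k
    exact (exists_criticalScale μ (by omega)).resolve_left fun h =>
      (hN _ (by omega)).not_ge (hc₁.trans h)
  choose w α hs using hcrit
  have hstep (k : ℕ) : CriticalScale μ (64 * 64 ^ (k₀ + k)) (w (k + 1)) (α (k + 1)) := by
    rw [← pow_succ', add_assoc]
    exact hs (k + 1)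
  refine not_forall_le_mul_pow_of_mul_lt (a := α) (C := 64 ^ k₀) (hs 0).gate_nonneg (fun k => ?_)
    fun k => by
      have := (hs k).gate_le
      rw [pow_add] at this
      exact_mod_cast this
  by_contra! hle
  have hk := hscale k
  rcases lt_or_ge (α (k + 1)) (16 * 64 ^ (k₀ + k)) with hlt | hge
  · exact (hN _ (by omega)).not_ge (hc₃.trans
      ((hstep k).le_real_paraUpDown_of_gate_lt (hs k) (by omega) hlt (by omega)))
  · have h := hstep k
    rw [show (64 : ℤ) * 64 ^ (k₀ + k) = 4 * (16 * 64 ^ (k₀ + k)) by ring] at h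
    exact (hN _ (by omega)).not_ge (hc₂.trans (h.le_real_paraUpDown_of_le_gate (by omega) hge))

end RussoSeymourWelsh

/-! ### Positive association on a finite graph -/

section PositiveAssociation

open Finset
open scoped BigOperators

variable {ι W : Type*} [DecidableEq ι]

/-- The mean of `φ S` when `S` is a random subset of `D` which contains each `e` independently with
probability `q e`. -/
def bernoulliMean (q : ι → ℝ) (D : Finset ι) (φ : Finset ι → ℝ) : ℝ :=
  ∑ S ∈ D.powerset, (∏ e ∈ D, if e ∈ S then q e else 1 - q e) * φ S

theorem bernoulliMean_insert (q : ι → ℝ) {D : Finset ι} {e : ι} (he : e ∉ D)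
    (φ : Finset ι → ℝ) :
    bernoulliMean q (insert e D) φ =
      q e * bernoulliMean q D (fun S => φ (insert e S)) + (1 - q e) * bernoulliMean q D φ := by
  simp only [bernoulliMean, sum_powerset_insert he, mul_sum, prod_insert he]
  rw [add_comm]
  refine congrArg₂ (· + ·) (sum_congr rfl fun S _ => ?_) (sum_congr rfl fun S hS => ?_)
  · have : ∀ e' ∈ D, (if e' ∈ insert e S then q e' else 1 - q e') =
        if e' ∈ S then q e' else 1 - q e' := fun e' he' => by
      simp [mem_insert, ne_of_mem_of_not_mem he' he]
    rw [prod_congr rfl this, if_pos (mem_insert_self e S), mul_assoc]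
  · rw [if_neg fun h => he (mem_powerset.1 hS h), mul_assoc]

theorem bernoulliMean_congr (q : ι → ℝ) {D : Finset ι} {φ ψ : Finset ι → ℝ}
    (h : ∀ S ⊆ D, φ S = ψ S) : bernoulliMean q D φ = bernoulliMean q D ψ :=
  sum_congr rfl fun S hS => by rw [h S (mem_powerset.1 hS)]

theorem bernoulliMean_mono {q : ι → ℝ} (hq : ∀ e, q e ∈ Set.Icc 0 1) {D : Finset ι}
    {φ ψ : Finset ι → ℝ} (h : ∀ S ⊆ D, φ S ≤ ψ S) :
    bernoulliMean q D φ ≤ bernoulliMean q D ψ :=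
  sum_le_sum fun S hS => mul_le_mul_of_nonneg_left (h S (mem_powerset.1 hS)) <|
    prod_nonneg fun e _ => by
      obtain ⟨h₀, h₁⟩ := hq e
      split_ifs <;> linarith

/-- Averages `L` for which any two increasing observables are nonnegatively correlated. -/
def PositivelyAssociated {α : Type*} [Preorder α] (L : (α → ℝ) → ℝ) : Prop :=
  ∀ f g, Monotone f → Monotone g → L f * L g ≤ L (f * g)

/-- The covariance of a mixture is the mixture of the covariances plus
`a * (1 - a) * (L₁ f - L₂ f) * (L₁ g - L₂ g)`. -/
theorem PositivelyAssociated.mix {α : Type*} [Preorder α] {L₁ L₂ : (α → ℝ) → ℝ} {a : ℝ}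
    (h₁ : PositivelyAssociated L₁) (h₂ : PositivelyAssociated L₂) (ha : a ∈ Set.Icc 0 1)
    (h : (∀ f, Monotone f → L₁ f ≤ L₂ f) ∨ ∀ f, Monotone f → L₂ f ≤ L₁ f) :
    PositivelyAssociated fun f => a * L₁ f + (1 - a) * L₂ f := by
  intro f g hf hg
  obtain ⟨ha₀, ha₁⟩ := ha
  have hcross : 0 ≤ (L₁ f - L₂ f) * (L₁ g - L₂ g) := by
    rcases h with h | h
    · exact mul_nonneg_of_nonpos_of_nonpos (sub_nonpos.2 (h f hf)) (sub_nonpos.2 (h g hg))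
    · exact mul_nonneg (sub_nonneg.2 (h f hf)) (sub_nonneg.2 (h g hg))
  have := mul_nonneg (mul_nonneg ha₀ (sub_nonneg.2 ha₁)) hcross
  have := mul_le_mul_of_nonneg_left (h₁ f g hf hg) ha₀
  have := mul_le_mul_of_nonneg_left (h₂ f g hf hg) (sub_nonneg.2 ha₁)
  simp only
  linarith

theorem finite_setOf_eq_off (U : Finset W) (ζ : W → Bool) :
    {ξ : W → Bool | ∀ v ∉ U, ξ v = ζ v}.Finite := by
  classical
  refine (U.powerset.finite_toSet.image
    fun T v => if v ∈ U then decide (v ∈ T) else ζ v).subset fun ξ hξ =>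
      ⟨U.filter (ξ · = true), mem_coe.2 (mem_powerset.2 (filter_subset _ _)), funext fun v => ?_⟩
  by_cases hv : v ∈ U
  · simp [hv]
  · simp [hv, hξ v hv]

/-- The colourings which are constant along the edges in `S` and agree with `ζ` off `U`. -/
noncomputable def clusterColourings (S : Finset (Sym2 W)) (U : Finset W) (ζ : W → Bool) :
    Finset (W → Bool) :=
  ((finite_setOf_eq_off U ζ).inter_of_left {ξ | ∀ e ∈ S, (e.map ξ).IsDiag}).toFinset

variable {S D : Finset (Sym2 W)} {U : Finset W} {ζ ξ : W → Bool} {w a : W} {c : Bool}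

@[simp] theorem mem_clusterColourings :
    ξ ∈ clusterColourings S U ζ ↔ (∀ v ∉ U, ξ v = ζ v) ∧ ∀ e ∈ S, (e.map ξ).IsDiag := by
  simp [clusterColourings]

/-- The colours of the ends of the edges in `D` known so far are all equal to `c`. -/
def AgreesOnEnds (D : Finset (Sym2 W)) (U : Finset W) (ζ : W → Bool) (c : Bool) : Prop :=
  ∀ e ∈ D, ∀ v ∈ e, v ∉ U → ζ v = c

theorem AgreesOnEnds.mono (h : AgreesOnEnds D U ζ c) (hS : S ⊆ D) : AgreesOnEnds S U ζ c :=
  fun e he => h e (hS he)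

theorem AgreesOnEnds.nonempty_clusterColourings (h : AgreesOnEnds S U ζ c) :
    (clusterColourings S U ζ).Nonempty := by
  classical
  refine ⟨fun v => if v ∈ U then c else ζ v, mem_clusterColourings.2
    ⟨fun v hv => if_neg hv, fun e he => ?_⟩⟩
  have hc : ∀ v ∈ e, (if v ∈ U then c else ζ v) = c := fun v hv => by
    split_ifs with hvU
    · rfl
    · exact h e he v hv hvU
  induction e with
  | _ u v =>
    rw [Sym2.map_mk, Sym2.mk_isDiag_iff, hc u (Sym2.mem_mk_left u v), hc v (Sym2.mem_mk_right u v)]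

variable [DecidableEq W]

theorem mem_clusterColourings_update (hw : w ∈ U) :
    ξ ∈ clusterColourings S (U.erase w) (Function.update ζ w c) ↔
      ξ ∈ clusterColourings S U ζ ∧ ξ w = c := by
  simp only [mem_clusterColourings, mem_erase, not_and]
  constructor
  · rintro ⟨h, hS⟩
    refine ⟨⟨fun v hv => ?_, hS⟩, by simpa using h w⟩
    have hvw : v ≠ w := fun h => hv (h ▸ hw)
    simpa [hvw] using h v fun _ => hv
  · rintro ⟨⟨h, hS⟩, rfl⟩
    refine ⟨fun v hv => ?_, hS⟩
    by_cases hvw : v = w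
    · simp [hvw]
    · simpa [hvw] using h v (hv hvw)

theorem clusterColourings_insert_of_notMem (ha : a ∉ U) (hw : w ∉ U) (h : ζ a = ζ w) :
    clusterColourings (insert s(a, w) S) U ζ = clusterColourings S U ζ := by
  ext ξ
  simp only [mem_clusterColourings, forall_mem_insert, Sym2.map_mk, Sym2.mk_isDiag_iff]
  exact ⟨fun ⟨hU, _, hS⟩ => ⟨hU, hS⟩, fun ⟨hU, hS⟩ => ⟨hU, by rw [hU a ha, hU w hw, h], hS⟩⟩

theorem clusterColourings_insert_of_mem (ha : a ∉ U) (hw : w ∈ U) :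
    clusterColourings (insert s(a, w) S) U ζ =
      clusterColourings S (U.erase w) (Function.update ζ w (ζ a)) := by
  ext ξ
  rw [mem_clusterColourings_update hw]
  simp only [mem_clusterColourings, forall_mem_insert, Sym2.map_mk, Sym2.mk_isDiag_iff]
  exact ⟨fun ⟨hU, he, hS⟩ => ⟨⟨hU, hS⟩, by rw [← he, hU a ha]⟩,
    fun ⟨⟨hU, hS⟩, he⟩ => ⟨hU, by rw [he, hU a ha], hS⟩⟩

/-- The map `φ` flips the cluster of `w`. -/
theorem exists_clusterFlip
    (h : ∀ c, (clusterColourings S (U.erase w) (Function.update ζ w c)).Nonempty) (hw : w ∈ U) :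
    ∃ φ : (W → Bool) → W → Bool, φ.Involutive ∧
      (∀ c, ∀ ξ ∈ clusterColourings S (U.erase w) (Function.update ζ w c),
        φ ξ ∈ clusterColourings S (U.erase w) (Function.update ζ w !c)) ∧
      ∀ ξ ∈ clusterColourings S (U.erase w) (Function.update ζ w false), ξ ≤ φ ξ := by
  classical
  let K : Set W := {v | ∀ ξ : W → Bool, (∀ e ∈ S, (e.map ξ).IsDiag) → ξ v = ξ w}
  have hKS (u v : W) (he : s(u, v) ∈ S) : u ∈ K ↔ v ∈ K := by
    refine forall₂_congr fun ξ hξ => ?_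
    have : ξ u = ξ v := by simpa using hξ _ he
    rw [this]
  have hKU {v : W} (hv : v ∈ K) : v ∈ U := by
    by_contra hvU
    obtain ⟨ξ, hξ⟩ := h true
    obtain ⟨ξ', hξ'⟩ := h false
    simp only [mem_clusterColourings_update hw, mem_clusterColourings] at hξ hξ'
    have h₁ := hv ξ hξ.1.2
    have h₂ := hv ξ' hξ'.1.2
    rw [hξ.1.1 v hvU, hξ.2] at h₁
    rw [hξ'.1.1 v hvU, hξ'.2, h₁] at h₂
    exact absurd h₂ (by decide)
  refine ⟨fun ξ v => if v ∈ K then !ξ v else ξ v, fun ξ => funext fun v => ?_,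
    fun c ξ hξ => ?_, fun ξ hξ v => ?_⟩
  · by_cases hv : v ∈ K <;> simp [hv]
  · simp only [mem_clusterColourings_update hw, mem_clusterColourings] at hξ ⊢
    obtain ⟨⟨hU, hS⟩, rfl⟩ := hξ
    refine ⟨⟨fun v hv => by simp [mt hKU hv, hU v hv], fun e he => ?_⟩, if_pos fun _ _ => rfl⟩
    induction e with
    | _ u v =>
      have huv : ξ u = ξ v := by simpa using hS _ he
      simp [hKS u v he, huv]
  · simp only [mem_clusterColourings_update hw, mem_clusterColourings] at hξ
    by_cases hv : v ∈ K
    · simp [hv, hv ξ hξ.1.2, hξ.2]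
    · simp [hv]

theorem expect_clusterColourings_eq_add
    (h : ∀ c, (clusterColourings S (U.erase w) (Function.update ζ w c)).Nonempty) (hw : w ∈ U)
    (f : (W → Bool) → ℝ) :
    𝔼 ξ ∈ clusterColourings S U ζ, f ξ =
      1 / 2 * (𝔼 ξ ∈ clusterColourings S (U.erase w) (Function.update ζ w true), f ξ) +
        (1 - 1 / 2) *
          𝔼 ξ ∈ clusterColourings S (U.erase w) (Function.update ζ w false), f ξ := by
  classical
  obtain ⟨φ, hφ, hmem, -⟩ := exists_clusterFlip h hw
  set T := clusterColourings S (U.erase w) (Function.update ζ w true)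
  set F := clusterColourings S (U.erase w) (Function.update ζ w false)
  have hcard : #T = #F := card_nbij' φ φ (hmem true) (hmem false) (fun ξ _ => hφ ξ) fun ξ _ => hφ ξ
  have hunion : clusterColourings S U ζ = T ∪ F := by
    ext ξ
    rw [mem_union, mem_clusterColourings_update hw, mem_clusterColourings_update hw, ← and_or_left]
    simp
  have hdisj : Disjoint T F := disjoint_left.2 fun ξ hT hF => by
    rw [mem_clusterColourings_update hw] at hT hF
    exact absurd (hT.2.symm.trans hF.2) (by decide)
  have hF : (#F : ℝ) ≠ 0 := by exact_mod_cast (h false).card_pos.ne'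
  rw [hunion, expect_eq_sum_div_card, expect_eq_sum_div_card, expect_eq_sum_div_card,
    sum_union hdisj, card_union_of_disjoint hdisj, hcard]
  push_cast
  field_simp
  ring

theorem expect_clusterColourings_update_mono
    (h : ∀ c, (clusterColourings S (U.erase w) (Function.update ζ w c)).Nonempty) (hw : w ∈ U)
    {f : (W → Bool) → ℝ} (hf : Monotone f) :
    𝔼 ξ ∈ clusterColourings S (U.erase w) (Function.update ζ w false), f ξ ≤
      𝔼 ξ ∈ clusterColourings S (U.erase w) (Function.update ζ w true), f ξ := by
  obtain ⟨φ, hφ, hmem, hle⟩ := exists_clusterFlip h hw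
  calc _ ≤ 𝔼 ξ ∈ clusterColourings S (U.erase w) (Function.update ζ w false), f (φ ξ) :=
        expect_le_expect fun ξ hξ => hf (hle ξ hξ)
    _ = _ := expect_nbij' φ φ (hmem false) (hmem true) (fun ξ _ => hφ ξ) (fun ξ _ => hφ ξ)
        fun _ _ => rfl

theorem clusterColourings_eq_of_not_nonempty (hw : w ∈ U)
    (h : ¬ (clusterColourings S (U.erase w) (Function.update ζ w !c)).Nonempty) :
    clusterColourings S U ζ = clusterColourings S (U.erase w) (Function.update ζ w c) := by
  ext ξ
  rw [mem_clusterColourings_update hw, iff_self_and]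
  exact fun hξ => by_contra fun hc =>
    h ⟨ξ, (mem_clusterColourings_update hw).2 ⟨hξ, Bool.eq_not_of_ne hc⟩⟩

theorem expect_le_expect_update_true
    (h : (clusterColourings S (U.erase w) (Function.update ζ w true)).Nonempty) (hw : w ∈ U)
    {f : (W → Bool) → ℝ} (hf : Monotone f) :
    𝔼 ξ ∈ clusterColourings S U ζ, f ξ ≤
      𝔼 ξ ∈ clusterColourings S (U.erase w) (Function.update ζ w true), f ξ := by
  by_cases hother : (clusterColourings S (U.erase w) (Function.update ζ w !true)).Nonempty
  · have hboth (c : Bool) :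
        (clusterColourings S (U.erase w) (Function.update ζ w c)).Nonempty := by
      cases c <;> assumption
    have := expect_clusterColourings_update_mono hboth hw hf
    rw [expect_clusterColourings_eq_add hboth hw]
    linarith
  · rw [clusterColourings_eq_of_not_nonempty hw hother]

theorem expect_update_false_le_expect
    (h : (clusterColourings S (U.erase w) (Function.update ζ w false)).Nonempty) (hw : w ∈ U)
    {f : (W → Bool) → ℝ} (hf : Monotone f) :
    𝔼 ξ ∈ clusterColourings S (U.erase w) (Function.update ζ w false), f ξ ≤
      𝔼 ξ ∈ clusterColourings S U ζ, f ξ := by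
  by_cases hother : (clusterColourings S (U.erase w) (Function.update ζ w !false)).Nonempty
  · have hboth (c : Bool) :
        (clusterColourings S (U.erase w) (Function.update ζ w c)).Nonempty := by
      cases c <;> assumption
    have := expect_clusterColourings_update_mono hboth hw hf
    rw [expect_clusterColourings_eq_add hboth hw]
    linarith
  · rw [clusterColourings_eq_of_not_nonempty hw hother]

/-- The mean of `f` when the edges in `D` are open independently with probabilities `q`, the
vertices off `U` have the colours `ζ`, and the colouring is uniform among those which agree with
`ζ` off `U` and are constant on the open clusters. -/
noncomputable def clusterMean (q : Sym2 W → ℝ) (D : Finset (Sym2 W)) (U : Finset W)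
    (ζ : W → Bool) (f : (W → Bool) → ℝ) : ℝ :=
  bernoulliMean q D fun S => 𝔼 ξ ∈ clusterColourings S U ζ, f ξ

variable {q : Sym2 W → ℝ}

theorem clusterMean_insert_of_notMem (he : s(a, w) ∉ D) (ha : a ∉ U) (hw : w ∉ U)
    (h : ζ a = ζ w) : clusterMean q (insert s(a, w) D) U ζ = clusterMean q D U ζ := by
  ext f
  simp only [clusterMean, bernoulliMean_insert q he, clusterColourings_insert_of_notMem ha hw h]
  ring

theorem clusterMean_insert_of_mem (he : s(a, w) ∉ D) (ha : a ∉ U) (hw : w ∈ U) :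
    clusterMean q (insert s(a, w) D) U ζ = fun f =>
      q s(a, w) * clusterMean q D (U.erase w) (Function.update ζ w (ζ a)) f +
        (1 - q s(a, w)) * clusterMean q D U ζ f := by
  ext f
  simp only [clusterMean, bernoulliMean_insert q he, clusterColourings_insert_of_mem ha hw]

theorem AgreesOnEnds.update (h : AgreesOnEnds D U ζ c) (w : W) :
    AgreesOnEnds D (U.erase w) (Function.update ζ w c) c := by
  intro e he v hv hvU
  by_cases hvw : v = w
  · simp [hvw]
  · simpa [hvw] using h e he v hv fun hvU' => hvU (mem_erase.2 ⟨hvw, hvU'⟩)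

theorem AgreesOnEnds.clusterMean_update_comparable (hq : ∀ e, q e ∈ Set.Icc 0 1)
    (h : AgreesOnEnds D U ζ c) (hw : w ∈ U) :
    (∀ f, Monotone f →
      clusterMean q D (U.erase w) (Function.update ζ w c) f ≤ clusterMean q D U ζ f) ∨
    ∀ f, Monotone f →
      clusterMean q D U ζ f ≤ clusterMean q D (U.erase w) (Function.update ζ w c) f := by
  cases c
  · exact .inl fun f hf => bernoulliMean_mono hq fun S hS =>
      expect_update_false_le_expect (((h.mono hS).update w).nonempty_clusterColourings) hw hf
  · exact .inr fun f hf => bernoulliMean_mono hq fun S hS =>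
      expect_le_expect_update_true (((h.mono hS).update w).nonempty_clusterColourings) hw hf

theorem clusterMean_eq_add (h : ∀ c, AgreesOnEnds D U ζ c) (hw : w ∈ U) :
    clusterMean q D U ζ = fun f =>
      1 / 2 * clusterMean q D (U.erase w) (Function.update ζ w true) f +
        (1 - 1 / 2) * clusterMean q D (U.erase w) (Function.update ζ w false) f := by
  ext f
  rw [clusterMean, bernoulliMean_congr q fun S hS => expect_clusterColourings_eq_add
    (fun c => (((h c).mono hS).update w).nonempty_clusterColourings) hw f]
  simp only [clusterMean, bernoulliMean, mul_add, sum_add_distrib, mul_sum, mul_left_comm]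

theorem clusterMean_update_mono (hq : ∀ e, q e ∈ Set.Icc 0 1) (h : ∀ c, AgreesOnEnds D U ζ c)
    (hw : w ∈ U) {f : (W → Bool) → ℝ} (hf : Monotone f) :
    clusterMean q D (U.erase w) (Function.update ζ w false) f ≤
      clusterMean q D (U.erase w) (Function.update ζ w true) f :=
  bernoulliMean_mono hq fun _ hS => expect_clusterColourings_update_mono
    (fun c => (((h c).mono hS).update w).nonempty_clusterColourings) hw hf

theorem clusterMean_empty (f : (W → Bool) → ℝ) : clusterMean q ∅ ∅ ζ f = f ζ := by
  have : clusterColourings ∅ ∅ ζ = {ζ} := by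
    ext ξ
    simp [funext_iff]
  simp [clusterMean, bernoulliMean, this]

/-- The cluster of a vertex is explored edge by edge. Each open edge to a new vertex gives it the
colour `c` of the cluster, so the law after an open edge dominates the law after a closed one if
`c` is black, and is dominated by it if `c` is white. Once no edge leaves the explored vertices, a
new vertex receives a fair colour. -/
theorem AgreesOnEnds.positivelyAssociated (hq : ∀ e, q e ∈ Set.Icc 0 1)
    (h : AgreesOnEnds D U ζ c) : PositivelyAssociated (clusterMean q D U ζ) := by
  induction hn : #D + #U using Nat.strong_induction_on generalizing D U ζ c with
  | _ n ih =>
  subst hn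
  by_cases hD : ∃ a ∉ U, ∃ w, s(a, w) ∈ D
  · obtain ⟨a, ha, w, he⟩ := hD
    have hac := h _ he a (Sym2.mem_mk_left a w) ha
    have hcard := card_erase_lt_of_mem he
    have h' := h.mono (erase_subset s(a, w) D)
    have ih' := ih _ (Nat.add_lt_add_right hcard _) h' rfl
    rw [← insert_erase he]
    by_cases hw : w ∈ U
    · rw [clusterMean_insert_of_mem (notMem_erase _ _) ha hw, hac]
      exact (ih _ (add_lt_add_of_lt_of_le hcard (card_erase_le)) (h'.update w) rfl).mix ih' (hq _)
        (h'.clusterMean_update_comparable hq hw)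
    · rwa [clusterMean_insert_of_notMem (notMem_erase _ _) ha hw
        (hac.trans (h _ he w (Sym2.mem_mk_right a w) hw).symm)]
  · have hends (c : Bool) : AgreesOnEnds D U ζ c := fun e he v hv hvU =>
      absurd ⟨v, hvU, Sym2.Mem.other hv, (Sym2.other_spec hv).symm ▸ he⟩ hD
    obtain rfl | ⟨u, hu⟩ := U.eq_empty_or_nonempty
    · obtain rfl : D = ∅ := eq_empty_of_forall_notMem fun e => e.ind fun a w he =>
        hD ⟨a, notMem_empty a, w, he⟩
      exact fun f g _ _ => by simp [clusterMean_empty]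
    · rw [clusterMean_eq_add hends hu]
      have hlt := Nat.add_lt_add_left (card_erase_lt_of_mem hu) #D
      exact (ih _ hlt ((hends true).update u) rfl).mix (ih _ hlt ((hends false).update u) rfl)
        (by norm_num) (.inr fun f hf => clusterMean_update_mono hq hends hu hf)

theorem positivelyAssociated_clusterMean (hq : ∀ e, q e ∈ Set.Icc 0 1)
    (hU : ∀ e ∈ D, ∀ v ∈ e, v ∈ U) (ζ : W → Bool) :
    PositivelyAssociated (clusterMean q D U ζ) :=
  AgreesOnEnds.positivelyAssociated (c := true) hq fun e he v hv hvU => absurd (hU e he v hv) hvU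

end PositiveAssociation

/-! ### The uniform labels -/

section Labels

open Measure Set

theorem boolOf_eq_true {P : Prop} : boolOf P = true ↔ P :=
  @decide_eq_true_iff P (Classical.propDecidable P)

/-- The law of a fair coin. -/
noncomputable def coin : Measure Bool :=
  (2⁻¹ : ℝ≥0∞) • dirac false + (2⁻¹ : ℝ≥0∞) • dirac true

instance : IsProbabilityMeasure coin :=
  ⟨by simp [coin, ENNReal.inv_two_add_inv_two]⟩

theorem base_eq_restrict_Ico : base = volume.restrict (Ico 0 1) :=
  restrict_congr_set Ico_ae_eq_Ioc.symm

instance : IsProbabilityMeasure base :=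
  ⟨by simp [base]⟩

theorem base_preimage_half (c : ℝ) (A : Set ℝ) :
    base ((fun y => (y + c) / 2) ⁻¹' A) = 2 * volume (A ∩ Ico (c / 2) ((1 + c) / 2)) := by
  have : (fun y => (y + c) / 2) ⁻¹' A ∩ Ico 0 1 =
      (· + c) ⁻¹' ((· * (2 : ℝ)⁻¹) ⁻¹' (A ∩ Ico (c / 2) ((1 + c) / 2))) := by
    ext y
    simp only [mem_inter_iff, mem_preimage, mem_Ico, div_eq_mul_inv]
    refine and_congr_right fun _ => and_congr ?_ ?_ <;> constructor <;> intro h <;> linarith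
  rw [base_eq_restrict_Ico, restrict_apply' measurableSet_Ico, this, measure_preimage_add_right,
    Real.volume_preimage_mul_right (by norm_num)]
  simp

theorem base_eq_add (A : Set ℝ) :
    base A = 2⁻¹ * base ((fun y => (y + 0) / 2) ⁻¹' A) +
      2⁻¹ * base ((fun y => (y + 1) / 2) ⁻¹' A) := by
  have hlo : A ∩ Ico 0 1 ∩ Iio (1 / 2) = A ∩ Ico (0 / 2) ((1 + 0) / 2) := by
    ext x
    simp only [mem_inter_iff, mem_Ico, mem_Iio, and_assoc]
    grind
  have hhi : (A ∩ Ico 0 1) \ Iio (1 / 2) = A ∩ Ico (1 / 2) ((1 + 1) / 2) := by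
    ext x
    simp only [mem_inter_iff, mem_sdiff, mem_Ico, mem_Iio, and_assoc, not_lt]
    grind
  simp only [base_preimage_half, ← mul_assoc,
    ENNReal.inv_mul_cancel two_ne_zero ofNat_ne_top, one_mul]
  rw [← hlo, ← hhi, measure_inter_add_sdiff _ measurableSet_Iio, base_eq_restrict_Ico,
    restrict_apply' measurableSet_Ico]

@[fun_prop]
theorem measurable_bit (n : ℕ) : Measurable (bit n) :=
  (measurable_from_top (f := fun k : ℤ => boolOf (k % 2 = 1))).comp
    (Int.measurable_floor.comp (measurable_id.mul_const _))

theorem bit_succ_half (n : ℕ) (c : Bool) (y : ℝ) : bit (n + 1) ((y + c.toNat) / 2) = bit n y := by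
  have : (y + c.toNat) / 2 * 2 ^ (n + 1 + 1) = y * 2 ^ (n + 1) + (2 * (c.toNat * 2 ^ n) : ℤ) := by
    push_cast
    ring
  rw [bit, bit, this, Int.floor_add_intCast, Int.add_mul_emod_self_left]

theorem bit_zero_half (c : Bool) {y : ℝ} (hy : y ∈ Ico 0 1) : bit 0 ((y + c.toNat) / 2) = c := by
  have : ⌊(y + c.toNat) / 2 * 2 ^ (0 + 1)⌋ = c.toNat := by
    rw [Int.floor_eq_iff]
    push_cast
    constructor <;> linarith [hy.1, hy.2]
  rw [bit, this]
  cases c <;> simp [boolOf]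

theorem base_forall_lt_bit_mem (N : ℕ) (t : ℕ → Set Bool) :
    base {x | ∀ n < N, bit n x ∈ t n} = ∏ n ∈ Finset.range N, coin (t n) := by
  classical
  induction N generalizing t with
  | zero => simp
  | succ N ih =>
    have hpre (c : Bool) :
        base ((fun y => (y + c.toNat) / 2) ⁻¹' {x | ∀ n < N + 1, bit n x ∈ t n}) =
          (t 0).indicator 1 c * ∏ n ∈ Finset.range N, coin (t (n + 1)) := by
      have hae : (fun y => (y + c.toNat) / 2) ⁻¹' {x | ∀ n < N + 1, bit n x ∈ t n} =ᵐ[base]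
          ({y | c ∈ t 0 ∧ ∀ n < N, bit n y ∈ t (n + 1)} : Set ℝ) := by
        rw [base_eq_restrict_Ico, Filter.eventuallyEq_set]
        filter_upwards [ae_restrict_mem measurableSet_Ico] with y hy
        simp only [mem_preimage, mem_ofPred_eq, Nat.forall_lt_succ_left, bit_succ_half,
          bit_zero_half c hy]
      rw [measure_congr hae, ← ih fun n => t (n + 1)]
      by_cases hc : c ∈ t 0 <;> simp [hc]
    rw [base_eq_add, Finset.prod_range_succ']
    have h₀ := hpre false
    have h₁ := hpre true
    simp only [Bool.toNat_false, Bool.toNat_true, Nat.cast_zero, Nat.cast_one] at h₀ h₁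
    rw [h₀, h₁, ← mul_assoc, ← mul_assoc, ← add_mul, mul_comm]
    simp [coin]

theorem map_bit : base.map (fun x n => bit n x) = infinitePi fun _ : ℕ => coin := by
  classical
  refine eq_infinitePi _ fun s t ht => ?_
  obtain ⟨N, hN⟩ := s.exists_nat_subset_range
  rw [map_apply (by fun_prop) (.pi s.countable_toSet fun n _ => ht n)]
  have : (fun x n => bit n x) ⁻¹' (s : Set ℕ).pi t =
      {x | ∀ n < N, bit n x ∈ if n ∈ s then t n else univ} := by
    ext x
    refine ⟨fun h n _ => ?_, fun h n hn => ?_⟩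
    · split_ifs with hn
      · exact h n hn
      · trivial
    · simpa [Finset.mem_coe.1 hn] using h n (Finset.mem_range.1 (hN hn))
  rw [this, base_forall_lt_bit_mem, ← Finset.prod_subset hN fun n _ hn => by
    rw [if_neg hn, measure_univ]]
  exact Finset.prod_congr rfl fun n hn => by rw [if_pos hn]

/-- The number with binary digits `b`. -/
noncomputable def binaryValue (b : ℕ → Bool) : ℝ := ∑' k, if b k then (2 : ℝ)⁻¹ ^ (k + 1) else 0

theorem measurable_binaryValue : Measurable binaryValue := by
  refine Measurable.tsum fun k => ?_
  exact (measurable_from_top (f := fun c : Bool => if c then (2 : ℝ)⁻¹ ^ (k + 1) else 0)).comp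
    (measurable_pi_apply k)

theorem binaryValue_bit {x : ℝ} (hx : x ∈ Ico 0 1) : binaryValue (fun n => bit n x) = x := by
  refine (tsum_congr fun k => ?_).trans (Real.hasSum_ofDigitsTerm_digits x one_lt_two hx).tsum_eq
  have hfloor : (⌊x * 2 ^ (k + 1)⌋₊ : ℤ) = ⌊x * 2 ^ (k + 1)⌋ :=
    Int.natCast_floor_eq_floor (mul_nonneg hx.1 (by positivity))
  simp only [bit, boolOf_eq_true, ← hfloor, Real.ofDigitsTerm, Real.digits, Fin.val_ofNat,
    Nat.cast_ofNat]
  norm_cast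
  rcases Nat.mod_two_eq_zero_or_one ⌊x * 2 ^ (k + 1)⌋₊ with h | h <;> simp [h]

theorem map_binaryValue : (infinitePi fun _ : ℕ => coin).map binaryValue = base := by
  rw [← map_bit, map_map measurable_binaryValue (by fun_prop)]
  conv_rhs => rw [← map_id (μ := base)]
  refine map_congr ?_
  rw [base_eq_restrict_Ico]
  filter_upwards [ae_restrict_mem measurableSet_Ico] with x hx
  exact binaryValue_bit hx

theorem map_bit_pair :
    base.map (fun x i k => bit (Nat.pair i k) x) =
      infinitePi fun _ : ℕ => infinitePi fun _ : ℕ => coin := by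
  rw [← infinitePi_map_curry, ← map_infinitePi_infinitePi_of_inj (P := fun _ => coin)
    Nat.pairEquiv.injective, ← map_bit, map_map (by fun_prop)
    (by fun_prop), map_map (by fun_prop) (by fun_prop)]
  rfl

@[fun_prop]
theorem measurable_unif (i : ℕ) : Measurable (unif i) :=
  measurable_binaryValue.comp (by fun_prop)

theorem map_unif : base.map (fun x i => unif i x) = infinitePi fun _ : ℕ => base := by
  have := measurable_binaryValue
  calc base.map (fun x i => unif i x)
      = (base.map fun x i k => bit (Nat.pair i k) x).map fun c i => binaryValue (c i) := by
        rw [map_map (by fun_prop) (by fun_prop)]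
        rfl
    _ = infinitePi fun _ : ℕ => (infinitePi fun _ : ℕ => coin).map binaryValue := by
        rw [map_bit_pair, infinitePi_map_pi _ fun _ => measurable_binaryValue]
    _ = _ := by rw [map_binaryValue]

/-- The position of the label of the edge `e` among the labels of edges. -/
noncomputable def edgeIndex : Sym2 V → ℕ :=
  Sym2.lift ⟨eIdx, fun _ _ => min_comm _ _⟩

theorem edgeIndex_injective : edgeIndex.Injective := by
  intro e e'
  induction e with | _ u v
  induction e' with | _ u' v'
  intro h
  change eIdx u v = eIdx u' v' at h
  rw [Sym2.eq_iff]
  rcases min_choice (Encodable.encode (u, v)) (Encodable.encode (v, u)) with h₁ | h₁ <;>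
  rcases min_choice (Encodable.encode (u', v')) (Encodable.encode (v', u')) with h₂ | h₂ <;>
  · rw [eIdx, eIdx, h₁, h₂, Encodable.encode_inj, Prod.mk_inj] at h
    tauto

@[fun_prop]
theorem measurable_boolOf_lt (r : ℝ) : Measurable fun u : ℝ => boolOf (u < r) := by
  refine measurable_to_bool ?_
  have : (fun u => boolOf (u < r)) ⁻¹' {true} = Iio r := by
    ext u
    exact boolOf_eq_true
  rw [this]
  exact measurableSet_Iio

theorem map_boolOf_lt_half : base.map (fun u => boolOf (u < 1 / 2)) = coin := by
  refine ext_of_singleton fun c => ?_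
  rw [map_apply (by fun_prop) (measurableSet_singleton c), base_eq_restrict_Ico,
    restrict_apply' measurableSet_Ico]
  cases c
  · have : (fun u : ℝ => boolOf (u < 1 / 2)) ⁻¹' {false} ∩ Ico 0 1 = Ico (1 / 2) 1 := by
      ext u
      simp only [mem_inter_iff, mem_preimage, mem_singleton_iff, ← Bool.not_eq_true,
        boolOf_eq_true, mem_Ico]
      grind
    rw [this, Real.volume_Ico, show (1 : ℝ) - 1 / 2 = 2⁻¹ by norm_num, ofReal_inv_of_pos two_pos]
    simp [coin]
  · have : (fun u : ℝ => boolOf (u < 1 / 2)) ⁻¹' {true} ∩ Ico 0 1 = Ico 0 (1 / 2) := by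
      ext u
      simp only [mem_inter_iff, mem_preimage, mem_singleton_iff, boolOf_eq_true, mem_Ico]
      grind
    rw [this]
    simp [coin]

theorem map_even_odd :
    (infinitePi fun _ : ℕ => base).map
        (fun ω => ((fun i => ω (2 * i), fun i => ω (2 * i + 1)) : (ℕ → ℝ) × (ℕ → ℝ))) =
      (infinitePi fun _ : ℕ => base).prod (infinitePi fun _ : ℕ => base) := by
  rw [← infinitePi_map_eval_prod (P := fun _ : Bool => infinitePi fun _ : ℕ => base)
      Bool.false_ne_true, ← infinitePi_map_curry, ← map_infinitePi_infinitePi_of_inj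
      (P := fun _ => base) Equiv.boolProdNatEquivNat.injective,
    map_map (by fun_prop) (by fun_prop), map_map (by fun_prop) (by fun_prop)]
  rfl

theorem map_edgeLabel_vertexColour :
    base.map (fun x => (fun e => unif (2 * edgeIndex e) x, fun v => boolOf (vtxU v x < 1 / 2))) =
      (infinitePi fun _ : Sym2 V => base).prod (infinitePi fun _ : V => coin) := by
  have hedge : (infinitePi fun _ : ℕ => base).map (fun ω e => ω (edgeIndex e)) =
      infinitePi fun _ : Sym2 V => base :=
    map_infinitePi_infinitePi_of_inj edgeIndex_injective
  have hvertex : (infinitePi fun _ : ℕ => base).map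
      (fun ω (v : V) => boolOf (ω (Encodable.encode v) < 1 / 2)) =
        infinitePi fun _ : V => coin := by
    rw [← map_boolOf_lt_half, ← infinitePi_map_pi _ fun _ => measurable_boolOf_lt _,
      ← map_infinitePi_infinitePi_of_inj (P := fun _ => base) (Encodable.encode_injective (α := V)),
      map_map (by fun_prop) (by fun_prop)]
    rfl
  rw [← hedge, ← hvertex, map_prod_map _ _ (by fun_prop) (by fun_prop), ← map_even_odd, ← map_unif,
    map_map (by fun_prop) (by fun_prop), map_map (by fun_prop) (by fun_prop)]
  rfl

end Labels

/-! ### Independent coins on clusters -/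

section FibreColouring

open Measure Set

variable {ι κ A B : Type*}

/-- The law of the colouring which gives to the points of each fibre of `f` the colour of a fair
coin, independently for different fibres. -/
noncomputable def fibreColouring (f : ι → A) : Measure (ι → Bool) :=
  (infinitePi fun _ : A => coin).map fun σ i => σ (f i)

instance (f : ι → A) : IsProbabilityMeasure (fibreColouring f) :=
  isProbabilityMeasure_map <| Measurable.aemeasurable (by fun_prop)

theorem fibreColouring_comp_injective {g : A → B} (hg : g.Injective) (f : ι → A) :
    fibreColouring (g ∘ f) = fibreColouring f := by
  rw [fibreColouring, fibreColouring, ← map_infinitePi_infinitePi_of_inj (P := fun _ => coin) hg,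
    map_map (by fun_prop) (by fun_prop)]
  rfl

theorem fibreColouring_mk_ker (f : ι → A) :
    fibreColouring (Quotient.mk (Setoid.ker f)) = fibreColouring f :=
  (fibreColouring_comp_injective (Setoid.kerLift_injective f) _).symm

theorem fibreColouring_congr {f : ι → A} {f' : ι → B} (h : ∀ i j, f i = f j ↔ f' i = f' j) :
    fibreColouring f = fibreColouring f' := by
  have hker : Setoid.ker f = Setoid.ker f' := Setoid.ext h
  rw [← fibreColouring_mk_ker f, ← fibreColouring_mk_ker f', hker]

theorem map_comp_fibreColouring (f : ι → A) (g : κ → ι) :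
    (fibreColouring f).map (· ∘ g) = fibreColouring (f ∘ g) := by
  rw [fibreColouring, map_map (by fun_prop) (by fun_prop)]
  rfl

theorem map_not_coin : coin.map not = coin := by
  rw [coin, Measure.map_add _ _ (by fun_prop), Measure.map_smul, Measure.map_smul,
    map_dirac' (f := not) .of_discrete, map_dirac' (f := not) .of_discrete, add_comm]
  rfl

theorem map_not_fibreColouring (f : ι → A) :
    (fibreColouring f).map (fun ξ i => !ξ i) = fibreColouring f := by
  have : (infinitePi fun _ : A => coin).map (fun σ a => !σ a) = infinitePi fun _ : A => coin := by
    rw [infinitePi_map_pi _ fun _ => by fun_prop]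
    simp only [map_not_coin]
  conv_rhs => rw [fibreColouring, ← this]
  rw [fibreColouring, map_map (by fun_prop) (by fun_prop), map_map (by fun_prop) (by fun_prop)]
  rfl

theorem measurableSet_of_dependsOn {C : Set (ι → Bool)} {Λ : Finset ι}
    (hC : DependsOn (· ∈ C) (Λ : Set ι)) : MeasurableSet C := by
  obtain ⟨g, hg⟩ := dependsOn_iff_exists_comp.1 hC
  have : C = (Λ : Set ι).domRestrict ⁻¹' {x | g x} := by
    ext ξ
    exact iff_of_eq (congrFun hg ξ)
  rw [this]
  exact measurable_pi_lambda _ (fun _ => measurable_pi_apply _) .of_discrete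

theorem fibreColouring_congr_of_dependsOn {C : Set (ι → Bool)} {Λ : Finset ι}
    (hC : DependsOn (· ∈ C) (Λ : Set ι)) {f : ι → A} {f' : ι → B}
    (h : ∀ i ∈ Λ, ∀ j ∈ Λ, f i = f j ↔ f' i = f' j) :
    fibreColouring f C = fibreColouring f' C := by
  obtain ⟨g, hg⟩ := dependsOn_iff_exists_comp.1 hC
  have : C = (· ∘ ((↑) : Λ → ι)) ⁻¹' {x | g x} := by
    ext ξ
    exact iff_of_eq (congrFun hg ξ)
  have hmeas : Measurable fun ξ : ι → Bool => ξ ∘ ((↑) : Λ → ι) := by fun_prop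
  have hlaw : fibreColouring (f ∘ ((↑) : Λ → ι)) = fibreColouring (f' ∘ ((↑) : Λ → ι)) :=
    fibreColouring_congr fun i j => h i i.2 j j.2
  rw [this, ← map_apply hmeas .of_discrete, ← map_apply hmeas .of_discrete,
    map_comp_fibreColouring, map_comp_fibreColouring, hlaw]

end FibreColouring

section ClusterColouring

open Measure Set
open scoped BigOperators

variable {ι A W : Type*}

theorem fibreColouring_real_forall_mem_eq (f : ι → A) (g : A → Bool) (U : Finset ι) :
    (fibreColouring f).real {ξ | ∀ i ∈ U, ξ i = g (f i)} = 2⁻¹ ^ (f '' U).ncard := by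
  classical
  have hpre : (fun (σ : A → Bool) i => σ (f i)) ⁻¹' {ξ | ∀ i ∈ U, ξ i = g (f i)} =
      Set.pi (U.image f : Finset A) fun a => {g a} := by
    ext σ
    simp
  have hcoin (c : Bool) : coin {c} = 2⁻¹ := by cases c <;> simp [coin]
  rw [measureReal_def, fibreColouring, map_apply (by fun_prop), hpre,
    infinitePi_pi _ fun a _ => measurableSet_singleton _]
  · simp [hcoin, ← Finset.coe_image]
  · have : {ξ : ι → Bool | ∀ i ∈ U, ξ i = g (f i)} = (U : Set ι).pi fun i => {g (f i)} := by
      ext ξ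
      simp
    rw [this]
    exact .pi U.countable_toSet fun _ _ => measurableSet_singleton _

/-- The law of the colouring of the clusters of the edge set `O` by independent fair coins. -/
noncomputable def clusterColouring (O : Set (Sym2 W)) : Measure (W → Bool) :=
  fibreColouring (SimpleGraph.fromEdgeSet O).connectedComponentMk

instance (O : Set (Sym2 W)) : IsProbabilityMeasure (clusterColouring O) := by
  unfold clusterColouring
  infer_instance

theorem eq_of_reachable {O : Set (Sym2 W)} {ξ : W → Bool} (h : ∀ e ∈ O, (e.map ξ).IsDiag) {v w : W}
    (hvw : (SimpleGraph.fromEdgeSet O).Reachable v w) : ξ v = ξ w := by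
  rw [SimpleGraph.reachable_fromEdgeSet_eq_reflTransGen_toRel] at hvw
  induction hvw with
  | refl => rfl
  | tail _ hbc ih => exact ih.trans (by simpa using h _ hbc)

variable {S : Finset (Sym2 W)} {U : Finset W} {ξ : W → Bool}

theorem clusterColouring_real_forall_mem_eq (hξ : ∀ e ∈ S, (e.map ξ).IsDiag) :
    (clusterColouring (S : Set (Sym2 W))).real {ξ' | ∀ v ∈ U, ξ' v = ξ v} =
      2⁻¹ ^ ((SimpleGraph.fromEdgeSet (S : Set (Sym2 W))).connectedComponentMk '' U).ncard :=
  fibreColouring_real_forall_mem_eq _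
    (SimpleGraph.ConnectedComponent.lift ξ fun _ _ p _ => eq_of_reachable hξ p.reachable) U

theorem ae_isDiag_clusterColouring (hU : ∀ e ∈ S, ∀ v ∈ e, v ∈ U) :
    ∀ᵐ ξ ∂clusterColouring (S : Set (Sym2 W)), ∀ e ∈ S, (e.map ξ).IsDiag := by
  refine (ae_map_iff (Measurable.aemeasurable (by fun_prop)) ?_).2 (.of_forall fun σ e he => ?_)
  · refine measurableSet_of_dependsOn (Λ := U) fun ξ ξ' h => ?_
    refine propext (forall₂_congr fun e he => ?_)
    rw [Sym2.map_congr fun v hv => h v (hU e he v hv)]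
  · induction e with | _ u v
    by_cases huv : u = v
    · simp [huv]
    · have : (SimpleGraph.fromEdgeSet (S : Set (Sym2 W))).Reachable u v :=
        SimpleGraph.Adj.reachable ((SimpleGraph.fromEdgeSet_adj _).2 ⟨he, huv⟩)
      simp [SimpleGraph.ConnectedComponent.sound this]

theorem clusterColouring_real_eq_sum (hU : ∀ e ∈ S, ∀ v ∈ e, v ∈ U) {C : Set (W → Bool)}
    (hC : DependsOn (· ∈ C) (U : Set W)) :
    (clusterColouring (S : Set (Sym2 W))).real C =
      ∑ ξ ∈ clusterColourings S U fun _ => false, C.indicator (fun ξ =>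
        (clusterColouring (S : Set (Sym2 W))).real {ξ' | ∀ v ∈ U, ξ' v = ξ v}) ξ := by
  classical
  set κ := clusterColouring (S : Set (Sym2 W))
  set R := clusterColourings S U fun _ => false
  have hcyl (ξ : W → Bool) : MeasurableSet {ξ' : W → Bool | ∀ v ∈ U, ξ' v = ξ v} :=
    measurableSet_of_dependsOn (Λ := U) fun ζ ζ' h =>
      propext (forall₂_congr fun v hv => by rw [h v hv])
  have hae : C =ᵐ[κ] ⋃ ξ ∈ R.filter (· ∈ C), {ξ' | ∀ v ∈ U, ξ' v = ξ v} := by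
    rw [Filter.eventuallyEq_set]
    filter_upwards [ae_isDiag_clusterColouring hU] with ξ hξ
    simp only [mem_iUnion, Finset.mem_filter, R, mem_clusterColourings, exists_prop, mem_ofPred_eq]
    refine ⟨fun h => ⟨fun v => if v ∈ U then ξ v else false, ⟨⟨fun v hv => if_neg hv, ?_⟩, ?_⟩, ?_⟩,
      fun ⟨ζ, ⟨_, hζ⟩, h⟩ => ?_⟩
    · intro e he
      convert hξ e he using 1
      exact Sym2.map_congr fun v hv => if_pos (hU e he v hv)
    · exact (iff_of_eq (hC fun v hv => if_pos hv)).2 h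
    · exact fun v hv => (if_pos hv).symm
    · exact (iff_of_eq (hC h)).2 hζ
  rw [measureReal_congr hae, measureReal_biUnion_finset]
  · rw [Finset.sum_filter]
    rfl
  · refine fun ξ hξ ζ hζ hne => disjoint_left.2 fun ξ' h h' => hne (funext fun v => ?_)
    by_cases hv : v ∈ U
    · exact (h v hv).symm.trans (h' v hv)
    · rw [(mem_clusterColourings.1 (Finset.mem_filter.1 hξ).1).1 v hv,
        (mem_clusterColourings.1 (Finset.mem_filter.1 hζ).1).1 v hv]
  · exact fun ξ _ => hcyl ξ

theorem clusterColouring_real_eq_expect (hU : ∀ e ∈ S, ∀ v ∈ e, v ∈ U) {C : Set (W → Bool)}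
    (hC : DependsOn (· ∈ C) (U : Set W)) :
    (clusterColouring (S : Set (Sym2 W))).real C =
      𝔼 ξ ∈ clusterColourings S U fun _ => false, C.indicator 1 ξ := by
  classical
  set R := clusterColourings S U fun _ => false
  set k := ((SimpleGraph.fromEdgeSet (S : Set (Sym2 W))).connectedComponentMk '' U).ncard
  have key {C : Set (W → Bool)} (hC : DependsOn (· ∈ C) (U : Set W)) :
      (clusterColouring (S : Set (Sym2 W))).real C = (∑ ξ ∈ R, C.indicator 1 ξ) * 2⁻¹ ^ k := by
    rw [clusterColouring_real_eq_sum hU hC, Finset.sum_mul]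
    refine Finset.sum_congr rfl fun ξ hξ => ?_
    by_cases h : ξ ∈ C
    · simp [h, clusterColouring_real_forall_mem_eq (mem_clusterColourings.1 hξ).2, k]
    · simp [h]
  have hR : 1 = (R.card : ℝ) * 2⁻¹ ^ k := by
    simpa using key (C := univ) fun _ _ _ => rfl
  rw [key hC, Finset.expect_eq_sum_div_card, eq_div_iff (left_ne_zero_of_mul (hR ▸ one_ne_zero)),
    mul_assoc, mul_comm (2⁻¹ ^ k), ← hR, mul_one]

end ClusterColouring

/-! ### Approximation by finite edge sets -/

section FiniteApproximation

open SimpleGraph Filter Finset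

variable {W : Type*} {O : Set (Sym2 W)}

theorem reachable_iff_exists_finset {v w : W} :
    (fromEdgeSet O).Reachable v w ↔
      ∃ S : Finset (Sym2 W), (S : Set (Sym2 W)) ⊆ O ∧
        (fromEdgeSet (S : Set (Sym2 W))).Reachable v w := by
  classical
  refine ⟨fun ⟨p⟩ => ⟨p.edges.toFinset, fun e he => ?_, ⟨p.transfer _ fun e he => ?_⟩⟩,
    fun ⟨S, hS, h⟩ => h.mono (fromEdgeSet_mono hS)⟩
  · have := p.edges_subset_edgeSet (List.mem_toFinset.1 he)
    rw [edgeSet_fromEdgeSet] at this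
    exact this.1
  · rw [edgeSet_fromEdgeSet]
    exact ⟨by simpa using he, not_isDiag_of_mem_edgeSet _ (p.edges_subset_edgeSet he)⟩

theorem eventually_reachable_inter_iff (v w : W) :
    ∀ᶠ D : Finset (Sym2 W) in atTop,
      (fromEdgeSet (O ∩ D)).Reachable v w ↔ (fromEdgeSet O).Reachable v w := by
  by_cases h : (fromEdgeSet O).Reachable v w
  · obtain ⟨S, hSO, hS⟩ := reachable_iff_exists_finset.1 h
    filter_upwards [eventually_ge_atTop S] with D hD
    exact iff_of_true (hS.mono (fromEdgeSet_mono (Set.subset_inter hSO (coe_subset.2 hD)))) h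
  · exact .of_forall fun D =>
      iff_of_false (fun hD => h (hD.mono (fromEdgeSet_mono Set.inter_subset_left))) h

theorem eventually_clusterColouring_inter_eq {C : Set (W → Bool)} {Λ : Finset W}
    (hC : DependsOn (· ∈ C) (Λ : Set W)) :
    ∀ᶠ D : Finset (Sym2 W) in atTop, clusterColouring (O ∩ D) C = clusterColouring O C := by
  have : ∀ᶠ D : Finset (Sym2 W) in atTop, ∀ v ∈ Λ, ∀ w ∈ Λ,
      (fromEdgeSet (O ∩ D)).Reachable v w ↔ (fromEdgeSet O).Reachable v w :=
    (eventually_all_finset Λ).2 fun v _ => (eventually_all_finset Λ).2 fun w _ =>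
      eventually_reachable_inter_iff v w
  filter_upwards [this] with D hD
  exact fibreColouring_congr_of_dependsOn hC fun v hv w hw =>
    ConnectedComponent.eq.trans ((hD v hv w hw).trans ConnectedComponent.eq.symm)

end FiniteApproximation

section BernoulliMean

open Measure

variable {ι : Type*} {E : ι → Type*} {A : ∀ i, Set (E i)} {F : Set ι → ℝ}

/-- The outcomes for which the elements of `D` selected by the conditions `x i ∈ A i` are those
of `S`. -/
def selects (A : ∀ i, Set (E i)) (D S : Finset ι) : Set (∀ i, E i) :=
  {x | ∀ i ∈ D, x i ∈ A i ↔ i ∈ S}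

theorem eq_sum_indicator_selects (x : ∀ i, E i) (D : Finset ι) :
    F ({i | x i ∈ A i} ∩ D) =
      ∑ S ∈ D.powerset, (selects A D S).indicator (fun _ => F (S : Set ι)) x := by
  classical
  have hmem (S : Finset ι) (hS : S ⊆ D) :
      x ∈ selects A D S ↔ D.filter (fun i => x i ∈ A i) = S := by
    simp only [selects, Set.mem_ofPred_eq, Finset.ext_iff, Finset.mem_filter]
    exact forall_congr' fun i => by grind
  have hfilter : ({i | x i ∈ A i} ∩ D : Set ι) = (D.filter fun i => x i ∈ A i : Finset ι) := by
    ext i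
    simp [and_comm]
  rw [hfilter, Finset.sum_eq_single_of_mem (D.filter fun i => x i ∈ A i) (by simp)]
  · rw [Set.indicator_of_mem ((hmem _ (Finset.filter_subset _ _)).2 rfl)]
  · intro S hS hne
    exact Set.indicator_of_notMem
      (fun h => hne ((hmem S (Finset.mem_powerset.1 hS)).1 h).symm) _

theorem selects_eq_pi [DecidableEq ι] (D S : Finset ι) :
    selects A D S = (D : Set ι).pi fun i => if i ∈ S then A i else (A i)ᶜ := by
  ext x
  refine forall₂_congr fun i _ => ?_
  by_cases h : i ∈ S <;> simp [h]

variable [∀ i, MeasurableSpace (E i)]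

theorem measurableSet_selects (hA : ∀ i, MeasurableSet (A i)) (D S : Finset ι) :
    MeasurableSet (selects A D S) := by
  classical
  rw [selects_eq_pi]
  refine .pi D.countable_toSet fun i _ => ?_
  by_cases h : i ∈ S <;> simp [h, hA i]

theorem measurable_selection (hA : ∀ i, MeasurableSet (A i)) (D : Finset ι) :
    Measurable fun x : ∀ i, E i => F ({i | x i ∈ A i} ∩ D) := by
  simp_rw [eq_sum_indicator_selects]
  exact Finset.measurable_fun_sum _ fun S _ => measurable_const.indicator
    (measurableSet_selects hA D S)

theorem integral_selection_eq_bernoulliMean [DecidableEq ι] {μ : ∀ i, Measure (E i)}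
    [∀ i, IsProbabilityMeasure (μ i)] (hA : ∀ i, MeasurableSet (A i)) (D : Finset ι) :
    ∫ x, F ({i | x i ∈ A i} ∩ D) ∂infinitePi μ =
      bernoulliMean (fun i => (μ i).real (A i)) D fun S => F S := by
  simp_rw [eq_sum_indicator_selects]
  rw [integral_finsetSum _ fun S _ =>
    (integrable_const _).indicator (measurableSet_selects hA D S), bernoulliMean]
  refine Finset.sum_congr rfl fun S _ => ?_
  rw [integral_indicator_const _ (measurableSet_selects hA D S), selects_eq_pi, measureReal_def,
    infinitePi_pi, ENNReal.toReal_prod, smul_eq_mul]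
  · congr 1
    refine Finset.prod_congr rfl fun i _ => ?_
    split_ifs
    · rfl
    · exact probReal_compl_eq_one_sub (hA i)
  · intro i _
    by_cases h : i ∈ S <;> simp [h, hA i]

end BernoulliMean

section InfiniteGraph

open Measure Filter Topology

variable {W : Type*} {E : Sym2 W → Type*} [∀ e, MeasurableSpace (E e)]
  {μ : ∀ e, Measure (E e)} [∀ e, IsProbabilityMeasure (μ e)] {A : ∀ e, Set (E e)}
  {C C' : Set (W → Bool)} {Λ Λ' : Finset W}

theorem tendsto_integral_clusterColouring [Countable W] (hA : ∀ e, MeasurableSet (A e))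
    (hC : DependsOn (· ∈ C) (Λ : Set W)) :
    Tendsto (fun D : Finset (Sym2 W) =>
        ∫ x, (clusterColouring ({e | x e ∈ A e} ∩ D)).real C ∂infinitePi μ) atTop
      (𝓝 (∫ x, (clusterColouring {e | x e ∈ A e}).real C ∂infinitePi μ)) := by
  refine tendsto_integral_filter_of_dominated_convergence (fun _ => 1)
    (.of_forall fun D => (measurable_selection hA D
      (F := fun O => (clusterColouring O).real C)).aestronglyMeasurable)
    (.of_forall fun D => .of_forall fun x => ?_) (integrable_const _) (.of_forall fun x => ?_)
  · rw [Real.norm_of_nonneg measureReal_nonneg]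
    exact measureReal_le_one
  · refine tendsto_const_nhds.congr' ?_
    filter_upwards [eventually_clusterColouring_inter_eq (O := {e | x e ∈ A e}) hC] with D hD
    rw [measureReal_def, measureReal_def, hD]

theorem integral_clusterColouring_inter_eq_clusterMean [DecidableEq W]
    (hA : ∀ e, MeasurableSet (A e)) {D : Finset (Sym2 W)} {U : Finset W}
    (hU : ∀ e ∈ D, ∀ v ∈ e, v ∈ U) (hC : DependsOn (· ∈ C) (Λ : Set W)) (hΛ : Λ ⊆ U) :
    ∫ x, (clusterColouring ({e | x e ∈ A e} ∩ D)).real C ∂infinitePi μ =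
      clusterMean (fun e => (μ e).real (A e)) D U (fun _ => false) (C.indicator 1) := by
  rw [integral_selection_eq_bernoulliMean hA D (F := fun O => (clusterColouring O).real C)]
  exact bernoulliMean_congr _ fun S hS => clusterColouring_real_eq_expect
    (fun e he => hU e (hS he)) (hC.mono (Finset.coe_subset.2 hΛ))

theorem IsLocalIncreasing.monotone_indicator {W : Type*} {C : Set (W → Bool)}
    (hC : IsLocalIncreasing C) : Monotone (C.indicator (1 : (W → Bool) → ℝ)) := fun ξ ξ' h => by
  by_cases hξ : ξ ∈ C
  · simp [hξ, hC.isUpperSet h hξ]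
  · rw [Set.indicator_of_notMem hξ]
    exact Set.indicator_apply_nonneg fun _ => zero_le_one

theorem IsLocalIncreasing.mul_le_integral_clusterColouring_inter [Countable W]
    (hA : ∀ e, MeasurableSet (A e)) (hC : IsLocalIncreasing C) (hC' : IsLocalIncreasing C') :
    (∫ x, (clusterColouring {e | x e ∈ A e}).real C ∂infinitePi μ) *
        ∫ x, (clusterColouring {e | x e ∈ A e}).real C' ∂infinitePi μ ≤
      ∫ x, (clusterColouring {e | x e ∈ A e}).real (C ∩ C') ∂infinitePi μ := by
  classical
  obtain ⟨Λ, hΛ⟩ := hC.exists_dependsOn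
  obtain ⟨Λ', hΛ'⟩ := hC'.exists_dependsOn
  obtain ⟨Λ'', hΛ''⟩ := (hC.inter hC').exists_dependsOn
  refine le_of_tendsto_of_tendsto' ((tendsto_integral_clusterColouring hA hΛ).mul
    (tendsto_integral_clusterColouring hA hΛ')) (tendsto_integral_clusterColouring hA hΛ'')
    fun D => ?_
  let U := D.biUnion Sym2.toFinset ∪ (Λ ∪ Λ' ∪ Λ'')
  have hU : ∀ e ∈ D, ∀ v ∈ e, v ∈ U := fun e he v hv =>
    Finset.mem_union_left _ (Finset.mem_biUnion.2 ⟨e, he, Sym2.mem_toFinset.2 hv⟩)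
  rw [integral_clusterColouring_inter_eq_clusterMean hA hU hΛ (by grind),
    integral_clusterColouring_inter_eq_clusterMean hA hU hΛ' (by grind),
    integral_clusterColouring_inter_eq_clusterMean hA hU hΛ'' (by grind), Set.inter_indicator_one]
  exact positivelyAssociated_clusterMean (fun e => ⟨measureReal_nonneg, measureReal_le_one⟩) hU
    _ _ _ hC.monotone_indicator hC'.monotone_indicator

end InfiniteGraph

/-! ### The law of the colours -/

section Reachability

variable {W : Type*} {E : Sym2 W → Type*} [∀ e, MeasurableSpace (E e)] {A : ∀ e, Set (E e)}

theorem measurable_reachable [Countable W] (hA : ∀ e, MeasurableSet (A e)) (v w : W) :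
    Measurable fun x : ∀ e, E e => (SimpleGraph.fromEdgeSet {e | x e ∈ A e}).Reachable v w := by
  have hiff (x : ∀ e, E e) := reachable_iff_exists_finset (O := {e | x e ∈ A e}) (v := v) (w := w)
  simp only [hiff]
  refine .exists fun S => .and (.forall fun e => .imp measurable_const ?_) measurable_const
  exact measurableSet_setOfPred.1 (measurable_pi_apply e (hA e))

theorem map_comp_clusterColouring (O : Set (Sym2 W)) (g : W ≃ W) :
    (clusterColouring O).map (· ∘ g) = clusterColouring (Sym2.map g ⁻¹' O) := by
  let φ : SimpleGraph.fromEdgeSet (Sym2.map g ⁻¹' O) ≃g SimpleGraph.fromEdgeSet O :=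
    ⟨g, by simp⟩
  rw [clusterColouring, map_comp_fibreColouring]
  exact fibreColouring_congr fun v w => SimpleGraph.ConnectedComponent.eq.trans
    (φ.reachable_iff.trans SimpleGraph.ConnectedComponent.eq.symm)

end Reachability

section ClusterRep

variable {η : EdgeCfg} {u v w : V}

theorem sInf_encode_pCluster_mem (η : EdgeCfg) (v : V) :
    sInf (Encodable.encode '' pCluster η v) ∈ Encodable.encode '' pCluster η v :=
  Nat.sInf_mem ⟨_, Set.mem_image_of_mem _ (.refl : Conn η v v)⟩

theorem encode_clusterRep (η : EdgeCfg) (v : V) :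
    Encodable.encode (clusterRep η v) = sInf (Encodable.encode '' pCluster η v) := by
  obtain ⟨w, -, hw⟩ := sInf_encode_pCluster_mem η v
  rw [clusterRep, ← hw, Encodable.encodek, Option.getD_some]

theorem conn_clusterRep (η : EdgeCfg) (v : V) : Conn η v (clusterRep η v) := by
  obtain ⟨w, hvw, hw⟩ := sInf_encode_pCluster_mem η v
  rw [← encode_clusterRep, Encodable.encode_inj] at hw
  exact hw ▸ hvw

theorem clusterRep_eq_iff : clusterRep η v = w ↔
    Conn η v w ∧ ∀ u, Conn η v u → Encodable.encode w ≤ Encodable.encode u := by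
  constructor
  · rintro rfl
    refine ⟨conn_clusterRep η v, fun u hu => ?_⟩
    rw [encode_clusterRep]
    exact Nat.sInf_le (Set.mem_image_of_mem _ hu)
  · rintro ⟨hw, hmin⟩
    refine Encodable.encode_injective (le_antisymm ?_ (hmin _ (conn_clusterRep η v)))
    rw [encode_clusterRep]
    exact Nat.sInf_le (Set.mem_image_of_mem _ hw)

theorem clusterRep_eq_clusterRep_iff (hη : Std.Symm (Conn η)) :
    clusterRep η u = clusterRep η v ↔ Conn η u v := by
  constructor
  · intro h
    exact (h ▸ conn_clusterRep η u).trans (hη.symm _ _ (conn_clusterRep η v))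
  · intro h
    rw [clusterRep_eq_iff]
    refine ⟨h.trans (conn_clusterRep η v), fun w hw => ?_⟩
    exact (clusterRep_eq_iff.1 rfl).2 w ((hη.symm _ _ h).trans hw)

end ClusterRep

section RandomFibres

open Measure

variable {Ω ι A : Type*} {f : Ω → ι → A} {C : Set (ι → Bool)}

theorem fibreColouring_apply_eq (hC : MeasurableSet C) (x : Ω) :
    fibreColouring (f x) C = infinitePi (fun _ : A => coin)
      (Prod.mk x ⁻¹' ((fun q : Ω × (A → Bool) => fun i => q.2 (f q.1 i)) ⁻¹' C)) := by
  rw [fibreColouring, map_apply (by fun_prop) hC]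
  rfl

variable [MeasurableSpace Ω] {μ : Measure Ω} [MeasurableSpace A] [Countable A]
  [MeasurableSingletonClass A]

theorem measurable_random_fibre_colouring (hf : ∀ i, Measurable fun x => f x i) :
    Measurable fun q : Ω × (A → Bool) => fun i => q.2 (f q.1 i) := by
  refine measurable_pi_lambda _ fun i => ?_
  exact (measurable_from_prod_countable_right (f := fun q : A × (A → Bool) => q.2 q.1)
    measurable_pi_apply).comp (((hf i).comp measurable_fst).prodMk measurable_snd)

theorem measurable_fibreColouring_apply (hf : ∀ i, Measurable fun x => f x i)
    (hC : MeasurableSet C) : Measurable fun x => fibreColouring (f x) C := by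
  simp only [fibreColouring_apply_eq hC]
  exact measurable_measure_prodMk_left (measurable_random_fibre_colouring hf hC)

theorem map_random_fibre_colouring_real [IsFiniteMeasure μ] (hf : ∀ i, Measurable fun x => f x i)
    (hC : MeasurableSet C) :
    ((μ.prod (infinitePi fun _ : A => coin)).map fun q i => q.2 (f q.1 i)).real C =
      ∫ x, (fibreColouring (f x)).real C ∂μ := by
  have hmeas := measurable_random_fibre_colouring hf
  simp only [measureReal_def]
  rw [integral_toReal (measurable_fibreColouring_apply hf hC).aemeasurable
    (ae_of_all _ fun _ => measure_lt_top _ _), map_apply hmeas hC, prod_apply (hmeas hC)]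
  simp only [fibreColouring_apply_eq hC]

end RandomFibres

section ColourLaw

open Measure Set

variable {adj : V → V → Prop} [hadj : Std.Symm adj] {p : ℝ} {U : Sym2 V → ℝ} {C : Set ColourCfg}

/-- The labels for which the pair `e` is an open edge of the lattice. -/
def openLabels (adj : V → V → Prop) [hadj : Std.Symm adj] (p : ℝ) (e : Sym2 V) : Set ℝ :=
  {t | e ∈ Sym2.fromRel hadj ∧ t < p}

/-- The edge configuration determined by the labels `U` of the edges. -/
noncomputable def labelledCfg (adj : V → V → Prop) (p : ℝ) (U : Sym2 V → ℝ) : EdgeCfg :=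
  fun u v => boolOf (adj u v) && boolOf (U s(u, v) < p)

theorem measurableSet_openLabels (e : Sym2 V) : MeasurableSet (openLabels adj p e) :=
  (MeasurableSet.const _).inter measurableSet_Iio

theorem conn_labelledCfg_iff {u v : V} : Conn (labelledCfg adj p U) u v ↔
    (SimpleGraph.fromEdgeSet {e | U e ∈ openLabels adj p e}).Reachable u v := by
  have : Sym2.ToRel {e | U e ∈ openLabels adj p e} =
      fun u v => labelledCfg adj p U u v = true := by
    ext u v
    simp [Sym2.ToRel, openLabels, labelledCfg, boolOf_eq_true]
  rw [SimpleGraph.reachable_fromEdgeSet_eq_reflTransGen_toRel, this, Conn]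

theorem measurable_clusterRep_labelledCfg (v : V) :
    Measurable fun U => clusterRep (labelledCfg adj p U) v := by
  refine measurable_to_countable' fun w => measurableSet_setOfPred.2 ?_
  simp only [mem_singleton_iff, clusterRep_eq_iff, conn_labelledCfg_iff]
  have := measurable_reachable (A := openLabels adj p) measurableSet_openLabels
  exact .and (this v w) (.forall fun u => .imp (this v u) measurable_const)

theorem fibreColouring_clusterRep_labelledCfg :
    fibreColouring (clusterRep (labelledCfg adj p U)) =
      clusterColouring {e | U e ∈ openLabels adj p e} := by
  refine fibreColouring_congr fun u v => ?_
  rw [SimpleGraph.ConnectedComponent.eq, ← conn_labelledCfg_iff,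
    clusterRep_eq_clusterRep_iff ⟨fun u v h => ?_⟩]
  rw [conn_labelledCfg_iff] at *
  exact h.symm

theorem measurable_labels : Measurable fun x =>
    (fun e => unif (2 * edgeIndex e) x, fun v => boolOf (vtxU v x < 1 / 2)) := by
  have : ∀ v : V, Measurable (vtxU v) := fun v => measurable_unif _
  fun_prop

theorem measurable_colourCfg : Measurable (colourCfg adj p (1 / 2)) :=
  (measurable_random_fibre_colouring measurable_clusterRep_labelledCfg).comp measurable_labels

/-- The marginal of the colours under `ℙ_{p,1/2}`. -/
noncomputable def colourLaw (adj : V → V → Prop) (p : ℝ) : Measure ColourCfg :=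
  base.map (colourCfg adj p (1 / 2))

instance : IsProbabilityMeasure (colourLaw adj p) :=
  isProbabilityMeasure_map measurable_colourCfg.aemeasurable

theorem colourLaw_eq_map (adj : V → V → Prop) [Std.Symm adj] (p : ℝ) : colourLaw adj p =
    ((infinitePi fun _ : Sym2 V => base).prod (infinitePi fun _ : V => coin)).map
      fun q v => q.2 (clusterRep (labelledCfg adj p q.1) v) := by
  rw [← map_edgeLabel_vertexColour, map_map
    (measurable_random_fibre_colouring measurable_clusterRep_labelledCfg) measurable_labels]
  rfl

theorem colourLaw_real (hC : MeasurableSet C) :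
    (colourLaw adj p).real C = ∫ U, (clusterColouring {e | U e ∈ openLabels adj p e}).real C
      ∂infinitePi fun _ : Sym2 V => base := by
  rw [colourLaw_eq_map, map_random_fibre_colouring_real measurable_clusterRep_labelledCfg hC]
  simp only [fibreColouring_clusterRep_labelledCfg]

end ColourLaw

section Symmetry

open Measure Set

variable {adj : V → V → Prop} [hadj : Std.Symm adj] {p : ℝ} {C D : Set ColourCfg}

theorem colourLaw_real_preimage_comp (g : adj ≃r adj) (hC : MeasurableSet C) :
    (colourLaw adj p).real ((· ∘ g) ⁻¹' C) = (colourLaw adj p).real C := by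
  have hlabels (U : Sym2 V → ℝ) : Sym2.map g ⁻¹' {e | U e ∈ openLabels adj p e} =
      {e | U (e.map g) ∈ openLabels adj p e} := by
    ext e
    induction e with | _ u v
    simp [openLabels, g.map_rel_iff]
  have hlaw : (infinitePi fun _ : Sym2 V => base).map (fun U e => U (e.map g)) =
      infinitePi fun _ : Sym2 V => base :=
    map_infinitePi_infinitePi_of_inj (Sym2.map.injective g.injective)
  have hmeas : Measurable fun U : Sym2 V → ℝ =>
      (clusterColouring {e | U e ∈ openLabels adj p e}).real C := by
    simp only [← fibreColouring_clusterRep_labelledCfg]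
    exact (measurable_fibreColouring_apply measurable_clusterRep_labelledCfg hC).ennreal_toReal
  have hg : Measurable fun ξ : ColourCfg => ξ ∘ g := by fun_prop
  rw [colourLaw_real (hg hC), colourLaw_real hC]
  conv_rhs => rw [← hlaw, integral_map
    (measurable_pi_lambda _ fun _ => measurable_pi_apply _).aemeasurable hmeas.aestronglyMeasurable]
  refine integral_congr_ae (ae_of_all _ fun U => ?_)
  dsimp only
  rw [← hlabels, ← map_measureReal_apply hg hC]
  exact congrArg (fun μ : Measure ColourCfg => μ.real C) (map_comp_clusterColouring _ g.toEquiv)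

theorem colourLaw_real_preimage_not (hC : MeasurableSet C) :
    (colourLaw adj p).real ((fun ξ v => !ξ v) ⁻¹' C) = (colourLaw adj p).real C := by
  have hnot : Measurable fun (ξ : ColourCfg) v => !ξ v := by fun_prop
  rw [colourLaw_real (hnot hC), colourLaw_real hC]
  refine integral_congr_ae (ae_of_all _ fun U => ?_)
  dsimp only
  rw [← map_measureReal_apply hnot hC, clusterColouring, map_not_fibreColouring]

theorem IsLocalIncreasing.measurableSet {W : Type*} {C : Set (W → Bool)}
    (hC : IsLocalIncreasing C) : MeasurableSet C :=
  let ⟨_, hΛ⟩ := hC.exists_dependsOn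
  measurableSet_of_dependsOn hΛ

theorem IsLocalIncreasing.mul_le_colourLaw_real_inter (hC : IsLocalIncreasing C)
    (hD : IsLocalIncreasing D) :
    (colourLaw adj p).real C * (colourLaw adj p).real D ≤ (colourLaw adj p).real (C ∩ D) := by
  rw [colourLaw_real hC.measurableSet, colourLaw_real hD.measurableSet,
    colourLaw_real (hC.inter hD).measurableSet]
  exact hC.mul_le_integral_clusterColouring_inter measurableSet_openLabels hD

instance : Std.Symm TriAdj := ⟨triAdj_symm⟩

instance : IsSymmetricAssociated (colourLaw TriAdj p) where
  mul_le_real_inter _ _ hC hD := hC.mul_le_colourLaw_real_inter hD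
  real_preimage_comp g _ hC := colourLaw_real_preimage_comp g hC.measurableSet
  real_preimage_not _ hC := colourLaw_real_preimage_not hC.measurableSet

end Symmetry

section Crossing

open Filter

theorem paraUpDown_subset_vertBC (n m : ℕ) : paraUpDown 0 n 0 m ⊆ VertBC TriAdj n m := by
  rintro ξ ⟨a, ha, b, hb, h⟩
  obtain ⟨k, f, hf, hadj, rfl, rfl⟩ := PathIn.exists_fin_path h
  exact ⟨k, f, hf, hadj, ⟨(hf _).1, ha⟩, (hf _).1, hb⟩

theorem measurable_edgeCfg (adj : V → V → Prop) (p : ℝ) : Measurable (edgeCfg adj p) := by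
  refine measurable_pi_lambda _ fun u => measurable_pi_lambda _ fun v => ?_
  exact (measurable_from_top (f := fun c => boolOf (adj u v) && c)).comp
    ((measurable_boolOf_lt p).comp (measurable_unif _))

theorem DaCMeasure_colourEvent {adj : V → V → Prop} [Std.Symm adj] {p : ℝ} {C : Set ColourCfg}
    (hC : MeasurableSet C) :
    DaCMeasure adj p (1 / 2) (colourEvent C) = colourLaw adj p C := by
  have : colourEvent C = Prod.snd ⁻¹' C := rfl
  rw [DaCMeasure, colourLaw, this, Measure.map_apply measurable_colourCfg hC,
    Measure.map_apply ((measurable_edgeCfg adj p).prodMk measurable_colourCfg)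
      (measurable_snd hC)]
  rfl

theorem tri_crossing_limsup_pos_general (p : ℝ) :
    0 < limsup (fun n : ℕ => DaCMeasure TriAdj p (1 / 2) (colourEvent (VertBC TriAdj n (3 * n))))
      atTop := by
  obtain ⟨c, hc, hcross⟩ := exists_forall_exists_le_real_paraUpDown (colourLaw TriAdj p)
  refine (ofReal_pos.2 hc).trans_le (le_limsup_of_frequently_le' ?_)
  refine frequently_atTop.2 fun N => ?_
  obtain ⟨n, hn, hle⟩ := hcross N
  lift n to ℕ using (by omega)
  refine ⟨n, by omega, ?_⟩
  calc ENNReal.ofReal c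
      ≤ colourLaw TriAdj p (paraUpDown 0 n 0 (3 * n)) :=
        ofReal_le_of_le_toReal hle
    _ = DaCMeasure TriAdj p (1 / 2) (colourEvent (paraUpDown 0 n 0 (3 * n))) :=
        (DaCMeasure_colourEvent (isLocalIncreasing_paraUpDown _ _ _ _).measurableSet).symm
    _ ≤ DaCMeasure TriAdj p (1 / 2) (colourEvent (VertBC TriAdj n (3 * n))) :=
        measure_mono fun _ hω => by exact_mod_cast paraUpDown_subset_vertBC n (3 * n) hω

end Crossing

/-- **Lemma 5.2.** On the triangular lattice, for every subcritical
`p < 2 sin(π/18)`, black vertical crossings of `n × 3n` parallelograms at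
`r = 1/2` occur with non-vanishing probability. -/
theorem tri_crossing_limsup_pos (p : ℝ) (hp0 : 0 ≤ p)
    (hp : p < 2 * Real.sin (Real.pi / 18)) :
    0 < Filter.limsup
        (fun n : ℕ =>
          DaCMeasure TriAdj p (1 / 2) (colourEvent (VertBC TriAdj n (3 * n))))
        Filter.atTop :=
  tri_crossing_limsup_pos_general p

end DaC
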